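/- Let c ≤ −1 be an integer and suppose nonnegative integers (n, x, y), (n₁, x₁, y₁), (n₂, x₂, y₂), each with first coordinate ≠ 1, satisfy c = T_n − 2^x·3^y = T_{n₁} − 2^{x₁}·3^{y₁} = T_{n₂} − 2^{x₂}·3^{y₂} with n > n₁ > n₂ and n₁ > 310. Then n − n₁ < 2·10¹⁵·(log n)². -/

import Mathlib

/-!
Write `α` for the real Tribonacci root and `δ = -α² + 4α - 1`, so that `δ T_n = α ^ n + O(1)`.
Everything rests on a lower bound for linear forms
`Λ = b₀ log (α - 1) + b₁ log 3 + b₂ log α + b₃ log (2α² - 3α)` with integer coefficients bounded by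
`B` and `b₀ ≠ 0`, namely `log |Λ| > -4·10¹⁴ (log B)²`. It applies to the numbers `2`, `3`, `α`, `δ`
because `2 = (α - 1)³ α²` and `δ = (α - 1)² α² (2α² - 3α)`.

Deduction. Put `S = 2 ^ x 3 ^ y`, and similarly `S₁`, `S₂`. The difference `S₁ - S₂` equals
`T_{n₁} - T_{n₂} ≤ α ^ n₁`, and the bound for `log (S₁ / S₂)` shows that `S₁`, hence also
`|c| = |T_{n₁} - S₁|`, is at most `2 α ^ n₁ exp (4·10¹⁴ (log 10n)²)`. Since `S = T_n - c`, the
quotient `α ^ n / (δ S)` differs from `1` by about `α ^ (n₁ - n) exp (4·10¹⁴ (log 10n)²)` at most,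
and the bound for `log (α ^ n / (δ S))` then limits `n - n₁`.

Linear forms. Let `a₀, …, a₃` be the four generators and `θ(m) = ∏ aᵢ ^ mᵢ`. Siegel's lemma provides
small integers `p m`, not all zero, indexed by a box of exponent vectors of size proportional to
`N`, such that `∑ p m · M(m) · θ(m) ^ (2r + 1) = 0` for all `r < R` and all monomials `M` of degree
less than or equal to `N` in the integers `b₀ mᵢ - bᵢ m₀`. If `Λ` is tiny, these sums are up to a
negligible error the derivatives at `2r + 1` of `z ↦ ∑ p m · M(m) · exp (ω(m) z)`, where
`ω(m) = ∑ mᵢ log aᵢ - m₀ Λ / b₀`. A real-variable Hermite interpolation estimate makes the functions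
small at the half-integers `r + 1/2`, `r < 2R`, and the Liouville inequality in the field generated
by the `√aᵢ` over `ℚ(α)`, of degree at most `48` over `ℚ`, forces the sums to vanish there. By
Kummer theory the products of the `√aᵢ` are linearly independent over `ℚ(α)`, so the sums split
according to the parity of the exponents, and a nonzero parity class satisfies the same conditions
with `N` halved and `R` doubled. Thus `N R` is invariant, and the descent ends at `N = 1`, where the
box is `{0}` and the conditions say that the only coefficient is zero: a contradiction.
-/

/-- The Tribonacci sequence: `T 0 = 0`, `T 1 = T 2 = 1`,
`T (n+3) = T (n+2) + T (n+1) + T n`. -/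
def T : ℕ → ℤ
  | 0 => 0
  | 1 => 1
  | 2 => 1
  | n + 3 => T (n + 2) + T (n + 1) + T n

/-! ### Rolle's theorem with multiplicities -/

section Rolle

open Finset

variable {I : Set ℝ} [I.OrdConnected]

lemma exists_zeros_deriv {f f' : ℝ → ℝ} (hf : ∀ z ∈ I, HasDerivAt f (f' z) z) {A : Finset ℝ}
    (hA : A.Nonempty) (hAI : ↑A ⊆ I) (hfA : ∀ a ∈ A, f a = 0) :
    ∃ Z : Finset ℝ, #Z + 1 = #A ∧ Disjoint A Z ∧ ↑Z ⊆ I ∧ ∀ z ∈ Z, f' z = 0 := by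
  obtain ⟨n, hn⟩ : ∃ n, #A = n + 1 := Nat.exists_eq_succ_of_ne_zero hA.card_pos.ne'
  let e := A.orderEmbOfFin hn
  have he (i : Fin (n + 1)) : e i ∈ A := A.orderEmbOfFin_mem hn i
  have hIcc (i : Fin n) : Set.Icc (e i.castSucc) (e i.succ) ⊆ I :=
    Set.OrdConnected.out ‹_› (hAI (he _)) (hAI (he _))
  have hrolle (i : Fin n) : ∃ c ∈ Set.Ioo (e i.castSucc) (e i.succ), f' c = 0 :=
    exists_hasDerivAt_eq_zero (e.strictMono i.castSucc_lt_succ)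
      (fun z hz => (hf z (hIcc i hz)).continuousAt.continuousWithinAt)
      (by rw [hfA _ (he _), hfA _ (he _)])
      (fun z hz => hf z (hIcc i (Set.Ioo_subset_Icc_self hz)))
  choose c hc hc0 using hrolle
  have hmono : StrictMono c := fun i j hij =>
    (hc i).2.trans_le ((e.monotone (Fin.succ_le_castSucc_iff.mpr hij)).trans (hc j).1.le)
  refine ⟨univ.map ⟨c, hmono.injective⟩, by simp [hn], ?_, ?_, by simpa using hc0⟩
  · rw [Finset.disjoint_right]
    intro z hz hzA
    obtain ⟨i, -, rfl⟩ := Finset.mem_map.mp hz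
    obtain ⟨j, hj⟩ : ∃ j, e j = c i := by
      have : c i ∈ Set.range e := by rw [Finset.range_orderEmbOfFin]; exact hzA
      exact this
    have hij : i.castSucc < j := e.lt_iff_lt.mp (hj ▸ (hc i).1)
    have hji : j < i.succ := e.lt_iff_lt.mp (hj ▸ (hc i).2)
    exact absurd hji (not_lt.mpr (Fin.castSucc_lt_iff_succ_le.mp hij))
  · intro z hz
    obtain ⟨i, -, rfl⟩ := Finset.mem_map.mp (Finset.mem_coe.mp hz)
    exact hIcc i (Set.Ioo_subset_Icc_self (hc i))

variable {g : ℕ → ℝ → ℝ}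

lemma exists_zero_iterated_deriv (hg : ∀ k, ∀ z ∈ I, HasDerivAt (g k) (g (k + 1) z) z) (i j : ℕ)
    {A : Finset ℝ} (hA : #A = i + 1) (hAI : ↑A ⊆ I) (hgA : ∀ a ∈ A, g j a = 0) :
    ∃ ξ ∈ I, g (j + i) ξ = 0 := by
  induction i generalizing j A with
  | zero =>
    obtain ⟨a, rfl⟩ := Finset.card_eq_one.mp hA
    exact ⟨a, hAI (by simp), hgA a (by simp)⟩
  | succ i ih =>
    obtain ⟨Z, hZ, -, hZI, hgZ⟩ :=
      exists_zeros_deriv (hg j) (Finset.card_pos.mp (by omega)) hAI hgA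
    obtain ⟨ξ, hξ, h0⟩ := ih (j + 1) (by omega) hZI hgZ
    exact ⟨ξ, hξ, by rwa [show j + (i + 1) = j + 1 + i by ring]⟩

lemma exists_simple_zeros_off_multiple_zeros
    (hg : ∀ k, ∀ z ∈ I, HasDerivAt (g k) (g (k + 1) z) z)
    {S : Finset ℝ} (hS : S.Nonempty) (hSI : ↑S ⊆ I)
    {τ : ℕ} (hgS : ∀ k < τ, ∀ s ∈ S, g k s = 0) {x : ℝ} (hxS : x ∉ S) (hxI : x ∈ I)
    (hgx : g 0 x = 0) {k : ℕ} (hk : k ≤ τ) :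
    ∃ E : Finset ℝ, #E + k = k * #S + 1 ∧ Disjoint S E ∧ ↑E ⊆ I ∧ ∀ z ∈ E, g k z = 0 := by
  classical
  induction k with
  | zero => exact ⟨{x}, by simp, by simpa using hxS, by simpa using hxI, by simpa using hgx⟩
  | succ k ih =>
    obtain ⟨E, hE, hSE, hEI, hgE⟩ := ih (by omega)
    have hg0 : ∀ z ∈ S ∪ E, g k z = 0 := fun z hz =>
      (Finset.mem_union.mp hz).elim (hgS k (by omega) z) (hgE z)
    obtain ⟨Z, hZ, hdisj, hZI, hgZ⟩ := exists_zeros_deriv (hg k) (hS.mono subset_union_left)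
      (by simp [hSI, hEI]) hg0
    rw [card_union_of_disjoint hSE] at hZ
    exact ⟨Z, by rw [add_mul]; omega, hdisj.mono_left subset_union_left, hZI, hgZ⟩

lemma exists_zero_deriv_of_multiple_zeros
    (hg : ∀ k, ∀ z ∈ I, HasDerivAt (g k) (g (k + 1) z) z)
    {S : Finset ℝ} (hS : S.Nonempty) (hSI : ↑S ⊆ I)
    {τ : ℕ} (hgS : ∀ k < τ, ∀ s ∈ S, g k s = 0) {x : ℝ} (hxS : x ∉ S) (hxI : x ∈ I)
    (hgx : g 0 x = 0) : ∃ ξ ∈ I, g (τ * #S) ξ = 0 := by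
  obtain ⟨E, hE, -, hEI, hgE⟩ :=
    exists_simple_zeros_off_multiple_zeros hg hS hSI hgS hxS hxI hgx le_rfl
  have hτ : τ ≤ τ * #S := Nat.le_mul_of_pos_right τ hS.card_pos
  obtain ⟨ξ, hξ, h0⟩ := exists_zero_iterated_deriv hg (τ * #S - τ) τ (by omega) hEI hgE
  exact ⟨ξ, hξ, by rwa [Nat.add_sub_cancel' hτ] at h0⟩

end Rolle

/-! ### Truncated norms of power series -/

section TruncNorm

open Finset PowerSeries

/-- The `ℓ¹`-norm of the truncation of a real power series below degree `n`; it is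
submultiplicative. -/
noncomputable def truncNorm (n : ℕ) (f : ℝ⟦X⟧) : ℝ := ∑ k ∈ range n, |coeff k f|

lemma truncNorm_nonneg (n : ℕ) (f : ℝ⟦X⟧) : 0 ≤ truncNorm n f := sum_nonneg fun _ _ => abs_nonneg _

lemma truncNorm_mul_le (n : ℕ) (f g : ℝ⟦X⟧) :
    truncNorm n (f * g) ≤ truncNorm n f * truncNorm n g := by
  calc truncNorm n (f * g)
      ≤ ∑ k ∈ range n, ∑ p ∈ antidiagonal k, |coeff p.1 f| * |coeff p.2 g| := by
        refine sum_le_sum fun k _ => ?_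
        rw [coeff_mul]
        exact (abs_sum_le_sum_abs _ _).trans_eq (sum_congr rfl fun p _ => abs_mul _ _)
    _ = ∑ p ∈ (range n).biUnion antidiagonal, |coeff p.1 f| * |coeff p.2 g| :=
        (sum_biUnion fun i _ j _ hij => Finset.disjoint_left.mpr fun p hi hj => hij <|
          (HasAntidiagonal.mem_antidiagonal.mp hi).symm.trans
            (HasAntidiagonal.mem_antidiagonal.mp hj)).symm
    _ ≤ ∑ p ∈ range n ×ˢ range n, |coeff p.1 f| * |coeff p.2 g| := by
        refine sum_le_sum_of_subset_of_nonneg (fun p hp => ?_) fun _ _ _ => by positivity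
        simp only [mem_biUnion, mem_range, HasAntidiagonal.mem_antidiagonal, mem_product] at hp ⊢
        omega
    _ = truncNorm n f * truncNorm n g := by rw [sum_product, truncNorm, truncNorm, sum_mul_sum]

lemma truncNorm_one_le (n : ℕ) : truncNorm n 1 ≤ 1 := by
  rcases n with - | n <;> simp [truncNorm, coeff_one, apply_ite]

lemma truncNorm_pow_le (n m : ℕ) (f : ℝ⟦X⟧) : truncNorm n (f ^ m) ≤ truncNorm n f ^ m := by
  induction m with
  | zero => simpa using truncNorm_one_le n
  | succ m ih =>
    rw [pow_succ, pow_succ]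
    exact (truncNorm_mul_le _ _ _).trans (mul_le_mul_of_nonneg_right ih (truncNorm_nonneg _ _))

lemma truncNorm_prod_le {ι : Type*} (n : ℕ) (s : Finset ι) (f : ι → ℝ⟦X⟧) :
    truncNorm n (∏ i ∈ s, f i) ≤ ∏ i ∈ s, truncNorm n (f i) := by
  classical
  induction s using Finset.induction_on with
  | empty => simpa using truncNorm_one_le n
  | insert a s ha ih =>
    rw [prod_insert ha, prod_insert ha]
    exact (truncNorm_mul_le _ _ _).trans (mul_le_mul_of_nonneg_left ih (truncNorm_nonneg _ _))

lemma coeff_inv_X_sub_C {d : ℝ} (hd : d ≠ 0) (k : ℕ) :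
    coeff k (X - C d : ℝ⟦X⟧)⁻¹ = -(1 / d ^ (k + 1)) := by
  have h : (X - C d : ℝ⟦X⟧)⁻¹ = -invUnitsSub (Units.mk0 d hd) := by
    refine ((eq_inv_iff_mul_eq_one (by simpa using hd)).mpr ?_).symm
    rw [neg_mul, ← mul_neg, neg_sub]
    exact invUnitsSub_mul_sub (Units.mk0 d hd)
  rw [h, map_neg, coeff_invUnitsSub, divp_eq_div]
  simp

lemma truncNorm_inv_X_sub_C_le (n : ℕ) {d : ℝ} (hd : 1 < |d|) :
    truncNorm n (X - C d)⁻¹ ≤ 1 / (|d| - 1) := by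
  have hd0 : d ≠ 0 := abs_pos.mp (by linarith)
  have hlt : |d|⁻¹ < 1 := inv_lt_one_of_one_lt₀ hd
  calc truncNorm n (X - C d)⁻¹ = |d|⁻¹ * ∑ k ∈ range n, |d|⁻¹ ^ k := by
        rw [truncNorm, mul_sum]
        refine sum_congr rfl fun k _ => ?_
        rw [coeff_inv_X_sub_C hd0, abs_neg, abs_div, abs_one, abs_pow, one_div,
          inv_pow, pow_succ, mul_inv, mul_comm]
    _ ≤ |d|⁻¹ * (1 - |d|⁻¹)⁻¹ := by
        gcongr
        rw [← tsum_geometric_of_lt_one (by positivity) hlt]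
        exact (summable_geometric_of_lt_one (by positivity) hlt).sum_le_tsum _
          fun _ _ => by positivity
    _ = 1 / (|d| - 1) := by
        have : |d| - 1 ≠ 0 := by linarith
        have : |d| ≠ 0 := by linarith
        field_simp

lemma abs_eval_trunc_le (n : ℕ) (f : ℝ⟦X⟧) (y : ℝ) :
    |(trunc n f).eval y| ≤ max 1 |y| ^ n * truncNorm n f := by
  rw [Polynomial.eval, eval₂_trunc_eq_sum_range, truncNorm, mul_sum]
  refine (abs_sum_le_sum_abs _ _).trans (sum_le_sum fun k hk => ?_)
  rw [RingHom.id_apply, abs_mul, abs_pow, mul_comm]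
  refine mul_le_mul_of_nonneg_right ?_ (abs_nonneg _)
  exact (pow_le_pow_left₀ (abs_nonneg _) (le_max_right _ _) _).trans
    (pow_le_pow_right₀ (le_max_left _ _) (mem_range.mp hk).le)

lemma coeff_mul_trunc_of_lt {k n : ℕ} (hk : k < n) (p f : ℝ⟦X⟧) :
    coeff k (p * ((trunc n f : Polynomial ℝ) : ℝ⟦X⟧)) = coeff k (p * f) := by
  rw [coeff_mul_eq_coeff_trunc_mul_trunc p _ hk, coeff_mul_eq_coeff_trunc_mul_trunc p f hk,
    trunc_trunc]

end TruncNorm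

/-! ### Hermite interpolation with explicit bounds -/

section Hermite

open Finset Polynomial Lagrange
open scoped Nat

lemma coeff_taylor_nodal_pow_of_lt {S : Finset ℝ} {s : ℝ} (hs : s ∈ S) {k τ : ℕ} (hk : k < τ)
    (Q : ℝ[X]) : (taylor s (nodal S id ^ τ * Q)).coeff k = 0 := by
  obtain ⟨V, hV⟩ := X_sub_C_dvd_nodal id hs
  refine X_pow_dvd_iff.mp ?_ k hk
  rw [hV, taylor_mul, taylor_pow, taylor_mul, mul_pow]
  exact Dvd.dvd.mul_right (Dvd.dvd.mul_right (by simp) _) _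

lemma abs_eval_nodal_pow (S : Finset ℝ) (τ : ℕ) (x : ℝ) :
    |(nodal S id ^ τ).eval x| = ∏ u ∈ S, |x - u| ^ τ := by
  simp only [eval_pow, eval_nodal, id, abs_pow, abs_prod, prod_pow]

lemma exists_inverse_taylor_nodal_pow {s : ℝ} {U : Finset ℝ} (hU : ∀ u ∈ U, 1 < |s - u|) (τ : ℕ) :
    ∃ G : PowerSeries ℝ, ((taylor s (nodal U id ^ τ) : ℝ[X]) : PowerSeries ℝ) * G = 1 ∧
      ∀ n, truncNorm n G ≤ ∏ u ∈ U, (1 / (|s - u| - 1)) ^ τ := by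
  refine ⟨∏ u ∈ U, (PowerSeries.X - PowerSeries.C (u - s) : PowerSeries ℝ)⁻¹ ^ τ, ?_, fun n => ?_⟩
  · have htaylor : ((taylor s (nodal U id ^ τ) : ℝ[X]) : PowerSeries ℝ) =
        ∏ u ∈ U, (PowerSeries.X - PowerSeries.C (u - s)) ^ τ := by
      rw [nodal, ← taylorAlgHom_apply, ← coeToPowerSeries.ringHom_apply, map_pow, map_prod, map_pow,
        map_prod, prod_pow]
      refine congrArg (· ^ τ) (prod_congr rfl fun u _ => ?_)
      simp only [map_sub, taylorAlgHom_apply, taylor_X, taylor_C, map_add, id,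
        coeToPowerSeries.ringHom_apply, coe_C, coe_X]
      ring
    rw [htaylor, ← prod_mul_distrib]
    refine prod_eq_one fun u hu => ?_
    have hne : s - u ≠ 0 := abs_pos.mp (by linarith [hU u hu])
    rw [← mul_pow, PowerSeries.mul_inv_cancel _ (by simpa using hne), one_pow]
  · refine (truncNorm_prod_le n U _).trans (prod_le_prod (fun _ _ => truncNorm_nonneg _ _) ?_)
    intro u hu
    rw [abs_sub_comm]
    refine (truncNorm_pow_le _ _ _).trans (pow_le_pow_left₀ (truncNorm_nonneg _ _) ?_ _)
    exact truncNorm_inv_X_sub_C_le n (by rw [abs_sub_comm]; exact hU u hu)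

/-- Multiply the cofactor `∏ (X - u) ^ τ` by the truncation at `s` of its inverse series times the
prescribed jet. -/
lemma exists_polynomial_with_jet {s : ℝ} {U : Finset ℝ} (hU : ∀ u ∈ U, 1 < |s - u|) {τ : ℕ}
    (hτ : 0 < τ) (j : ℕ → ℝ) :
    ∃ H : ℝ[X], H.natDegree < τ * (#U + 1) ∧ (∀ k < τ, (taylor s H).coeff k = j k) ∧
      (∀ u ∈ U, ∀ k < τ, (taylor u H).coeff k = 0) ∧
      ∀ x, |H.eval x| ≤ (∏ u ∈ U, (|x - u| / (|s - u| - 1)) ^ τ) * max 1 |x - s| ^ τ *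
        ∑ k ∈ range τ, |j k| := by
  obtain ⟨G, hPG, hG⟩ := exists_inverse_taylor_nodal_pow hU τ
  set A : ℝ[X] := PowerSeries.trunc τ (PowerSeries.mk j * G) with hA
  refine ⟨nodal U id ^ τ * taylor (-s) A, ?_, fun k hk => ?_, fun u hu k hk => ?_, fun x => ?_⟩
  · have hdegA : A.natDegree < τ := by
      obtain ⟨t, rfl⟩ := Nat.exists_eq_succ_of_ne_zero hτ.ne'
      exact PowerSeries.natDegree_trunc_lt _ t
    refine natDegree_mul_le.trans_lt ?_
    rw [natDegree_taylor, natDegree_pow, natDegree_nodal, mul_add]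
    omega
  · rw [taylor_mul, taylor_taylor, add_neg_cancel, taylor_zero, ← coeff_coe, Polynomial.coe_mul,
      coeff_mul_trunc_of_lt hk, mul_left_comm, hPG, mul_one, PowerSeries.coeff_mk]
  · exact coeff_taylor_nodal_pow_of_lt hu hk _
  · rw [eval_mul, abs_mul, abs_eval_nodal_pow, taylor_eval, ← sub_eq_add_neg]
    calc (∏ u ∈ U, |x - u| ^ τ) * |A.eval (x - s)|
        ≤ (∏ u ∈ U, |x - u| ^ τ) * (max 1 |x - s| ^ τ *
            ((∑ k ∈ range τ, |j k|) * ∏ u ∈ U, (1 / (|s - u| - 1)) ^ τ)) := by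
          have hj : truncNorm τ (PowerSeries.mk j) = ∑ k ∈ range τ, |j k| := by
            simp only [truncNorm, PowerSeries.coeff_mk]
          rw [← hj]
          refine mul_le_mul_of_nonneg_left ?_ (prod_nonneg fun _ _ => by positivity)
          refine (abs_eval_trunc_le τ _ _).trans ?_
          gcongr
          exact (truncNorm_mul_le _ _ _).trans
            (mul_le_mul_of_nonneg_left (hG τ) (truncNorm_nonneg _ _))
      _ = _ := by
          simp only [div_eq_mul_one_div |x - _|, mul_pow, prod_mul_distrib]
          ring

lemma exists_hermite_interpolant {S : Finset ℝ}
    (hS : ∀ s ∈ S, ∀ u ∈ S, u ≠ s → 1 < |s - u|) {τ : ℕ} (hτ : 0 < τ) (J : ℝ → ℕ → ℝ) :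
    ∃ H : ℝ[X], (S.Nonempty → H.natDegree < τ * #S) ∧
      (∀ s ∈ S, ∀ k < τ, (taylor s H).coeff k = J s k) ∧
      ∀ x, |H.eval x| ≤ ∑ s ∈ S, (∏ u ∈ S.erase s, (|x - u| / (|s - u| - 1)) ^ τ) *
        max 1 |x - s| ^ τ * ∑ k ∈ range τ, |J s k| := by
  have hnode (s : S) := exists_polynomial_with_jet (s := s) (U := S.erase s)
    (fun u hu => hS s s.2 u (mem_of_mem_erase hu) (ne_of_mem_erase hu)) hτ (J s)
  choose H hdeg hjet hzero hbound using hnode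
  refine ⟨∑ s ∈ S.attach, H s, fun hne => ?_, fun s hs k hk => ?_, fun x => ?_⟩
  · have hpos : 0 < τ * #S := Nat.mul_pos hτ hne.card_pos
    refine Nat.lt_of_le_pred hpos (natDegree_sum_le_of_forall_le _ _ fun s _ => ?_)
    have := hdeg s
    rw [card_erase_add_one s.2] at this
    exact Nat.le_pred_of_lt this
  · rw [map_sum, finsetSum_coeff, sum_eq_single_of_mem ⟨s, hs⟩ (mem_attach _ _)]
    · exact hjet ⟨s, hs⟩ k hk
    · intro u _ hne
      have hsu : s ≠ u := fun h => hne (Subtype.ext h.symm)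
      exact hzero u s (mem_erase.mpr ⟨hsu, hs⟩) k hk
  · rw [eval_finsetSum, ← S.sum_attach]
    exact (abs_sum_le_sum_abs _ _).trans (sum_le_sum fun s _ => hbound s x)

lemma eval_iterate_derivative_eq (Q : ℝ[X]) (k : ℕ) (s : ℝ) :
    (derivative^[k] Q).eval s = k ! * (taylor s Q).coeff k := by
  rw [taylor_coeff, ← nsmul_eq_mul, ← eval_smul, ← factorial_smul_hasseDeriv]
  rfl

variable {I : Set ℝ} [I.OrdConnected] {g : ℕ → ℝ → ℝ}

/-- The error `g - H - κ W`, with `κ` chosen so that it vanishes at `x`, has zeros of order `τ` at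
the nodes, so its derivative of order `τ #S` vanishes somewhere. -/
lemma abs_sub_hermite_interpolant_le
    (hg : ∀ k, ∀ z ∈ I, HasDerivAt (g k) (g (k + 1) z) z)
    {S : Finset ℝ} (hS : S.Nonempty) (hSI : ↑S ⊆ I) {τ : ℕ} {H : ℝ[X]} (hH : H.natDegree < τ * #S)
    (hjet : ∀ s ∈ S, ∀ k < τ, (taylor s H).coeff k = g k s / k !) {x M : ℝ} (hxS : x ∉ S)
    (hxI : x ∈ I) (hM : ∀ z ∈ I, |g (τ * #S) z| ≤ M) :
    |g 0 x - H.eval x| ≤ M * (∏ s ∈ S, |x - s| ^ τ) / (τ * #S)! := by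
  set W : ℝ[X] := nodal S id ^ τ with hW
  have hWx : |W.eval x| = ∏ s ∈ S, |x - s| ^ τ := abs_eval_nodal_pow S τ x
  have hWne : W.eval x ≠ 0 := by
    rw [← abs_pos, hWx]
    refine prod_pos fun s hs => pow_pos (abs_pos.mpr (sub_ne_zero.mpr ?_)) _
    exact (ne_of_mem_of_not_mem hs hxS).symm
  have hWN (ξ : ℝ) : (derivative^[τ * #S] W).eval ξ = (τ * #S)! := by
    have hdeg : W.natDegree = τ * #S := by rw [hW, natDegree_pow, natDegree_nodal]
    rw [eval_iterate_derivative_eq, ← hdeg, coeff_taylor_natDegree,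
      (nodal_monic.pow τ).leadingCoeff, mul_one]
  set κ : ℝ := (g 0 x - H.eval x) / W.eval x with hκ
  let E : ℕ → ℝ → ℝ := fun k z => g k z - (derivative^[k] H).eval z - κ * (derivative^[k] W).eval z
  have hE : ∀ k, ∀ z ∈ I, HasDerivAt (E k) (E (k + 1) z) z := fun k z hz => by
    simp only [E, Function.iterate_succ_apply']
    exact ((hg k z hz).sub (Polynomial.hasDerivAt _ z)).sub
      ((Polynomial.hasDerivAt _ z).const_mul κ)
  have hEjet : ∀ k < τ, ∀ s ∈ S, E k s = 0 := fun k hk s hs => by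
    have hWjet : (taylor s W).coeff k = 0 := by
      rw [← mul_one W]
      exact coeff_taylor_nodal_pow_of_lt hs hk 1
    simp only [E, eval_iterate_derivative_eq, hjet s hs k hk, hWjet]
    field_simp
    ring
  obtain ⟨ξ, hξ, hξ0⟩ := exists_zero_deriv_of_multiple_zeros hE hS hSI hEjet hxS hxI
    (by simp [E, hκ, hWne])
  have hκ_eq : g (τ * #S) ξ = κ * (τ * #S)! := by
    simp only [E, iterate_derivative_eq_zero hH, hWN, eval_zero] at hξ0
    linarith
  have hκM : |κ| * (τ * #S)! ≤ M := by
    have := hM ξ hξ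
    rwa [hκ_eq, abs_mul, Nat.abs_cast] at this
  rw [show g 0 x - H.eval x = κ * W.eval x by rw [hκ]; field_simp, abs_mul, hWx, mul_div_right_comm]
  exact mul_le_mul_of_nonneg_right ((le_div_iff₀ (by positivity)).mpr hκM)
    (prod_nonneg fun _ _ => by positivity)

lemma abs_le_of_jets (hg : ∀ k, ∀ z ∈ I, HasDerivAt (g k) (g (k + 1) z) z)
    {S : Finset ℝ} (hSne : S.Nonempty) (hSI : ↑S ⊆ I)
    (hS : ∀ s ∈ S, ∀ u ∈ S, u ≠ s → 1 < |s - u|) {τ : ℕ} (hτ : 0 < τ) {x M : ℝ} (hxS : x ∉ S)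
    (hxI : x ∈ I) (hM : ∀ z ∈ I, |g (τ * #S) z| ≤ M) :
    |g 0 x| ≤ M * (∏ s ∈ S, |x - s| ^ τ) / (τ * #S)! +
      ∑ s ∈ S, (∏ u ∈ S.erase s, (|x - u| / (|s - u| - 1)) ^ τ) *
        max 1 |x - s| ^ τ * ∑ k ∈ range τ, |g k s / k !| := by
  obtain ⟨H, hdeg, hjet, hbound⟩ := exists_hermite_interpolant hS hτ fun s k => g k s / (k ! : ℝ)
  calc |g 0 x| = |(g 0 x - H.eval x) + H.eval x| := by rw [sub_add_cancel]
    _ ≤ |g 0 x - H.eval x| + |H.eval x| := abs_add_le _ _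
    _ ≤ _ := add_le_add
        (abs_sub_hermite_interpolant_le hg hSne hSI (hdeg hSne) hjet hxS hxI hM) (hbound x)

end Hermite

/-! ### Interpolation at the odd integers -/

section OddNodes

open Finset
open scoped Nat

lemma factorial_le_exp_mul_div_exp_pow {n : ℕ} (hn : n ≠ 0) :
    (n ! : ℝ) ≤ Real.exp 1 * n * (n / Real.exp 1) ^ n := by
  obtain ⟨m, rfl⟩ : ∃ m, n = m + 1 := Nat.exists_eq_succ_of_ne_zero hn
  have hn1 : (1 : ℝ) ≤ (m + 1 : ℕ) := by simp
  have hstirling : Stirling.stirlingSeq (m + 1) ≤ Real.exp 1 / √2 := by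
    rw [← Stirling.stirlingSeq_one]
    exact Stirling.stirlingSeq'_antitone m.zero_le
  rw [Stirling.stirlingSeq, div_le_iff₀ (by positivity), Real.sqrt_mul two_pos.le] at hstirling
  calc ((m + 1)! : ℝ)
      ≤ Real.exp 1 / √2 * (√2 * √(m + 1 : ℕ) * ((m + 1 : ℕ) / Real.exp 1) ^ (m + 1)) := hstirling
    _ = Real.exp 1 * √(m + 1 : ℕ) * ((m + 1 : ℕ) / Real.exp 1) ^ (m + 1) := by field_simp
    _ ≤ Real.exp 1 * (m + 1 : ℕ) * ((m + 1 : ℕ) / Real.exp 1) ^ (m + 1) := by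
        gcongr
        exact Real.sqrt_le_iff.mpr ⟨by positivity, le_self_pow₀ hn1 two_ne_zero⟩

lemma two_pow_mul_factorial_pow_div_le {R τ : ℕ} (hR : R ≠ 0) (hτ : τ ≠ 0) :
    ((2 : ℝ) ^ R * R !) ^ τ / (τ * R)! ≤ (Real.exp 1 * R) ^ τ * (2 / τ) ^ (τ * R) := by
  have hlower : (1 : ℝ) / (τ * R)! ≤ (Real.exp 1 / (τ * R)) ^ (τ * R) := by
    have := Real.pow_div_factorial_le_exp ((τ * R : ℕ) : ℝ) (by positivity) (τ * R)
    rw [← Real.exp_one_pow] at this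
    rw [div_pow, le_div_iff₀ (by positivity), one_div_mul_eq_div]
    exact_mod_cast this
  calc ((2 : ℝ) ^ R * R !) ^ τ / (τ * R)!
      = ((2 : ℝ) ^ R * R !) ^ τ * (1 / (τ * R)!) := by ring
    _ ≤ ((2 : ℝ) ^ R * (Real.exp 1 * R * (R / Real.exp 1) ^ R)) ^ τ *
        (Real.exp 1 / (τ * R)) ^ (τ * R) := by
        gcongr
        exact factorial_le_exp_mul_div_exp_pow hR
    _ = (Real.exp 1 * R) ^ τ * (2 * (R / Real.exp 1) * (Real.exp 1 / (τ * R))) ^ (τ * R) := by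
        rw [mul_pow (2 * (R / Real.exp 1)), mul_comm τ R, pow_mul (2 * (R / Real.exp 1)), mul_pow 2]
        ring
    _ = (Real.exp 1 * R) ^ τ * (2 / τ) ^ (τ * R) := by
        congr 2
        field_simp

lemma two_pow_mul_factorial_le_prod_odd (n : ℕ) :
    (2 : ℝ) ^ n * n ! ≤ (2 * n + 1) * ∏ k ∈ range n, (2 * (k : ℝ) + 1) := by
  calc (2 : ℝ) ^ n * n ! = ∏ k ∈ range n, 2 * ((k : ℝ) + 1) := by
        rw [prod_mul_distrib, prod_const, card_range, ← prod_range_add_one_eq_factorial]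
        push_cast
        rfl
    _ ≤ ∏ k ∈ range n, (2 * ((k + 1 : ℕ) : ℝ) + 1) :=
        prod_le_prod (fun _ _ => by positivity) fun k _ => by push_cast; linarith
    _ = ∏ k ∈ range (n + 1), (2 * (k : ℝ) + 1) := by simp [prod_range_succ']
    _ = (2 * n + 1) * ∏ k ∈ range n, (2 * (k : ℝ) + 1) := by rw [prod_range_succ, mul_comm]

/-- The interpolation nodes `1, 3, …, 2 R - 1`. -/
def oddNodes (R : ℕ) : Finset ℝ :=
  (range R).map ⟨fun i : ℕ => 2 * (i : ℝ) + 1, fun i j h => by simpa using h⟩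

@[simp] lemma mem_oddNodes {R : ℕ} {s : ℝ} : s ∈ oddNodes R ↔ ∃ i < R, 2 * (i : ℝ) + 1 = s := by
  simp only [oddNodes, mem_map, mem_range]
  rfl

@[simp] lemma card_oddNodes (R : ℕ) : #(oddNodes R) = R := by simp [oddNodes]

lemma prod_oddNodes (R : ℕ) (f : ℝ → ℝ) :
    ∏ s ∈ oddNodes R, f s = ∏ i ∈ range R, f (2 * i + 1) :=
  prod_map _ _ _

lemma oddNodes_subset_Icc (R : ℕ) : ↑(oddNodes R) ⊆ Set.Icc (0 : ℝ) (2 * R) := by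
  intro s hs
  obtain ⟨i, hi, rfl⟩ := mem_oddNodes.mp hs
  have : (i : ℝ) + 1 ≤ R := by exact_mod_cast hi
  exact ⟨by positivity, by linarith⟩

lemma one_lt_abs_sub_oddNodes {R : ℕ} {s u : ℝ} (hs : s ∈ oddNodes R) (hu : u ∈ oddNodes R)
    (hne : u ≠ s) : 1 < |s - u| := by
  obtain ⟨i, -, rfl⟩ := mem_oddNodes.mp hs
  obtain ⟨j, -, rfl⟩ := mem_oddNodes.mp hu
  have hij : (i : ℤ) - j ≠ 0 := fun h => hne (by rw [show i = j by omega])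
  have h1 : (1 : ℝ) ≤ |(i : ℝ) - j| := by exact_mod_cast Int.one_le_abs hij
  rw [show 2 * (i : ℝ) + 1 - (2 * j + 1) = 2 * (i - j) by ring, abs_mul, abs_two]
  linarith

lemma prod_abs_sub_oddNodes_le {R : ℕ} {x : ℝ} (hx : x ∈ Set.Icc (0 : ℝ) (2 * R)) :
    ∏ s ∈ oddNodes R, |x - s| ≤ 2 ^ R * R ! := by
  rw [prod_oddNodes R fun s => |x - s|]
  induction R with
  | zero => simp
  | succ R ih =>
    rcases le_or_gt x (2 * R) with h | h
    · have hlast : |x - (2 * R + 1)| ≤ 2 * (R + 1) := by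
        rw [abs_le]
        constructor <;> linarith [hx.1]
      calc ∏ i ∈ range (R + 1), |x - (2 * i + 1)|
          ≤ 2 ^ R * R ! * (2 * (R + 1)) := by
            rw [prod_range_succ]
            exact mul_le_mul (ih ⟨hx.1, h⟩) hlast (abs_nonneg _) (by positivity)
        _ = 2 ^ (R + 1) * (R + 1)! := by
            rw [Nat.factorial_succ]
            push_cast
            ring
    · have hfactor : ∀ i ∈ range (R + 1), |x - (2 * i + 1)| ≤ 2 * ((R + 1 - 1 - i : ℕ) + 1) := by
        intro i hi
        have hiR : i ≤ R := Nat.lt_succ_iff.mp (mem_range.mp hi)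
        have hiR' : (i : ℝ) ≤ R := by exact_mod_cast hiR
        have hx2 := hx.2
        rw [Nat.add_sub_cancel, Nat.cast_sub hiR]
        push_cast at hx2
        rw [abs_le]
        constructor <;> linarith
      refine (prod_le_prod (fun _ _ => abs_nonneg _) hfactor).trans_eq ?_
      rw [prod_range_reflect (fun i : ℕ => 2 * ((i : ℝ) + 1)), prod_mul_distrib, prod_const,
        card_range, ← prod_range_add_one_eq_factorial]
      push_cast
      rfl

/-- The factor for `s` itself is `|s - s| - 1 = -1`, which allows the product to be taken over all
nodes. -/
lemma prod_abs_sub_sub_one_oddNodes_erase (i b : ℕ) :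
    ∏ u ∈ (oddNodes (i + 1 + b)).erase (2 * i + 1), (|(2 * i + 1 : ℝ) - u| - 1) =
      (∏ k ∈ range i, (2 * (k : ℝ) + 1)) * ∏ k ∈ range b, (2 * (k : ℝ) + 1) := by
  have hmem : (2 * i + 1 : ℝ) ∈ oddNodes (i + 1 + b) := mem_oddNodes.mpr ⟨i, by omega, rfl⟩
  have hleft : ∏ j ∈ range i, (|(2 * i + 1 : ℝ) - (2 * j + 1)| - 1) =
      ∏ k ∈ range i, (2 * (k : ℝ) + 1) := by
    rw [← prod_range_reflect (fun k : ℕ => 2 * (k : ℝ) + 1)]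
    refine prod_congr rfl fun j hj => ?_
    have hj : j + 1 ≤ i := mem_range.mp hj
    have hj' : (j : ℝ) + 1 ≤ i := by exact_mod_cast hj
    rw [Nat.sub_sub, Nat.cast_sub (by omega), abs_of_nonneg (by linarith)]
    push_cast
    ring
  have hright : ∏ j ∈ range b, (|(2 * i + 1 : ℝ) - (2 * ((i + 1 + j : ℕ) : ℝ) + 1)| - 1) =
      ∏ k ∈ range b, (2 * (k : ℝ) + 1) := by
    refine prod_congr rfl fun j _ => ?_
    push_cast
    rw [abs_of_nonpos (by linarith [j.cast_nonneg (α := ℝ)])]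
    ring
  have hall := mul_prod_erase _ (fun u => |(2 * i + 1 : ℝ) - u| - 1) hmem
  rw [prod_oddNodes (i + 1 + b) fun u => |(2 * i + 1 : ℝ) - u| - 1, prod_range_add,
    prod_range_succ, hleft, hright] at hall
  simp only [sub_self, abs_zero, zero_sub] at hall
  linarith

lemma two_pow_mul_factorial_le_prod_oddNodes_erase {R : ℕ} {s : ℝ} (hs : s ∈ oddNodes R) :
    (2 : ℝ) ^ R * R ! ≤ (∏ u ∈ (oddNodes R).erase s, (|s - u| - 1)) * (2 ^ R * R ^ 3) := by
  obtain ⟨i, hi, rfl⟩ := mem_oddNodes.mp hs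
  obtain ⟨b, rfl⟩ : ∃ b, R = i + 1 + b := Nat.exists_eq_add_of_le hi
  rw [prod_abs_sub_sub_one_oddNodes_erase]
  set p := ∏ k ∈ range i, (2 * (k : ℝ) + 1)
  set q := ∏ k ∈ range b, (2 * (k : ℝ) + 1)
  have : 0 ≤ p := prod_nonneg fun _ _ => by positivity
  have : 0 ≤ q := prod_nonneg fun _ _ => by positivity
  have hp : (2 : ℝ) ^ i * i ! ≤ (2 * i + 1) * p := two_pow_mul_factorial_le_prod_odd i
  have hq : (2 : ℝ) ^ b * b ! ≤ (2 * b + 1) * q := two_pow_mul_factorial_le_prod_odd b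
  have hfactorial : ((i + 1 + b)! : ℝ) ≤ (i + 1 + b) * (2 ^ (i + b) * (i ! * b !)) := by
    have hchoose := Nat.choose_le_two_pow (i + b) b
    rw [show i + 1 + b = (i + b) + 1 by ring, Nat.factorial_succ,
      ← Nat.add_choose_mul_factorial_mul_factorial i b]
    push_cast
    rw [mul_assoc ((i + b).choose b : ℝ), show (i : ℝ) + 1 + b = i + b + 1 by ring]
    gcongr
    exact_mod_cast hchoose
  have hamgm : (2 * (i : ℝ) + 1) * (2 * b + 1) ≤ (i + 1 + b) ^ 2 := by
    nlinarith [sq_nonneg ((i : ℝ) - b)]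
  push_cast
  calc (2 : ℝ) ^ (i + 1 + b) * (i + 1 + b)!
      ≤ 2 ^ (i + 1 + b) * ((i + 1 + b) * (2 ^ (i + b) * (i ! * b !))) := by gcongr
    _ = 2 ^ (i + 1 + b) * (i + 1 + b) * ((2 ^ i * i !) * (2 ^ b * b !)) := by ring
    _ ≤ 2 ^ (i + 1 + b) * (i + 1 + b) * (((2 * i + 1) * p) * ((2 * b + 1) * q)) := by gcongr
    _ = 2 ^ (i + 1 + b) * (i + 1 + b) * (p * q) * ((2 * i + 1) * (2 * b + 1)) := by ring
    _ ≤ 2 ^ (i + 1 + b) * (i + 1 + b) * (p * q) * (i + 1 + b) ^ 2 := by gcongr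
    _ = p * q * (2 ^ (i + 1 + b) * (i + 1 + b) ^ 3) := by ring

lemma lagrange_factor_oddNodes_le {R : ℕ} {s x : ℝ} (hs : s ∈ oddNodes R)
    (hx : x ∈ Set.Icc (0 : ℝ) (2 * R)) (hdist : 1 / 2 ≤ |x - s|) :
    (∏ u ∈ (oddNodes R).erase s, |x - u| / (|s - u| - 1)) * max 1 |x - s| ≤ 4 * R ^ 4 * 2 ^ R := by
  have hR1 : (1 : ℝ) ≤ R := by
    obtain ⟨i, hi, -⟩ := mem_oddNodes.mp hs
    exact_mod_cast Nat.one_le_of_lt hi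
  have hs2 := oddNodes_subset_Icc R hs
  have hgap : 0 < ∏ u ∈ (oddNodes R).erase s, (|s - u| - 1) := prod_pos fun u hu =>
    sub_pos.mpr (one_lt_abs_sub_oddNodes hs (mem_of_mem_erase hu) (ne_of_mem_erase hu))
  have hprod : ∏ u ∈ (oddNodes R).erase s, |x - u| ≤ 2 * (2 ^ R * R !) := by
    have hle := prod_abs_sub_oddNodes_le hx
    rw [← mul_prod_erase _ (fun u => |x - u|) hs] at hle
    have h0 : 0 ≤ ∏ u ∈ (oddNodes R).erase s, |x - u| := prod_nonneg fun _ _ => abs_nonneg _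
    nlinarith
  have hratio : ∏ u ∈ (oddNodes R).erase s, |x - u| / (|s - u| - 1) ≤ 2 * (2 ^ R * R ^ 3) := by
    rw [prod_div_distrib, div_le_iff₀ hgap]
    linarith [two_pow_mul_factorial_le_prod_oddNodes_erase hs]
  have hmax : max 1 |x - s| ≤ 2 * R :=
    max_le (by linarith) (by rw [abs_le]; constructor <;> linarith [hs2.1, hs2.2, hx.1, hx.2])
  calc _ ≤ 2 * (2 ^ R * (R : ℝ) ^ 3) * (2 * R) :=
        mul_le_mul hratio hmax (by positivity) (by positivity)
    _ = 4 * R ^ 4 * 2 ^ R := by ring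

lemma abs_le_of_jets_at_oddNodes {g : ℕ → ℝ → ℝ} {R τ : ℕ}
    (hg : ∀ k, ∀ z ∈ Set.Icc (0 : ℝ) (2 * R), HasDerivAt (g k) (g (k + 1) z) z) (hR : R ≠ 0)
    (hτ : τ ≠ 0) {x M η : ℝ} (hx : x ∈ Set.Icc (0 : ℝ) (2 * R))
    (hdist : ∀ s ∈ oddNodes R, 1 / 2 ≤ |x - s|)
    (hM : ∀ z ∈ Set.Icc (0 : ℝ) (2 * R), |g (τ * R) z| ≤ M)
    (hη : ∀ s ∈ oddNodes R, ∑ k ∈ range τ, |g k s / k !| ≤ η) :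
    |g 0 x| ≤ M * ((Real.exp 1 * R) ^ τ * (2 / τ) ^ (τ * R)) + R * (4 * R ^ 4 * 2 ^ R) ^ τ * η := by
  have hxS : x ∉ oddNodes R := fun h => by
    have := hdist x h
    norm_num at this
  have hM0 : 0 ≤ M := (abs_nonneg _).trans (hM x hx)
  have hne : (oddNodes R).Nonempty := card_pos.mp (by simpa using Nat.pos_of_ne_zero hR)
  have hjets := abs_le_of_jets hg hne (oddNodes_subset_Icc R)
    (fun s hs u hu hus => one_lt_abs_sub_oddNodes hs hu hus) (Nat.pos_of_ne_zero hτ) hxS hx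
    (M := M) (by rwa [card_oddNodes])
  rw [card_oddNodes] at hjets
  refine hjets.trans (add_le_add ?_ ?_)
  · rw [mul_div_assoc, prod_pow]
    refine mul_le_mul_of_nonneg_left (le_trans ?_ (two_pow_mul_factorial_pow_div_le hR hτ)) hM0
    exact div_le_div_of_nonneg_right (pow_le_pow_left₀ (prod_nonneg fun _ _ => abs_nonneg _)
      (prod_abs_sub_oddNodes_le hx) _) (by positivity)
  · calc _ ≤ #(oddNodes R) • ((4 * R ^ 4 * 2 ^ R) ^ τ * η) := by
          refine sum_le_card_nsmul _ _ _ fun s hs => ?_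
          rw [prod_pow, ← mul_pow]
          refine mul_le_mul (pow_le_pow_left₀ (mul_nonneg (prod_nonneg fun u hu => ?_) (by simp))
            (lagrange_factor_oddNodes_le hs hx (hdist s hs)) τ) (hη s hs)
            (sum_nonneg fun _ _ => abs_nonneg _) (by positivity)
          exact div_nonneg (abs_nonneg _) (sub_nonneg.mpr
            (one_lt_abs_sub_oddNodes hs (mem_of_mem_erase hu) (ne_of_mem_erase hu)).le)
      _ = R * (4 * R ^ 4 * 2 ^ R) ^ τ * η := by rw [card_oddNodes, nsmul_eq_mul, ← mul_assoc]

end OddNodes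

/-! ### Kummer theory for square roots -/

section Kummer

variable {K : Type*} [Field K] {F : Subfield K} {r : K}

lemma eq_zero_of_add_mul_eq_zero (hr : r ∉ F) {u v : K} (hu : u ∈ F) (hv : v ∈ F)
    (h : u + v * r = 0) : u = 0 ∧ v = 0 := by
  have hv0 : v = 0 := by
    by_contra hv0
    have : r = -u / v := by
      rw [eq_div_iff hv0]
      linear_combination h
    exact hr (this ▸ F.div_mem (F.neg_mem hu) hv)
  subst hv0
  simpa using h

/-- The quadratic extension `F(r)` inside `K`, for `r ∉ F` with `r² ∈ F`; it serves as the new base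
field in the induction proving `eq_zero_of_sum_mul_prod_eq_zero`. -/
def quadExt (F : Subfield K) {r : K} (hr2 : r ^ 2 ∈ F) (hr : r ∉ F) : Subfield K where
  carrier := {x | ∃ u ∈ F, ∃ v ∈ F, x = u + v * r}
  mul_mem' := by
    rintro _ _ ⟨u, hu, v, hv, rfl⟩ ⟨u', hu', v', hv', rfl⟩
    exact ⟨u * u' + v * v' * r ^ 2, F.add_mem (F.mul_mem hu hu') (F.mul_mem (F.mul_mem hv hv') hr2),
      u * v' + v * u', F.add_mem (F.mul_mem hu hv') (F.mul_mem hv hu'), by ring⟩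
  one_mem' := ⟨1, F.one_mem, 0, F.zero_mem, by ring⟩
  add_mem' := by
    rintro _ _ ⟨u, hu, v, hv, rfl⟩ ⟨u', hu', v', hv', rfl⟩
    exact ⟨u + u', F.add_mem hu hu', v + v', F.add_mem hv hv', by ring⟩
  zero_mem' := ⟨0, F.zero_mem, 0, F.zero_mem, by ring⟩
  neg_mem' := by
    rintro _ ⟨u, hu, v, hv, rfl⟩
    exact ⟨-u, F.neg_mem hu, -v, F.neg_mem hv, by ring⟩
  inv_mem' := by
    rintro _ ⟨u, hu, v, hv, rfl⟩
    have hd : u ^ 2 - v ^ 2 * r ^ 2 ∈ F :=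
      F.sub_mem (F.pow_mem hu 2) (F.mul_mem (F.pow_mem hv 2) hr2)
    by_cases hne : u + v * r = 0
    · exact ⟨0, F.zero_mem, 0, F.zero_mem, by simp [hne]⟩
    have hconj : u - v * r ≠ 0 := fun h => hne <| by
      obtain ⟨rfl, hv0⟩ := eq_zero_of_add_mul_eq_zero hr hu (F.neg_mem hv) (v := -v)
        (by linear_combination h)
      simp [neg_eq_zero.mp hv0]
    refine ⟨u / (u ^ 2 - v ^ 2 * r ^ 2), F.div_mem hu hd, -v / (u ^ 2 - v ^ 2 * r ^ 2),
      F.div_mem (F.neg_mem hv) hd, ?_⟩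
    rw [show u ^ 2 - v ^ 2 * r ^ 2 = (u + v * r) * (u - v * r) by ring]
    field_simp
    ring

variable {hr2 : r ^ 2 ∈ F} {hr : r ∉ F}

lemma mem_quadExt {x : K} : x ∈ quadExt F hr2 hr ↔ ∃ u ∈ F, ∃ v ∈ F, x = u + v * r := Iff.rfl

lemma le_quadExt : F ≤ quadExt F hr2 hr := fun u hu => ⟨u, hu, 0, F.zero_mem, by ring⟩

lemma mem_or_mul_mem_of_mem_quadExt [NeZero (2 : K)] {q : K} (hq : q ∈ quadExt F hr2 hr)
    (hq2 : q ^ 2 ∈ F) : q ∈ F ∨ r * q ∈ F := by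
  obtain ⟨u, hu, v, hv, rfl⟩ := mem_quadExt.mp hq
  have hcross : u ^ 2 + v ^ 2 * r ^ 2 - (u + v * r) ^ 2 + 2 * u * v * r = 0 := by ring
  have huv := (eq_zero_of_add_mul_eq_zero hr
    (F.sub_mem (F.add_mem (F.pow_mem hu 2) (F.mul_mem (F.pow_mem hv 2) hr2)) hq2)
    (F.mul_mem (F.mul_mem (ofNat_mem F 2) hu) hv) hcross).2
  rcases mul_eq_zero.mp huv with h | rfl
  · obtain rfl := (mul_eq_zero.mp h).resolve_left two_ne_zero
    exact .inr (by simpa only [zero_add, mul_left_comm r v r, ← pow_two] using F.mul_mem hv hr2)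
  · exact .inl (by simpa using hu)

lemma eq_zero_of_sum_mul_prod_eq_zero [NeZero (2 : K)] {ι : Type*} {r : ι → K}
    {s : Finset ι} (hr2 : ∀ i ∈ s, r i ^ 2 ∈ F) (hr : ∀ t ⊆ s, t.Nonempty → ∏ i ∈ t, r i ∉ F)
    {C : Finset ι → K} (hC : ∀ t ⊆ s, C t ∈ F) (h : ∑ t ∈ s.powerset, C t * ∏ i ∈ t, r i = 0) :
    ∀ t ⊆ s, C t = 0 := by
  classical
  induction s using Finset.induction_on generalizing F C with
  | empty =>
    intro t ht
    obtain rfl := Finset.subset_empty.mp ht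
    simpa using h
  | insert a s ha ih =>
    have hra2 : r a ^ 2 ∈ F := hr2 a (Finset.mem_insert_self a s)
    have hra : r a ∉ F := by simpa using hr {a} (by simp) (Finset.singleton_nonempty a)
    have hsub {t : Finset ι} (ht : t ⊆ s) : t ⊆ insert a s := ht.trans (Finset.subset_insert a s)
    have hprod {t : Finset ι} (ht : t ⊆ s) : ∏ i ∈ insert a t, r i = r a * ∏ i ∈ t, r i :=
      Finset.prod_insert fun hat => ha (ht hat)
    have hpair : ∀ t ⊆ s, C t + C (insert a t) * r a = 0 := by
      refine ih (F := quadExt F hra2 hra) (C := fun t => C t + C (insert a t) * r a)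
        (fun i hi => le_quadExt (hr2 i (Finset.mem_insert_of_mem hi))) (fun t ht hne hmem => ?_)
        (fun t ht => ⟨C t, hC t (hsub ht), C (insert a t),
          hC _ (Finset.insert_subset_insert a ht), rfl⟩) ?_
      · have hsq : (∏ i ∈ t, r i) ^ 2 ∈ F := by
          rw [← Finset.prod_pow]
          exact F.prod_mem fun i hi => hr2 i (hsub ht hi)
        rcases mem_or_mul_mem_of_mem_quadExt hmem hsq with hF | hF
        · exact hr t (hsub ht) hne hF
        · exact hr _ (Finset.insert_subset_insert a ht) (Finset.insert_nonempty a t) (hprod ht ▸ hF)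
      · rw [← h, Finset.sum_powerset_insert ha, ← Finset.sum_add_distrib]
        refine Finset.sum_congr rfl fun t ht => ?_
        rw [hprod (Finset.mem_powerset.mp ht)]
        ring
    have hboth {t : Finset ι} (ht : t ⊆ s) : C t = 0 ∧ C (insert a t) = 0 :=
      eq_zero_of_add_mul_eq_zero hra (hC t (hsub ht)) (hC _ (Finset.insert_subset_insert a ht))
        (hpair t ht)
    intro t ht
    by_cases hat : a ∈ t
    · rw [← Finset.insert_erase hat]
      exact (hboth (Finset.subset_insert_iff.mp ht)).2
    · exact (hboth ((Finset.subset_insert_iff_of_notMem hat).mp ht)).1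

end Kummer

/-! ### The Tribonacci root and the four generators -/

lemma exists_trib_root : ∃ x : ℝ, x ^ 3 = x ^ 2 + x + 1 ∧ 1.8392867 < x ∧ x < 1.8392868 := by
  have hcont : ContinuousOn (fun x : ℝ => x ^ 3 - x ^ 2 - x - 1) (Set.Icc 1.8392867 1.8392868) := by
    fun_prop
  obtain ⟨x, hx, hx0⟩ := intermediate_value_Ioo (by norm_num) hcont
    (show (0 : ℝ) ∈ Set.Ioo _ _ by constructor <;> norm_num)
  exact ⟨x, by linear_combination hx0, hx.1, hx.2⟩

/-- The real root `α` of `X³ - X² - X - 1`. -/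
noncomputable def tribRoot : ℝ := exists_trib_root.choose

lemma tribRoot_cube : tribRoot ^ 3 = tribRoot ^ 2 + tribRoot + 1 := exists_trib_root.choose_spec.1

lemma lt_tribRoot : 1.8392867 < tribRoot := exists_trib_root.choose_spec.2.1

lemma tribRoot_lt : tribRoot < 1.8392868 := exists_trib_root.choose_spec.2.2

lemma tribRoot_pos : 0 < tribRoot := by linarith [lt_tribRoot]

lemma sq_tribRoot_mem_Ioo : tribRoot ^ 2 ∈ Set.Ioo 3.38297 3.38298 := by
  constructor <;> nlinarith [lt_tribRoot, tribRoot_lt]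

/-- The four multiplicatively independent elements `α - 1, 3, α, 2α² - 3α` whose logarithms enter
the linear forms, as polynomial expressions in `z` so that they make sense at every conjugate of
`α`. -/
def gen {A : Type*} [CommRing A] (z : A) : Fin 4 → A := ![z - 1, 3, z, 2 * z ^ 2 - 3 * z]

lemma map_gen {A B : Type*} [CommRing A] [CommRing B] (f : A →+* B) (z : A) (i : Fin 4) :
    f (gen z i) = gen (f z) i := by
  fin_cases i <;> simp [gen, map_ofNat]

lemma gen_tribRoot_pos (i : Fin 4) : 0 < gen tribRoot i := by
  have hα := lt_tribRoot
  fin_cases i <;> simp only [gen, Fin.reduceFinMk, Matrix.cons_val] <;> nlinarith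

/-- The logarithms of the generators. -/
noncomputable def logGen (i : Fin 4) : ℝ := Real.log (gen tribRoot i)

lemma exp_logGen (i : Fin 4) : Real.exp (logGen i) = gen tribRoot i :=
  Real.exp_log (gen_tribRoot_pos i)

lemma log_le_of_le_sum {x q : ℝ} (n : ℕ) (hx : 0 < x) (hq : 0 ≤ q)
    (h : x ≤ ∑ i ∈ Finset.range n, q ^ i / i.factorial) : Real.log x ≤ q :=
  (Real.log_le_iff_le_exp hx).mpr (h.trans (Real.sum_le_exp_of_nonneg hq n))

lemma norm_le_exp_of_normSq_le_sum {w : ℂ} {q : ℝ} (n : ℕ) (hq : 0 ≤ q)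
    (h : Complex.normSq w ≤ ∑ i ∈ Finset.range n, (2 * q) ^ i / i.factorial) :
    ‖w‖ ≤ Real.exp q := by
  refine le_of_sq_le_sq ?_ (Real.exp_pos q).le
  rw [← Complex.normSq_eq_norm_sq, ← Real.exp_nat_mul]
  exact h.trans (Real.sum_le_exp_of_nonneg (by positivity) n)

lemma logGen_zero_mem : logGen 0 ∈ Set.Icc (-0.1753) 0 := by
  have hα := lt_tribRoot
  have hα' := tribRoot_lt
  have hgen : gen tribRoot 0 = tribRoot - 1 := rfl
  refine ⟨?_, Real.log_nonpos (gen_tribRoot_pos 0).le (by linarith)⟩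
  have hinv : Real.log (gen tribRoot 0)⁻¹ ≤ 0.1753 := by
    refine log_le_of_le_sum 6 (inv_pos.mpr (gen_tribRoot_pos 0)) (by norm_num) ?_
    norm_num only [Finset.sum_range_succ, Finset.sum_range_zero, Nat.factorial]
    rw [hgen, inv_le_comm₀ (by linarith) (by norm_num)]
    linarith
  rw [Real.log_inv] at hinv
  exact neg_le.mp hinv

lemma logGen_one_mem : logGen 1 ∈ Set.Icc 0 1.0987 := by
  have hgen : gen tribRoot 1 = 3 := rfl
  refine ⟨Real.log_nonneg (by norm_num [hgen]),
    log_le_of_le_sum 12 (gen_tribRoot_pos 1) (by norm_num) ?_⟩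
  norm_num [hgen, Finset.sum_range_succ, Nat.factorial]

lemma logGen_two_mem : logGen 2 ∈ Set.Icc 0 0.6095 := by
  have hα := lt_tribRoot
  have hα' := tribRoot_lt
  have hgen : gen tribRoot 2 = tribRoot := rfl
  refine ⟨Real.log_nonneg (by linarith), log_le_of_le_sum 9 (gen_tribRoot_pos 2) (by norm_num) ?_⟩
  norm_num only [Finset.sum_range_succ, Finset.sum_range_zero, Nat.factorial]
  linarith

lemma logGen_three_mem : logGen 3 ∈ Set.Icc 0 0.2218 := by
  have hα := lt_tribRoot
  have hα' := tribRoot_lt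
  have hα2 := sq_tribRoot_mem_Ioo
  have hgen : gen tribRoot 3 = 2 * tribRoot ^ 2 - 3 * tribRoot := rfl
  refine ⟨Real.log_nonneg (by linarith [hα2.1]),
    log_le_of_le_sum 6 (gen_tribRoot_pos 3) (by norm_num) ?_⟩
  norm_num only [Finset.sum_range_succ, Finset.sum_range_zero, Nat.factorial]
  linarith [hα2.2]

lemma abs_logGen_le (i : Fin 4) :
    |logGen i| ≤ (![0.1753, 1.0987, 0.6095, 0.2218] : Fin 4 → ℝ) i := by
  fin_cases i
  · exact abs_le.mpr ⟨logGen_zero_mem.1, logGen_zero_mem.2.trans (by norm_num)⟩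
  · exact (abs_of_nonneg logGen_one_mem.1).trans_le logGen_one_mem.2
  · exact (abs_of_nonneg logGen_two_mem.1).trans_le logGen_two_mem.2
  · exact (abs_of_nonneg logGen_three_mem.1).trans_le logGen_three_mem.2

lemma norm_gen_tribRoot (i : Fin 4) : ‖gen (tribRoot : ℂ) i‖ = gen tribRoot i := by
  have hmap : gen (tribRoot : ℂ) i = (gen tribRoot i : ℝ) :=
    (map_gen Complex.ofRealHom tribRoot i).symm
  rw [hmap, Complex.norm_real, Real.norm_of_nonneg (gen_tribRoot_pos i).le]

/-- The cofactor `z² + (α - 1) z + (α² - α - 1)` of `z - α` in the cubic has two complex conjugate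
roots. -/
lemma re_and_normSq_of_cube_eq {z : ℂ} (hz : z ^ 3 = z ^ 2 + z + 1) (hne : z ≠ tribRoot) :
    z.re = (1 - tribRoot) / 2 ∧ Complex.normSq z = tribRoot ^ 2 - tribRoot - 1 := by
  have hα : (tribRoot : ℂ) ^ 3 = tribRoot ^ 2 + tribRoot + 1 := by exact_mod_cast tribRoot_cube
  have hquad : z ^ 2 + (tribRoot - 1) * z + (tribRoot ^ 2 - tribRoot - 1) = 0 :=
    (mul_eq_zero.mp (show (z - tribRoot) * _ = 0 by linear_combination hz - hα)).resolve_left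
      (sub_ne_zero.mpr hne)
  have hre := congrArg Complex.re hquad
  have him := congrArg Complex.im hquad
  simp only [pow_two, Complex.add_re, Complex.sub_re, Complex.mul_re, Complex.add_im,
    Complex.sub_im, Complex.mul_im, Complex.ofReal_re, Complex.ofReal_im, Complex.one_re,
    Complex.one_im, Complex.zero_re, Complex.zero_im] at hre him
  have himne : z.im ≠ 0 := fun h => by
    rw [h] at hre
    nlinarith [sq_nonneg (2 * z.re + (tribRoot - 1)), lt_tribRoot, tribRoot_lt]
  have hsum : 2 * z.re + (tribRoot - 1) = 0 := mul_left_cancel₀ himne (by linarith)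
  have hzre : z.re = (1 - tribRoot) / 2 := by linarith
  refine ⟨hzre, ?_⟩
  rw [Complex.normSq_apply]
  rw [hzre] at hre ⊢
  linarith

lemma norm_gen_le_of_ne {z : ℂ} (hz : z ^ 3 = z ^ 2 + z + 1) (hne : z ≠ tribRoot) (i : Fin 4) :
    ‖gen z i‖ ≤ Real.exp ((![0.4347, 1.0987, 0, 1.0886] : Fin 4 → ℝ) i) := by
  obtain ⟨hre, hnormSq⟩ := re_and_normSq_of_cube_eq hz hne
  have hα := lt_tribRoot
  have hα' := tribRoot_lt
  have hα2 := sq_tribRoot_mem_Ioo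
  fin_cases i
  · refine norm_le_exp_of_normSq_le_sum (w := z - 1) (q := 0.4347) 10 (by norm_num) ?_
    rw [show Complex.normSq (z - 1) = tribRoot ^ 2 - 1 by
      simp only [Complex.normSq_sub, hnormSq, map_one, mul_one, hre]; ring]
    norm_num only [Finset.sum_range_succ, Finset.sum_range_zero, Nat.factorial]
    linarith [hα2.2]
  · refine (norm_gen_tribRoot 1).trans_le ?_
    rw [← exp_logGen]
    exact Real.exp_le_exp.mpr logGen_one_mem.2
  · refine norm_le_exp_of_normSq_le_sum (w := z) (q := 0) 1 (by norm_num) ?_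
    norm_num only [Finset.sum_range_succ, Finset.sum_range_zero, Nat.factorial, hnormSq]
    linarith [hα2.2]
  · refine norm_le_exp_of_normSq_le_sum (w := 2 * z ^ 2 - 3 * z) (q := 1.0886) 15 (by norm_num) ?_
    have hfactor : Complex.normSq (2 * z - 3) = 4 * tribRoot ^ 2 + 2 * tribRoot - 1 := by
      simp only [Complex.normSq_sub, Complex.normSq_mul, hnormSq, Complex.normSq_ofNat, map_ofNat]
      simp only [Complex.mul_re, Complex.re_ofNat, Complex.im_ofNat, hre]
      ring
    rw [show 2 * z ^ 2 - 3 * z = z * (2 * z - 3) by ring, Complex.normSq_mul, hnormSq, hfactor]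
    norm_num only [Finset.sum_range_succ, Finset.sum_range_zero, Nat.factorial]
    nlinarith [hα2.1, hα2.2]

/-! ### The cubic field -/

section Padic

open Polynomial

variable {p : ℕ} [Fact p.Prime]

lemma exists_padicInt_root {f : ℤ[X]} {a : ℤ} (hf : (p : ℤ) ∣ f.eval a)
    (hf' : ¬(p : ℤ) ∣ f.derivative.eval a) :
    ∃ z : ℤ_[p], aeval z f = 0 ∧ PadicInt.toZMod z = a := by
  have haeval (g : ℤ[X]) : aeval (a : ℤ_[p]) g = (g.eval a : ℤ) := by
    simpa using aeval_algebraMap_apply ℤ_[p] a g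
  have hderiv : ‖aeval (a : ℤ_[p]) f.derivative‖ = 1 := by
    rw [haeval]
    exact (PadicInt.norm_le_one _).antisymm
      (not_lt.mp (mt (PadicInt.norm_int_lt_one_iff_dvd _).mp hf'))
  obtain ⟨z, hz, hza, -⟩ := hensels_lemma (F := f) (a := (a : ℤ_[p])) (by
    rwa [hderiv, one_pow, haeval, PadicInt.norm_int_lt_one_iff_dvd])
  rw [hderiv] at hza
  refine ⟨z, hz, ?_⟩
  rw [← map_intCast (PadicInt.toZMod (p := p)), ← sub_eq_zero, ← map_sub, ← RingHom.mem_ker,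
    PadicInt.ker_toZMod, IsLocalRing.mem_maximalIdeal]
  exact PadicInt.mem_nonunits.mpr hza

lemma isSquare_toZMod_of_isSquare {L : Type*} [Field L] (φ : L →+* ℚ_[p]) {x : L} {z : ℤ_[p]}
    (hx : φ x = algebraMap ℤ_[p] ℚ_[p] z) (h : IsSquare x) : IsSquare (PadicInt.toZMod z) := by
  obtain ⟨y, rfl⟩ := h
  have hnorm : ‖φ y‖ ≤ 1 := by
    refine le_of_sq_le_sq ?_ zero_le_one
    rw [pow_two, ← norm_mul, ← map_mul, hx, one_pow]
    exact z.2
  obtain ⟨w, hw⟩ : ∃ w : ℤ_[p], algebraMap ℤ_[p] ℚ_[p] w = φ y := ⟨⟨φ y, hnorm⟩, rfl⟩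
  have hz : z = w * w :=
    FaithfulSMul.algebraMap_injective ℤ_[p] ℚ_[p] (by rw [map_mul, hw, ← map_mul, hx])
  exact ⟨PadicInt.toZMod w, by rw [hz, map_mul]⟩

end Padic

section TribField

open Polynomial

/-- The polynomial `X³ - X² - X - 1`, over any coefficient ring. -/
noncomputable def tribPoly (A : Type*) [CommRing A] : A[X] := X ^ 3 - X ^ 2 - X - 1

section

variable (A : Type*) [CommRing A]

lemma monic_tribPoly : (tribPoly A).Monic := by
  rw [tribPoly]
  monicity!

lemma natDegree_tribPoly [Nontrivial A] : (tribPoly A).natDegree = 3 := by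
  rw [tribPoly]
  compute_degree!

variable {A} {B : Type*} [CommRing B]

lemma map_tribPoly (f : A →+* B) : (tribPoly A).map f = tribPoly B := by
  simp [tribPoly]

lemma aeval_tribPoly [Algebra A B] (z : B) : aeval z (tribPoly A) = z ^ 3 - z ^ 2 - z - 1 := by
  simp [tribPoly]

lemma aeval_tribPoly_eq_zero_iff [Algebra A B] {z : B} :
    aeval z (tribPoly A) = 0 ↔ z ^ 3 = z ^ 2 + z + 1 := by
  rw [aeval_tribPoly]
  constructor <;> intro h <;> linear_combination h

end

lemma irreducible_tribPoly_int : Irreducible (tribPoly ℤ) := by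
  refine (monic_tribPoly ℤ).irreducible_of_irreducible_map (Int.castRingHom (ZMod 3)) _ ?_
  rw [map_tribPoly]
  refine irreducible_of_degree_le_three_of_not_isRoot (by simp [natDegree_tribPoly]) fun x hx => ?_
  have hnoroot : ∀ x : ZMod 3, x ^ 3 - x ^ 2 - x - 1 ≠ 0 := by decide
  exact hnoroot x (by simpa only [IsRoot.def, ← coe_aeval_eq_eval, aeval_tribPoly] using hx)

lemma minpoly_tribRoot : minpoly ℚ tribRoot = tribPoly ℚ := by
  refine (minpoly.eq_of_irreducible_of_monic ?_ (aeval_tribPoly_eq_zero_iff.mpr tribRoot_cube)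
    (monic_tribPoly ℚ)).symm
  rw [← map_tribPoly (Int.castRingHom ℚ)]
  exact (monic_tribPoly ℤ).irreducible_iff_irreducible_map_fraction_map.mp irreducible_tribPoly_int

lemma isIntegral_tribRoot : IsIntegral ℚ tribRoot :=
  ⟨tribPoly ℚ, monic_tribPoly ℚ, aeval_tribPoly_eq_zero_iff.mpr tribRoot_cube⟩

/-- The cubic field `ℚ(α)`, inside `ℝ`. -/
noncomputable abbrev tribField : IntermediateField ℚ ℝ := IntermediateField.adjoin ℚ {tribRoot}

/-- `α` as an element of `ℚ(α)`. -/
noncomputable abbrev tribGen : tribField := IntermediateField.AdjoinSimple.gen ℚ tribRoot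

lemma algebraMap_gen_tribGen (i : Fin 4) :
    algebraMap tribField ℝ (gen tribGen i) = gen tribRoot i :=
  map_gen (algebraMap tribField ℝ) tribGen i

lemma gen_tribRoot_mem_tribField (i : Fin 4) : gen tribRoot i ∈ tribField :=
  algebraMap_gen_tribGen i ▸ (gen tribGen i).2

lemma finrank_tribField : Module.finrank ℚ tribField = 3 := by
  rw [IntermediateField.adjoin.finrank isIntegral_tribRoot, minpoly_tribRoot, natDegree_tribPoly]

lemma exists_hom_tribField {L : Type*} [Field L] [Algebra ℚ L] {z : L}
    (hz : z ^ 3 = z ^ 2 + z + 1) : ∃ φ : tribField →ₐ[ℚ] L, φ tribGen = z := by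
  have hroot : z ∈ (minpoly ℚ tribRoot).aroots L :=
    mem_aroots.mpr ⟨minpoly.ne_zero isIntegral_tribRoot,
      by rw [minpoly_tribRoot, aeval_tribPoly_eq_zero_iff, hz]⟩
  exact ⟨(IntermediateField.algHomAdjoinIntegralEquiv ℚ isIntegral_tribRoot).symm ⟨z, hroot⟩,
    IntermediateField.algHomAdjoinIntegralEquiv_symm_apply_gen ℚ isIntegral_tribRoot ⟨z, hroot⟩⟩

/-- A simple root `a` of the cubic modulo `p` lifts to `ℤ_p`, so that `ℚ(α)` embeds into `ℚ_p` with
`α ≡ a`. -/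
lemma isSquare_prod_gen_zmod {p : ℕ} [Fact p.Prime] {a : ℤ} (ha : (p : ℤ) ∣ (tribPoly ℤ).eval a)
    (ha' : ¬(p : ℤ) ∣ (tribPoly ℤ).derivative.eval a) {t : Finset (Fin 4)}
    (h : IsSquare (∏ i ∈ t, gen tribGen i)) : IsSquare (∏ i ∈ t, gen (a : ZMod p) i) := by
  obtain ⟨z, hz, hza⟩ := exists_padicInt_root ha ha'
  obtain ⟨φ, hφ⟩ := exists_hom_tribField (z := algebraMap ℤ_[p] ℚ_[p] z)
    (by simp only [← map_pow, aeval_tribPoly_eq_zero_iff.mp hz, map_add, map_one])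
  have hprod : φ (∏ i ∈ t, gen tribGen i) = algebraMap ℤ_[p] ℚ_[p] (∏ i ∈ t, gen z i) := by
    rw [map_prod, map_prod]
    refine Finset.prod_congr rfl fun i _ => ?_
    rw [map_gen, ← hφ]
    exact map_gen (φ : tribField →+* ℚ_[p]) tribGen i
  have := isSquare_toZMod_of_isSquare (φ : tribField →+* ℚ_[p]) hprod h
  rwa [map_prod, Finset.prod_congr rfl fun i _ => map_gen PadicInt.toZMod z i, hza] at this

/-- The quadratic characters at the degree-one primes `(7, α - 3)`, `(11, α - 9)`, `(13, α - 7)` and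
`(17, α - 14)` separate the `16` square classes generated by the four generators. -/
lemma not_isSquare_prod_gen {t : Finset (Fin 4)} (ht : t.Nonempty) :
    ¬IsSquare (∏ i ∈ t, gen tribGen i) := by
  intro h
  have h7 : IsSquare (∏ i ∈ t, gen (3 : ZMod 7) i) := by
    have : Fact (Nat.Prime 7) := ⟨by norm_num⟩
    exact isSquare_prod_gen_zmod (a := 3) (by norm_num [tribPoly]) (by norm_num [tribPoly]) h
  have h11 : IsSquare (∏ i ∈ t, gen (9 : ZMod 11) i) := by
    have : Fact (Nat.Prime 11) := ⟨by norm_num⟩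
    exact isSquare_prod_gen_zmod (a := 9) (by norm_num [tribPoly]) (by norm_num [tribPoly]) h
  have h13 : IsSquare (∏ i ∈ t, gen (7 : ZMod 13) i) := by
    have : Fact (Nat.Prime 13) := ⟨by norm_num⟩
    exact isSquare_prod_gen_zmod (a := 7) (by norm_num [tribPoly]) (by norm_num [tribPoly]) h
  have h17 : IsSquare (∏ i ∈ t, gen (14 : ZMod 17) i) := by
    have : Fact (Nat.Prime 17) := ⟨by norm_num⟩
    exact isSquare_prod_gen_zmod (a := 14) (by norm_num [tribPoly]) (by norm_num [tribPoly]) h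
  have hcharacters : ∀ t : Finset (Fin 4), IsSquare (∏ i ∈ t, gen (3 : ZMod 7) i) →
      IsSquare (∏ i ∈ t, gen (9 : ZMod 11) i) → IsSquare (∏ i ∈ t, gen (7 : ZMod 13) i) →
      IsSquare (∏ i ∈ t, gen (14 : ZMod 17) i) → t = ∅ := by decide
  exact ht.ne_empty (hcharacters t h7 h11 h13 h17)

lemma prod_sqrt_gen_notMem_tribField {t : Finset (Fin 4)} (ht : t.Nonempty) :
    ∏ i ∈ t, √(gen tribRoot i) ∉ tribField := by
  refine fun h => not_isSquare_prod_gen ht ⟨⟨_, h⟩, Subtype.ext ?_⟩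
  have hcoe : ((∏ i ∈ t, gen tribGen i : tribField) : ℝ) = ∏ i ∈ t, gen tribRoot i := by
    rw [← IntermediateField.algebraMap_apply, map_prod]
    exact Finset.prod_congr rfl fun i _ => algebraMap_gen_tribGen i
  rw [hcoe]
  refine Eq.trans ?_ Finset.prod_mul_distrib
  exact Finset.prod_congr rfl fun i _ => (Real.mul_self_sqrt (gen_tribRoot_pos i).le).symm

lemma eq_zero_of_sum_mul_prod_sqrt_gen_eq_zero {C : Finset (Fin 4) → ℝ} (hC : ∀ t, C t ∈ tribField)
    (h : ∑ t, C t * ∏ i ∈ t, √(gen tribRoot i) = 0) (t : Finset (Fin 4)) : C t = 0 := by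
  refine eq_zero_of_sum_mul_prod_eq_zero (F := tribField.toSubfield) (s := Finset.univ)
    (fun i _ => ?_) (fun t _ => prod_sqrt_gen_notMem_tribField) (fun t _ => hC t)
    (Finset.powerset_univ (α := Fin 4) ▸ h) t (Finset.subset_univ t)
  rw [Real.sq_sqrt (gen_tribRoot_pos i).le]
  exact gen_tribRoot_mem_tribField i

end TribField

/-! ### Liouville's inequality -/

section Liouville

lemma one_le_norm_mul_pow_of_isIntegral {K : Type*} [Field K] [Algebra ℚ K]
    [FiniteDimensional ℚ K] (σ₀ : K →ₐ[ℚ] ℂ) {y : K} (hy : IsIntegral ℤ y) (hy0 : y ≠ 0) {X : ℝ}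
    (hX : ∀ σ : K →ₐ[ℚ] ℂ, ‖σ y‖ ≤ X) : 1 ≤ ‖σ₀ y‖ * X ^ (Module.finrank ℚ K - 1) := by
  classical
  obtain ⟨k, hk⟩ := IsIntegrallyClosed.isIntegral_iff.mp (Algebra.isIntegral_norm ℚ hy)
  have hk0 : k ≠ 0 := by
    rintro rfl
    exact Algebra.norm_ne_zero_iff.mpr hy0 (hk.symm.trans (map_zero _))
  calc (1 : ℝ) ≤ |(k : ℝ)| := by exact_mod_cast Int.one_le_abs hk0
    _ = ∏ σ : K →ₐ[ℚ] ℂ, ‖σ y‖ := by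
      rw [← norm_prod, ← Algebra.norm_eq_prod_embeddings ℚ ℂ y, ← hk]
      simp
    _ = ‖σ₀ y‖ * ∏ σ ∈ Finset.univ.erase σ₀, ‖σ y‖ :=
      (Finset.mul_prod_erase Finset.univ _ (Finset.mem_univ σ₀)).symm
    _ ≤ ‖σ₀ y‖ * X ^ (Finset.univ.erase σ₀).card := by
      rw [← Finset.prod_const]
      gcongr
      exact hX _
    _ = _ := by rw [Finset.card_erase_of_mem (Finset.mem_univ _), Finset.card_univ, AlgHom.card]

lemma finrank_iSup_le_prod {F E ι : Type*} [Field F] [Field E] [Algebra F E] [Fintype ι]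
    (K : ι → IntermediateField F E) :
    Module.finrank F ↥(⨆ i, K i) ≤ ∏ i, Module.finrank F (K i) := by
  classical
  rw [← Finset.sup_univ_eq_iSup]
  induction (Finset.univ : Finset ι) using Finset.induction_on with
  | empty => exact IntermediateField.finrank_bot.le
  | insert i s hi ih =>
    rw [Finset.sup_insert, Finset.prod_insert hi]
    exact (IntermediateField.finrank_sup_le _ _).trans (Nat.mul_le_mul_left _ ih)

open Polynomial in
lemma finrank_adjoin_le_two_of_sq {F E : Type*} [Field F] [Field E] [Algebra F E] {r : E} {a : F}
    (hr : r ^ 2 = algebraMap F E a) :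
    Module.finrank F (IntermediateField.adjoin F {r}) ≤ 2 := by
  have hmonic : (X ^ 2 - C a).Monic := monic_X_pow_sub_C a two_ne_zero
  have hroot : aeval r (X ^ 2 - C a) = 0 := by simp [hr]
  rw [IntermediateField.adjoin.finrank ⟨_, hmonic, hroot⟩,
    ← natDegree_X_pow_sub_C (n := 2) (r := a)]
  exact natDegree_le_natDegree (minpoly.min F r hmonic hroot)

/-- The field `ℚ(α, √(α-1), √3, √α, √(2α²-3α))`. -/
noncomputable def kumField : IntermediateField tribField ℝ :=
  ⨆ i, IntermediateField.adjoin tribField {√(gen tribRoot i)}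

lemma sq_sqrt_gen_tribRoot (i : Fin 4) :
    √(gen tribRoot i) ^ 2 = algebraMap tribField ℝ (gen tribGen i) := by
  rw [Real.sq_sqrt (gen_tribRoot_pos i).le, algebraMap_gen_tribGen]

instance : FiniteDimensional ℚ tribField :=
  IntermediateField.adjoin.finiteDimensional isIntegral_tribRoot

instance : FiniteDimensional tribField kumField := by
  have (i : Fin 4) :
      FiniteDimensional tribField (IntermediateField.adjoin tribField {√(gen tribRoot i)}) :=
    IntermediateField.adjoin.finiteDimensional
      (.of_pow two_pos (sq_sqrt_gen_tribRoot i ▸ isIntegral_algebraMap))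
  exact inferInstanceAs (FiniteDimensional tribField
    ↥(⨆ i, IntermediateField.adjoin tribField {√(gen tribRoot i)}))

instance : FiniteDimensional ℚ kumField := FiniteDimensional.trans ℚ tribField kumField

lemma finrank_kumField_le : Module.finrank ℚ kumField ≤ 48 := by
  rw [← Module.finrank_mul_finrank ℚ tribField kumField, finrank_tribField]
  calc 3 * Module.finrank tribField kumField
      ≤ 3 * ∏ _i : Fin 4, 2 := Nat.mul_le_mul_left _ <| (finrank_iSup_le_prod _).trans <|
        Finset.prod_le_prod' fun i _ => finrank_adjoin_le_two_of_sq (sq_sqrt_gen_tribRoot i)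
    _ = 48 := by simp

/-- `√(gen i)` as an element of `kumField`. -/
noncomputable def sqrtGen (i : Fin 4) : kumField :=
  ⟨√(gen tribRoot i), le_iSup (fun i => IntermediateField.adjoin tribField {√(gen tribRoot i)}) i
    (IntermediateField.mem_adjoin_simple_self tribField _)⟩

lemma algebraMap_sqrtGen (i : Fin 4) : algebraMap kumField ℝ (sqrtGen i) = √(gen tribRoot i) := rfl

lemma sq_sqrtGen (i : Fin 4) : sqrtGen i ^ 2 = gen (algebraMap tribField kumField tribGen) i := by
  apply (algebraMap kumField ℝ).injective
  rw [map_pow, algebraMap_sqrtGen, sq_sqrt_gen_tribRoot, map_gen, map_gen]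
  rfl

lemma tribGen_cube : tribGen ^ 3 = tribGen ^ 2 + tribGen + 1 :=
  (algebraMap tribField ℝ).injective (by
    simp only [map_pow, map_add, map_one]
    exact tribRoot_cube)

lemma isIntegral_gen {A : Type*} [CommRing A] {z : A} (hz : IsIntegral ℤ z) (i : Fin 4) :
    IsIntegral ℤ (gen z i) := by
  have hmap := map_gen (algebraMap (integralClosure ℤ A) A) ⟨z, hz⟩ i
  exact hmap ▸ (gen (⟨z, hz⟩ : integralClosure ℤ A) i).2

lemma isIntegral_sqrtGen (i : Fin 4) : IsIntegral ℤ (sqrtGen i) := by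
  have htribGen : IsIntegral ℤ tribGen :=
    ⟨tribPoly ℤ, monic_tribPoly ℤ, aeval_tribPoly_eq_zero_iff.mpr tribGen_cube⟩
  exact .of_pow two_pos (sq_sqrtGen i ▸ isIntegral_gen (htribGen.algebraMap) i)

lemma exists_norm_sqrtGen_eq (σ : kumField →ₐ[ℚ] ℂ) :
    ∃ z : ℂ, z ^ 3 = z ^ 2 + z + 1 ∧ ∀ i, ‖σ (sqrtGen i)‖ = √‖gen z i‖ := by
  refine ⟨σ (algebraMap tribField kumField tribGen), ?_, fun i => ?_⟩
  · simp only [← map_pow, tribGen_cube, map_add, map_one]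
  · have hgen : gen (σ (algebraMap tribField kumField tribGen)) i = σ (sqrtGen i) ^ 2 := by
      rw [← map_pow, sq_sqrtGen]
      exact (map_gen (σ : kumField →+* ℂ) _ i).symm
    rw [hgen, norm_pow, Real.sqrt_sq (norm_nonneg _)]

lemma one_le_abs_sum_mul_pow {ι : Type*} {S : Finset ι} {c : ι → ℤ} {e : ι → Fin 4 → ℕ} {X : ℝ}
    (hX1 : 1 ≤ X) (hX : ∀ z : ℂ, z ^ 3 = z ^ 2 + z + 1 →
      ∑ m ∈ S, |(c m : ℝ)| * ∏ i, √‖gen z i‖ ^ e m i ≤ X)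
    (hne : ∑ m ∈ S, (c m : ℝ) * ∏ i, √(gen tribRoot i) ^ e m i ≠ 0) :
    1 ≤ |∑ m ∈ S, (c m : ℝ) * ∏ i, √(gen tribRoot i) ^ e m i| * X ^ 47 := by
  let y : kumField := ∑ m ∈ S, (c m : kumField) * ∏ i, sqrtGen i ^ e m i
  have hcoe : algebraMap kumField ℝ y = ∑ m ∈ S, (c m : ℝ) * ∏ i, √(gen tribRoot i) ^ e m i := by
    simp only [y, map_sum, map_mul, map_prod, map_pow, map_intCast, algebraMap_sqrtGen]
  have hint : IsIntegral ℤ y := IsIntegral.sum _ fun m _ =>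
    (isIntegral_intCast _).mul (IsIntegral.prod _ fun i _ => (isIntegral_sqrtGen i).pow _)
  have hconj (σ : kumField →ₐ[ℚ] ℂ) : ‖σ y‖ ≤ X := by
    obtain ⟨z, hz, hσ⟩ := exists_norm_sqrtGen_eq σ
    calc ‖σ y‖ ≤ ∑ m ∈ S, ‖σ ((c m : kumField) * ∏ i, sqrtGen i ^ e m i)‖ := by
          rw [map_sum]
          exact norm_sum_le _ _
      _ = ∑ m ∈ S, |(c m : ℝ)| * ∏ i, √‖gen z i‖ ^ e m i := by
          simp only [map_mul, map_prod, map_pow, map_intCast, norm_mul, norm_prod, norm_pow, hσ,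
            Complex.norm_intCast]
      _ ≤ X := hX z hz
  rw [← hcoe] at hne ⊢
  let σ₀ : kumField →ₐ[ℚ] ℂ := (Complex.ofRealHom.comp (algebraMap kumField ℝ)).toRatAlgHom
  have hσ₀ : ‖σ₀ y‖ = |algebraMap kumField ℝ y| :=
    (Complex.norm_real _).trans (Real.norm_eq_abs _)
  calc 1 ≤ ‖σ₀ y‖ * X ^ (Module.finrank ℚ kumField - 1) :=
        one_le_norm_mul_pow_of_isIntegral σ₀ hint (fun h => hne (by rw [h, map_zero])) hconj
    _ ≤ |algebraMap kumField ℝ y| * X ^ 47 := by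
        rw [hσ₀]
        have := finrank_kumField_le
        gcongr
        omega

end Liouville

/-! ### Exponent boxes and vanishing conditions -/

section Box

open Finset

/-- The denominators of the sides of the boxes of exponents: the exponent of `gen _ i` ranges up to
`N / boxDen i`. The four sides are chosen to keep the heights of the monomials in a box balanced. -/
def boxDen : Fin 4 → ℕ := ![142, 498, 108, 339]

/-- The box of exponent vectors of size `N`. -/
def expBox (N : ℕ) : Finset (Fin 4 → ℕ) :=
  Fintype.piFinset fun i => range (N / boxDen i + 1)

variable {N : ℕ} {m : Fin 4 → ℕ}

lemma mem_expBox : m ∈ expBox N ↔ ∀ i, m i ≤ N / boxDen i := by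
  simp [expBox]

lemma cast_le_of_mem_expBox (hm : m ∈ expBox N) (i : Fin 4) : (m i : ℝ) ≤ N / boxDen i :=
  (Nat.cast_le.mpr (mem_expBox.mp hm i)).trans Nat.cast_div_le

lemma sum_mul_le_of_mem_expBox (hm : m ∈ expBox N) {c : Fin 4 → ℝ} (hc : 0 ≤ c) :
    ∑ i, c i * m i ≤ (∑ i, c i / boxDen i) * N := by
  rw [sum_mul]
  refine sum_le_sum fun i _ => ?_
  rw [div_mul_comm, mul_comm (N / _ : ℝ)]
  exact mul_le_mul_of_nonneg_left (cast_le_of_mem_expBox hm i) (hc i)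

lemma exists_norm_gen_le_exp {z : ℂ} (hz : z ^ 3 = z ^ 2 + z + 1) :
    ∃ c : Fin 4 → ℝ, 0 ≤ c ∧ (∀ i, ‖gen z i‖ ≤ Real.exp (c i)) ∧
      ∑ i, c i / boxDen i ≤ 0.00851 := by
  by_cases h : z = tribRoot
  · subst h
    refine ⟨![0, 1.0987, 0.6095, 0.2218], ?_, fun i => ?_, ?_⟩
    · intro i; fin_cases i <;> norm_num
    · rw [norm_gen_tribRoot, ← exp_logGen, Real.exp_le_exp]
      fin_cases i
      exacts [logGen_zero_mem.2, logGen_one_mem.2, logGen_two_mem.2, logGen_three_mem.2]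
    · simp only [Fin.sum_univ_four, boxDen, Matrix.cons_val]
      norm_num
  · refine ⟨_, ?_, norm_gen_le_of_ne hz h, ?_⟩
    · intro i; fin_cases i <;> norm_num
    · simp only [Fin.sum_univ_four, boxDen, Matrix.cons_val]
      norm_num

lemma prod_norm_gen_pow_le_exp {z : ℂ} (hz : z ^ 3 = z ^ 2 + z + 1) (hm : m ∈ expBox N) :
    ∏ i, ‖gen z i‖ ^ m i ≤ Real.exp (0.00851 * N) := by
  obtain ⟨c, hc, hgen, hsum⟩ := exists_norm_gen_le_exp hz
  calc ∏ i, ‖gen z i‖ ^ m i ≤ ∏ i, Real.exp (c i * m i) := by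
        refine prod_le_prod (fun _ _ => by positivity) fun i _ => ?_
        rw [mul_comm, Real.exp_nat_mul]
        exact pow_le_pow_left₀ (norm_nonneg _) (hgen i) _
    _ = Real.exp (∑ i, c i * m i) := (Real.exp_sum _ _).symm
    _ ≤ Real.exp (0.00851 * N) := Real.exp_le_exp.mpr <|
        (sum_mul_le_of_mem_expBox hm hc).trans (mul_le_mul_of_nonneg_right hsum N.cast_nonneg)

/-- The monomial with exponent vector `m` in the generators at `α`. -/
noncomputable def genPow (m : Fin 4 → ℕ) : ℝ := ∏ i, gen tribRoot i ^ m i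

/-- The logarithm of `genPow m`. -/
noncomputable def logGenPow (m : Fin 4 → ℕ) : ℝ := ∑ i, logGen i * m i

lemma genPow_eq_exp (m : Fin 4 → ℕ) : genPow m = Real.exp (logGenPow m) := by
  rw [logGenPow, Real.exp_sum, genPow]
  refine prod_congr rfl fun i _ => ?_
  rw [mul_comm, Real.exp_nat_mul, exp_logGen]

lemma genPow_pos (m : Fin 4 → ℕ) : 0 < genPow m := by
  rw [genPow_eq_exp]
  positivity

lemma genPow_pow_eq_exp (m : Fin 4 → ℕ) (k : ℕ) : genPow m ^ k = Real.exp (logGenPow m * k) := by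
  rw [genPow_eq_exp, ← Real.exp_nat_mul, mul_comm]

lemma logGenPow_le (hm : m ∈ expBox N) : logGenPow m ≤ 0.00851 * N := by
  rw [← Real.exp_le_exp, ← genPow_eq_exp, genPow]
  simpa only [norm_gen_tribRoot] using
    prod_norm_gen_pow_le_exp (z := tribRoot) (by exact_mod_cast tribRoot_cube) hm

lemma abs_logGenPow_le (hm : m ∈ expBox N) : |logGenPow m| ≤ 0.00974 * N := by
  calc |logGenPow m| ≤ ∑ i, |logGen i * m i| := abs_sum_le_sum_abs _ _
    _ = ∑ i, |logGen i| * m i := by simp only [abs_mul, Nat.abs_cast]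
    _ ≤ ∑ i, (![0.1753, 1.0987, 0.6095, 0.2218] : Fin 4 → ℝ) i * m i :=
        sum_le_sum fun i _ => mul_le_mul_of_nonneg_right (abs_logGen_le i) (Nat.cast_nonneg _)
    _ ≤ _ := sum_mul_le_of_mem_expBox hm fun i => (abs_nonneg _).trans (abs_logGen_le i)
    _ ≤ 0.00974 * N := by
        refine mul_le_mul_of_nonneg_right ?_ N.cast_nonneg
        simp only [Fin.sum_univ_four, boxDen, Matrix.cons_val]
        norm_num

end Box

section Vanishing

open Finset

/-- The minors `b₀ m_{i+1} - b_{i+1} m₀` of the `2 × 4` matrix with rows `b` and `m`. -/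
def minor (b : Fin 4 → ℤ) (m : Fin 4 → ℕ) (i : Fin 3) : ℤ := b 0 * m i.succ - b i.succ * m 0

/-- The monomial in the minors of `b` and `m` given by a multiset of indices. -/
def minorProd (b : Fin 4 → ℤ) (s : Multiset (Fin 3)) (m : Fin 4 → ℕ) : ℤ := (s.map (minor b m)).prod

/-- The linear form `∑ bᵢ log aᵢ` in the logarithms of the generators. -/
noncomputable def linForm (b : Fin 4 → ℤ) : ℝ := ∑ i, b i * logGen i

/-- The exponent `∑ mᵢ log aᵢ`, modified by a multiple of the linear form so that it becomes a
combination of the three minors of `b` and `m`. -/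
noncomputable def reducedLog (b : Fin 4 → ℤ) (m : Fin 4 → ℕ) : ℝ :=
  logGenPow m - m 0 * linForm b / b 0

/-- The vanishing conditions of order `N` at the first `R` odd integers for the coefficient
vector `p`. -/
def VanishesAtOdd (b : Fin 4 → ℤ) (p : (Fin 4 → ℕ) → ℤ) (N R : ℕ) : Prop :=
  ∀ s : Multiset (Fin 3), s.card ≤ N → ∀ r < R,
    ∑ m ∈ expBox N, (p m : ℝ) * minorProd b s m * genPow m ^ (2 * r + 1) = 0

variable {b : Fin 4 → ℤ} {m : Fin 4 → ℕ}

@[simp]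
lemma minorProd_zero : minorProd b 0 m = 1 := by
  simp [minorProd]

@[simp]
lemma minorProd_cons (i : Fin 3) (s : Multiset (Fin 3)) :
    minorProd b (i ::ₘ s) m = minor b m i * minorProd b s m := by
  simp [minorProd]

lemma abs_minorProd_le {W : ℝ} (hW1 : 1 ≤ W) (hW : ∀ i, |(minor b m i : ℝ)| ≤ W) {d : ℕ}
    {s : Multiset (Fin 3)} (hs : s.card ≤ d) : |(minorProd b s m : ℝ)| ≤ W ^ d := by
  refine le_trans ?_ (pow_le_pow_right₀ hW1 hs)
  clear hs
  induction s using Multiset.induction_on with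
  | empty => simp
  | cons i s ih =>
    rw [minorProd_cons, Int.cast_mul, abs_mul, Multiset.card_cons, pow_succ']
    exact mul_le_mul (hW i) ih (abs_nonneg _) (by positivity)

lemma reducedLog_eq_sum_minor (hb : b 0 ≠ 0) (m : Fin 4 → ℕ) :
    reducedLog b m = ∑ i : Fin 3, logGen i.succ / b 0 * minor b m i := by
  have hb' : (b 0 : ℝ) ≠ 0 := Int.cast_ne_zero.mpr hb
  simp only [reducedLog, logGenPow, linForm, minor, Fin.sum_univ_succ, Fin.sum_univ_zero,
    Int.cast_sub, Int.cast_mul, Int.cast_natCast]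
  field_simp
  ring

lemma VanishesAtOdd.sum_reducedLog_pow_eq_zero (hb : b 0 ≠ 0) {p : (Fin 4 → ℕ) → ℤ} {N R : ℕ}
    (h : VanishesAtOdd b p N R) {k : ℕ} {s : Multiset (Fin 3)} (hs : s.card + k ≤ N) {r : ℕ}
    (hr : r < R) :
    ∑ m ∈ expBox N,
      (p m : ℝ) * minorProd b s m * reducedLog b m ^ k * genPow m ^ (2 * r + 1) = 0 := by
  induction k generalizing s with
  | zero => simpa using h s hs r hr
  | succ k ih =>
    have hcons (i : Fin 3) : ∑ m ∈ expBox N, (p m : ℝ) * minorProd b (i ::ₘ s) m *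
        reducedLog b m ^ k * genPow m ^ (2 * r + 1) = 0 :=
      ih (s := i ::ₘ s) (by rw [Multiset.card_cons]; omega)
    calc ∑ m ∈ expBox N, (p m : ℝ) * minorProd b s m * reducedLog b m ^ (k + 1) *
          genPow m ^ (2 * r + 1)
        = ∑ m ∈ expBox N, ∑ i : Fin 3, logGen i.succ / b 0 * ((p m : ℝ) * minorProd b (i ::ₘ s) m *
            reducedLog b m ^ k * genPow m ^ (2 * r + 1)) := by
          refine sum_congr rfl fun m _ => ?_
          rw [pow_succ, ← mul_assoc]
          nth_rewrite 2 [reducedLog_eq_sum_minor hb m]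
          rw [mul_sum, sum_mul]
          refine sum_congr rfl fun i _ => ?_
          rw [minorProd_cons]
          push_cast
          ring
      _ = 0 := by
          rw [sum_comm]
          exact sum_eq_zero fun i _ => by rw [← mul_sum, hcons i, mul_zero]

end Vanishing

/-! ### Extrapolation to half-integers -/

section Extrapolation

open Finset
open scoped Nat

lemma sum_abs_mul_abs_le {ι : Type*} {S : Finset ι} {a F : ι → ℝ} {C H X : ℝ}
    (hX : (∑ m ∈ S, |a m|) * H ≤ X) (hC : 0 ≤ C) (hF : ∀ m ∈ S, |F m| ≤ C * H) :
    ∑ m ∈ S, |a m| * |F m| ≤ C * X :=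
  calc ∑ m ∈ S, |a m| * |F m| ≤ ∑ m ∈ S, |a m| * (C * H) :=
        sum_le_sum fun m hm => mul_le_mul_of_nonneg_left (hF m hm) (abs_nonneg _)
    _ = C * ((∑ m ∈ S, |a m|) * H) := by rw [← sum_mul]; ring
    _ ≤ C * X := mul_le_mul_of_nonneg_left hX hC

lemma abs_sum_mul_le {ι : Type*} {S : Finset ι} {a F : ι → ℝ} {C H X : ℝ}
    (hX : (∑ m ∈ S, |a m|) * H ≤ X) (hC : 0 ≤ C) (hF : ∀ m ∈ S, |F m| ≤ C * H) :
    |∑ m ∈ S, a m * F m| ≤ C * X :=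
  calc |∑ m ∈ S, a m * F m| ≤ ∑ m ∈ S, |a m * F m| := abs_sum_le_sum_abs _ _
    _ = ∑ m ∈ S, |a m| * |F m| := by simp only [abs_mul]
    _ ≤ C * X := sum_abs_mul_abs_le hX hC hF

variable {b : Fin 4 → ℤ} {m : Fin 4 → ℕ} {N : ℕ} {z Z : ℝ}

lemma abs_mul_linForm_div_le (hb : b 0 ≠ 0) (hm : m ∈ expBox N) :
    |m 0 * linForm b / b 0| ≤ N / 142 * |linForm b| := by
  rw [abs_div, abs_mul, Nat.abs_cast]
  have hb1 : (1 : ℝ) ≤ |(b 0 : ℝ)| := mod_cast Int.one_le_abs hb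
  calc (m 0 : ℝ) * |linForm b| / |(b 0 : ℝ)| ≤ m 0 * |linForm b| := div_le_self (by positivity) hb1
    _ ≤ N / 142 * |linForm b| :=
      mul_le_mul_of_nonneg_right (cast_le_of_mem_expBox hm 0) (abs_nonneg _)

lemma abs_reducedLog_le (hb : b 0 ≠ 0) (hΛ : |linForm b| ≤ 1e-5) (hm : m ∈ expBox N) :
    |reducedLog b m| ≤ 0.00975 * N :=
  calc |reducedLog b m| ≤ |logGenPow m| + |m 0 * linForm b / b 0| := abs_sub _ _
    _ ≤ 0.00974 * N + N / 142 * 1e-5 := add_le_add (abs_logGenPow_le hm)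
        ((abs_mul_linForm_div_le hb hm).trans (mul_le_mul_of_nonneg_left hΛ (by positivity)))
    _ ≤ 0.00975 * N := by linarith [N.cast_nonneg (α := ℝ)]

lemma exp_logGenPow_mul_le (hm : m ∈ expBox N) (hz : z ∈ Set.Icc 0 Z) :
    Real.exp (logGenPow m * z) ≤ Real.exp (0.00851 * N * Z) :=
  Real.exp_le_exp.mpr <| (mul_le_mul_of_nonneg_right (logGenPow_le hm) hz.1).trans
    (mul_le_mul_of_nonneg_left hz.2 (by positivity))

lemma abs_exp_reducedLog_mul_sub_le (hb : b 0 ≠ 0) (hΛ : N * Z * |linForm b| ≤ 1)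
    (hm : m ∈ expBox N) (hz : z ∈ Set.Icc 0 Z) :
    |Real.exp (reducedLog b m * z) - Real.exp (logGenPow m * z)| ≤
      N * Z * |linForm b| / 4 * Real.exp (0.00851 * N * Z) := by
  set v : ℝ := -(m 0 * linForm b / b 0 * z) with hv
  have hvabs : |v| ≤ N * Z * |linForm b| / 142 := by
    rw [hv, abs_neg, abs_mul, abs_of_nonneg hz.1]
    calc |m 0 * linForm b / b 0| * z ≤ N / 142 * |linForm b| * Z :=
          mul_le_mul (abs_mul_linForm_div_le hb hm) hz.2 hz.1 (by positivity)
      _ = N * Z * |linForm b| / 142 := by ring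
  have hsplit : Real.exp (reducedLog b m * z) - Real.exp (logGenPow m * z) =
      (Real.exp v - 1) * Real.exp (logGenPow m * z) := by
    rw [sub_one_mul, ← Real.exp_add, hv, reducedLog]
    ring_nf
  have hexpv : |Real.exp v - 1| ≤ N * Z * |linForm b| / 4 := by
    have := abs_nonneg v
    linarith [Real.abs_exp_sub_one_le (x := v) (by linarith)]
  rw [hsplit, abs_mul, abs_of_pos (Real.exp_pos (logGenPow m * z))]
  exact mul_le_mul hexpv (exp_logGenPow_mul_le hm hz) (Real.exp_pos _).le
    ((abs_nonneg _).trans hexpv)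

lemma exp_reducedLog_mul_le (hb : b 0 ≠ 0) (hΛ : N * Z * |linForm b| ≤ 1) (hm : m ∈ expBox N)
    (hz : z ∈ Set.Icc 0 Z) :
    Real.exp (reducedLog b m * z) ≤ 2 * Real.exp (0.00851 * N * Z) := by
  have hdiff := (abs_le.mp (abs_exp_reducedLog_mul_sub_le hb hΛ hm hz)).2
  have hle := exp_logGenPow_mul_le hm hz
  nlinarith [Real.exp_pos (0.00851 * N * Z)]

lemma prod_sqrt_gen_pow_eq_exp (m : Fin 4 → ℕ) (r : ℕ) :
    ∏ i, √(gen tribRoot i) ^ ((2 * r + 1) * m i) = Real.exp (logGenPow m * (r + 1 / 2)) := by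
  rw [logGenPow, sum_mul, Real.exp_sum]
  refine prod_congr rfl fun i _ => ?_
  rw [← exp_logGen, ← Real.exp_half, ← Real.exp_nat_mul]
  push_cast
  ring_nf

lemma prod_sqrt_norm_gen_pow_le_exp {z : ℂ} (hz : z ^ 3 = z ^ 2 + z + 1) (hm : m ∈ expBox N)
    (k : ℕ) : ∏ i, √‖gen z i‖ ^ (k * m i) ≤ Real.exp (0.00851 * N * (k / 2)) := by
  have hsq : (∏ i, √‖gen z i‖ ^ m i) ^ 2 = ∏ i, ‖gen z i‖ ^ m i := by
    simp only [← prod_pow, pow_right_comm _ (m _) 2, Real.sq_sqrt (norm_nonneg _)]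
  have hle : ∏ i, √‖gen z i‖ ^ m i ≤ Real.exp (0.00851 * N / 2) := by
    refine le_of_sq_le_sq ?_ (Real.exp_pos _).le
    rw [hsq, ← Real.exp_nat_mul, Nat.cast_two, two_mul, add_halves]
    exact prod_norm_gen_pow_le_exp hz hm
  calc ∏ i, √‖gen z i‖ ^ (k * m i) = (∏ i, √‖gen z i‖ ^ m i) ^ k := by
        simp only [← prod_pow, ← pow_mul, mul_comm k]
    _ ≤ Real.exp (0.00851 * N / 2) ^ k :=
        pow_le_pow_left₀ (prod_nonneg fun _ _ => by positivity) hle k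
    _ = Real.exp (0.00851 * N * (k / 2)) := by rw [← Real.exp_nat_mul]; ring_nf

lemma one_half_le_abs_sub_of_mem_oddNodes {R : ℕ} {s : ℝ} (hs : s ∈ oddNodes R) (r : ℕ) :
    1 / 2 ≤ |(r + 1 / 2 : ℝ) - s| := by
  obtain ⟨i, -, rfl⟩ := mem_oddNodes.mp hs
  have hodd : (1 : ℝ) ≤ |((2 * r + 1 - 2 * (2 * i + 1) : ℤ) : ℝ)| :=
    mod_cast Int.one_le_abs (z := 2 * r + 1 - 2 * (2 * i + 1)) (by omega)
  have hdouble : ((2 * r + 1 - 2 * (2 * i + 1) : ℤ) : ℝ) =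
      2 * ((r + 1 / 2 : ℝ) - (2 * i + 1)) := by push_cast; ring
  rw [hdouble, abs_mul, abs_two] at hodd
  linarith

/-- The `k`-th derivative of the auxiliary function `∑ aₘ exp(ωₘ z)`, where `ωₘ` are the reduced
logarithms. -/
noncomputable def auxFun (b : Fin 4 → ℤ) (a : (Fin 4 → ℕ) → ℤ) (N k : ℕ) (z : ℝ) : ℝ :=
  ∑ m ∈ expBox N, a m * (reducedLog b m ^ k * Real.exp (reducedLog b m * z))

variable {a : (Fin 4 → ℕ) → ℤ} {X : ℝ}

lemma hasDerivAt_auxFun (k : ℕ) (z : ℝ) :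
    HasDerivAt (auxFun b a N k) (auxFun b a N (k + 1) z) z := by
  refine HasDerivAt.fun_sum fun m _ => ?_
  have hexp : HasDerivAt (fun x => Real.exp (reducedLog b m * x))
      (Real.exp (reducedLog b m * z) * reducedLog b m) z := (hasDerivAt_const_mul _).exp
  rw [pow_succ, mul_assoc, mul_comm (reducedLog b m) (Real.exp _)]
  exact (hexp.const_mul _).const_mul _

lemma abs_auxFun_le (hb : b 0 ≠ 0) (hΛ : |linForm b| ≤ 1e-5) (hΛ' : N * Z * |linForm b| ≤ 1)
    (hX : (∑ m ∈ expBox N, |(a m : ℝ)|) * Real.exp (0.00851 * N * Z) ≤ X)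
    (hz : z ∈ Set.Icc 0 Z) (k : ℕ) : |auxFun b a N k z| ≤ (0.00975 * N) ^ k * 2 * X := by
  refine abs_sum_mul_le hX (by positivity) fun m hm => ?_
  rw [abs_mul, abs_pow, Real.abs_exp, mul_assoc]
  exact mul_le_mul (pow_le_pow_left₀ (abs_nonneg _) (abs_reducedLog_le hb hΛ hm) _)
    (exp_reducedLog_mul_le hb hΛ' hm hz) (Real.exp_pos _).le (by positivity)

lemma abs_auxFun_le_of_sum_eq_zero (hb : b 0 ≠ 0) (hΛ : |linForm b| ≤ 1e-5)
    (hΛ' : N * Z * |linForm b| ≤ 1)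
    (hX : (∑ m ∈ expBox N, |(a m : ℝ)|) * Real.exp (0.00851 * N * Z) ≤ X)
    {s : ℕ} (hs : (s : ℝ) ≤ Z) {k : ℕ}
    (hzero : ∑ m ∈ expBox N, (a m : ℝ) * reducedLog b m ^ k * genPow m ^ s = 0) :
    |auxFun b a N k s| ≤ (N / 2) ^ k * (N * Z * |linForm b| / 4) * X := by
  have hZ : 0 ≤ Z := s.cast_nonneg.trans hs
  have hsub : auxFun b a N k s = ∑ m ∈ expBox N, a m * (reducedLog b m ^ k *
      (Real.exp (reducedLog b m * s) - Real.exp (logGenPow m * s))) := by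
    simp only [mul_sub, sum_sub_distrib, ← genPow_pow_eq_exp, ← mul_assoc, hzero, sub_zero, auxFun]
  rw [hsub]
  refine abs_sum_mul_le hX (by positivity) fun m hm => ?_
  rw [abs_mul, abs_pow, mul_assoc]
  refine mul_le_mul (pow_le_pow_left₀ (abs_nonneg _) ?_ _)
    (abs_exp_reducedLog_mul_sub_le hb hΛ' hm ⟨s.cast_nonneg, hs⟩) (abs_nonneg _) (by positivity)
  linarith [abs_reducedLog_le hb hΛ hm, N.cast_nonneg (α := ℝ)]

lemma sum_jets_auxFun_le (hb : b 0 ≠ 0) (hΛ : |linForm b| ≤ 1e-5) {τ R : ℕ}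
    (hΛ' : (2 * τ : ℕ) * (2 * R : ℝ) * |linForm b| ≤ 1)
    (hX : (∑ m ∈ expBox (2 * τ), |(a m : ℝ)|) *
      Real.exp (0.00851 * (2 * τ : ℕ) * (2 * R : ℝ)) ≤ X)
    (hzero : ∀ k < τ, ∀ r < R,
      ∑ m ∈ expBox (2 * τ), (a m : ℝ) * reducedLog b m ^ k * genPow m ^ (2 * r + 1) = 0)
    {s : ℝ} (hs : s ∈ oddNodes R) :
    ∑ k ∈ range τ, |auxFun b a (2 * τ) k s / k !| ≤
      Real.exp τ * (τ * R * |linForm b|) * X := by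
  obtain ⟨r, hr, rfl⟩ := mem_oddNodes.mp hs
  have hX0 : 0 ≤ X := le_trans (by positivity) hX
  have hterm : ∀ k ∈ range τ, |auxFun b a (2 * τ) k (2 * r + 1) / k !| ≤
      (τ : ℝ) ^ k / k ! * ((τ * R * |linForm b|) * X) := by
    intro k hk
    have hnode : ((2 * r + 1 : ℕ) : ℝ) ≤ 2 * R := mod_cast (by omega : 2 * r + 1 ≤ 2 * R)
    have hjet := abs_auxFun_le_of_sum_eq_zero hb hΛ hΛ' hX hnode (hzero k (mem_range.mp hk) r hr)
    push_cast at hjet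
    rw [abs_div, Nat.abs_cast, div_mul_eq_mul_div]
    refine div_le_div_of_nonneg_right (hjet.trans_eq ?_) (by positivity)
    rw [mul_div_cancel_left₀ (τ : ℝ) two_ne_zero]
    ring
  calc ∑ k ∈ range τ, |auxFun b a (2 * τ) k (2 * r + 1) / k !|
      ≤ (∑ k ∈ range τ, (τ : ℝ) ^ k / k !) * (τ * R * |linForm b| * X) := by
        rw [sum_mul]
        exact sum_le_sum hterm
    _ ≤ Real.exp τ * (τ * R * |linForm b| * X) :=
        mul_le_mul_of_nonneg_right (Real.sum_le_exp_of_nonneg τ.cast_nonneg τ) (by positivity)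
    _ = _ := by ring

/-- The loss factor in the extrapolation from vanishing to order `τ` at the first `R` odd integers
to the half-integers up to `2 * R`, when the linear form has absolute value `ε`. -/
noncomputable def extrapolationError (τ R : ℕ) (ε : ℝ) : ℝ :=
  2 * (0.039 ^ (τ * R) * (Real.exp 1 * R) ^ τ) +
    (R * (4 * R ^ 4 * 2 ^ R) ^ τ * Real.exp τ + 1) * (τ * R * ε)

lemma add_half_mem_Icc {r R : ℕ} (hr : r < 2 * R) : (r + 1 / 2 : ℝ) ∈ Set.Icc (0 : ℝ) (2 * R) := by
  have hr' : (r : ℝ) + 1 ≤ 2 * R := mod_cast hr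
  constructor <;> linarith [r.cast_nonneg (α := ℝ)]

lemma abs_sum_mul_prod_sqrt_gen_pow_le (hb : b 0 ≠ 0) (hΛ : |linForm b| ≤ 1e-5) {τ R : ℕ}
    (hτ : τ ≠ 0) (hR : R ≠ 0) (hΛ' : (2 * τ : ℕ) * (2 * R : ℝ) * |linForm b| ≤ 1)
    (hX : (∑ m ∈ expBox (2 * τ), |(a m : ℝ)|) *
      Real.exp (0.00851 * (2 * τ : ℕ) * (2 * R : ℝ)) ≤ X)
    (hzero : ∀ k < τ, ∀ r < R,
      ∑ m ∈ expBox (2 * τ), (a m : ℝ) * reducedLog b m ^ k * genPow m ^ (2 * r + 1) = 0)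
    {r : ℕ} (hr : r < 2 * R) :
    |∑ m ∈ expBox (2 * τ), (a m : ℝ) * ∏ i, √(gen tribRoot i) ^ ((2 * r + 1) * m i)| ≤
      X * extrapolationError τ R |linForm b| := by
  set x : ℝ := r + 1 / 2
  have hx : x ∈ Set.Icc (0 : ℝ) (2 * R) := add_half_mem_Icc hr
  have haux := abs_le_of_jets_at_oddNodes (fun k z _ => hasDerivAt_auxFun k z) hR hτ hx
    (fun s hs => one_half_le_abs_sub_of_mem_oddNodes hs r)
    (fun z hz => abs_auxFun_le hb hΛ hΛ' hX hz (τ * R))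
    (fun s hs => sum_jets_auxFun_le hb hΛ hΛ' hX hzero hs)
  have hdiff : |auxFun b a (2 * τ) 0 x -
      ∑ m ∈ expBox (2 * τ), (a m : ℝ) * ∏ i, √(gen tribRoot i) ^ ((2 * r + 1) * m i)| ≤
      (2 * τ : ℕ) * (2 * R) * |linForm b| / 4 * X := by
    simp only [auxFun, ← sum_sub_distrib, prod_sqrt_gen_pow_eq_exp, ← mul_sub, pow_zero, one_mul]
    exact abs_sum_mul_le hX (by positivity) fun m hm =>
      abs_exp_reducedLog_mul_sub_le hb hΛ' hm hx
  have hpow : (0.00975 * ((2 * τ : ℕ) : ℝ)) ^ (τ * R) * (2 / τ) ^ (τ * R) = 0.039 ^ (τ * R) := by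
    rw [← mul_pow]
    congr 1
    push_cast
    field_simp
    norm_num
  rw [abs_sub_comm] at hdiff
  refine (sub_le_iff_le_add.mp ((abs_sub_abs_le_abs_sub _ _).trans hdiff)).trans ?_
  refine (add_le_add_right haux _).trans_eq ?_
  rw [extrapolationError, ← hpow]
  push_cast
  ring

/-- The sum lies in the multiquadratic extension of the cubic field; it is too small for
Liouville's inequality. -/
lemma sum_mul_prod_sqrt_gen_pow_eq_zero (hb : b 0 ≠ 0) (hΛ : |linForm b| ≤ 1e-5) {τ R : ℕ}
    (hτ : τ ≠ 0) (hR : R ≠ 0) (hΛ' : (2 * τ : ℕ) * (2 * R : ℝ) * |linForm b| ≤ 1) (hX1 : 1 ≤ X)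
    (hX : (∑ m ∈ expBox (2 * τ), |(a m : ℝ)|) *
      Real.exp (0.00851 * (2 * τ : ℕ) * (2 * R : ℝ)) ≤ X)
    (hsmall : X ^ 48 * extrapolationError τ R |linForm b| < 1)
    (hzero : ∀ k < τ, ∀ r < R,
      ∑ m ∈ expBox (2 * τ), (a m : ℝ) * reducedLog b m ^ k * genPow m ^ (2 * r + 1) = 0)
    {r : ℕ} (hr : r < 2 * R) :
    ∑ m ∈ expBox (2 * τ), (a m : ℝ) * ∏ i, √(gen tribRoot i) ^ ((2 * r + 1) * m i) = 0 := by
  have hle := abs_sum_mul_prod_sqrt_gen_pow_le hb hΛ hτ hR hΛ' hX hzero hr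
  by_contra hne
  refine (one_le_abs_sum_mul_pow hX1 (fun z hz => ?_) hne).not_gt ?_
  · have hprod : ∀ m ∈ expBox (2 * τ), |∏ i, √‖gen z i‖ ^ ((2 * r + 1) * m i)| ≤
        1 * Real.exp (0.00851 * (2 * τ : ℕ) * (2 * R : ℝ)) := by
      intro m hm
      rw [one_mul, abs_of_nonneg (prod_nonneg fun _ _ => by positivity)]
      refine (prod_sqrt_norm_gen_pow_le_exp hz hm _).trans (Real.exp_le_exp.mpr ?_)
      refine mul_le_mul_of_nonneg_left ?_ (by positivity)
      push_cast
      linarith [(add_half_mem_Icc hr).2]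
    calc ∑ m ∈ expBox (2 * τ), |(a m : ℝ)| * ∏ i, √‖gen z i‖ ^ ((2 * r + 1) * m i)
        ≤ ∑ m ∈ expBox (2 * τ), |(a m : ℝ)| * |∏ i, √‖gen z i‖ ^ ((2 * r + 1) * m i)| :=
          sum_le_sum fun m _ => mul_le_mul_of_nonneg_left (le_abs_self _) (abs_nonneg _)
      _ ≤ 1 * X := sum_abs_mul_abs_le hX zero_le_one hprod
      _ = X := one_mul X
  · calc _ ≤ X * extrapolationError τ R |linForm b| * X ^ 47 := by gcongr
      _ = X ^ 48 * extrapolationError τ R |linForm b| := by ring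
      _ < 1 := hsmall

end Extrapolation

/-! ### The descent step -/

section Descent

open Finset

/-- The decomposition of an exponent vector as `ε + 2μ`, where `ε` is the indicator vector of the
set of indices with odd exponent. -/
def parityEquiv : Finset (Fin 4) × (Fin 4 → ℕ) ≃ (Fin 4 → ℕ) where
  toFun q i := (if i ∈ q.1 then 1 else 0) + 2 * q.2 i
  invFun m := (univ.filter fun i => m i % 2 = 1, fun i => m i / 2)
  left_inv := by
    rintro ⟨ε, μ⟩
    ext i <;> by_cases h : i ∈ ε <;> simp [h]; omega
  right_inv m := by
    ext i
    simp only [mem_filter, mem_univ, true_and]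
    split_ifs <;> omega

lemma parityEquiv_apply (ε : Finset (Fin 4)) (μ : Fin 4 → ℕ) (i : Fin 4) :
    parityEquiv (ε, μ) i = (if i ∈ ε then 1 else 0) + 2 * μ i := rfl

lemma mem_expBox_of_parityEquiv_mem {τ : ℕ} {q : Finset (Fin 4) × (Fin 4 → ℕ)}
    (hq : parityEquiv q ∈ expBox (2 * τ)) : q.2 ∈ expBox τ := by
  rw [mem_expBox] at hq ⊢
  intro i
  have hi : 2 * q.2 i ≤ 2 * τ / boxDen i := le_of_add_le_right (hq i)
  calc q.2 i ≤ 2 * τ / boxDen i / 2 := by omega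
    _ = τ / boxDen i := by
      rw [Nat.div_div_eq_div_mul, mul_comm (boxDen i), Nat.mul_div_mul_left _ _ two_pos]

lemma sum_expBox_two_mul {A : Type*} [AddCommMonoid A] {τ : ℕ} {F : (Fin 4 → ℕ) → A}
    (hF : ∀ m ∉ expBox (2 * τ), F m = 0) :
    ∑ m ∈ expBox (2 * τ), F m = ∑ ε : Finset (Fin 4), ∑ μ ∈ expBox τ, F (parityEquiv (ε, μ)) := by
  rw [← sum_product']
  refine sum_of_injOn parityEquiv.symm parityEquiv.symm.injective.injOn ?_ ?_ ?_
  · intro m hm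
    rw [SetLike.mem_coe, mem_product]
    exact ⟨mem_univ _, mem_expBox_of_parityEquiv_mem (by rwa [Equiv.apply_symm_apply])⟩
  · intro q _ hq
    exact hF _ fun hmem => hq ⟨_, hmem, parityEquiv.symm_apply_apply q⟩
  · intro m _
    exact congrArg F (parityEquiv.apply_symm_apply m).symm

lemma minor_parityEquiv (b : Fin 4 → ℤ) (ε : Finset (Fin 4)) (μ : Fin 4 → ℕ) (i : Fin 3) :
    minor b (parityEquiv (ε, μ)) i = minor b (parityEquiv (ε, 0)) i + 2 * minor b μ i := by
  simp only [minor, parityEquiv_apply, Pi.zero_apply]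
  push_cast
  ring

lemma prod_sqrt_gen_pow_parityEquiv (ε : Finset (Fin 4)) (μ : Fin 4 → ℕ) (r : ℕ) :
    ∏ i, √(gen tribRoot i) ^ ((2 * r + 1) * parityEquiv (ε, μ) i) =
      (∏ i ∈ ε, gen tribRoot i ^ r) * genPow μ ^ (2 * r + 1) * ∏ i ∈ ε, √(gen tribRoot i) := by
  have hsq (i : Fin 4) : √(gen tribRoot i) ^ 2 = gen tribRoot i :=
    Real.sq_sqrt (gen_tribRoot_pos i).le
  have hfactor (i : Fin 4) : √(gen tribRoot i) ^ ((2 * r + 1) * parityEquiv (ε, μ) i) =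
      (if i ∈ ε then gen tribRoot i ^ r * √(gen tribRoot i) else 1) *
        (gen tribRoot i ^ μ i) ^ (2 * r + 1) := by
    rw [parityEquiv_apply, mul_add, pow_add, mul_left_comm _ 2, pow_mul _ 2, hsq, ← pow_mul,
      mul_comm (μ i)]
    split_ifs
    · rw [mul_one, pow_succ, pow_mul, hsq]
    · rw [mul_zero, pow_zero]
  rw [prod_congr rfl fun i _ => hfactor i, prod_mul_distrib, prod_pow, ← genPow,
    prod_ite_mem, univ_inter, prod_mul_distrib]
  ring

/-- Kummer independence separates the parity classes. -/
lemma sum_parityClass_eq_zero {τ r : ℕ} {a : (Fin 4 → ℕ) → ℤ}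
    (hsupp : ∀ m ∉ expBox (2 * τ), a m = 0)
    (h : ∑ m ∈ expBox (2 * τ), (a m : ℝ) * ∏ i, √(gen tribRoot i) ^ ((2 * r + 1) * m i) = 0)
    (ε : Finset (Fin 4)) :
    ∑ μ ∈ expBox τ, (a (parityEquiv (ε, μ)) : ℝ) * genPow μ ^ (2 * r + 1) = 0 := by
  let C : Finset (Fin 4) → ℝ := fun ε => (∏ i ∈ ε, gen tribRoot i ^ r) *
    ∑ μ ∈ expBox τ, (a (parityEquiv (ε, μ)) : ℝ) * genPow μ ^ (2 * r + 1)
  have hgen (i : Fin 4) (k : ℕ) : gen tribRoot i ^ k ∈ tribField :=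
    pow_mem (gen_tribRoot_mem_tribField i) k
  have hC (ε : Finset (Fin 4)) : C ε ∈ tribField :=
    mul_mem (prod_mem fun i _ => hgen i r) <| sum_mem fun μ _ =>
      mul_mem (intCast_mem _ _) (pow_mem (prod_mem fun i _ => hgen i _) _)
  have hsum : ∑ ε : Finset (Fin 4), C ε * ∏ i ∈ ε, √(gen tribRoot i) = 0 := by
    rw [← h, sum_expBox_two_mul fun m hm => by rw [hsupp m hm, Int.cast_zero, zero_mul]]
    refine sum_congr rfl fun ε _ => ?_
    simp only [C, mul_sum, sum_mul, prod_sqrt_gen_pow_parityEquiv]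
    exact sum_congr rfl fun μ _ => by ring
  exact (mul_eq_zero.mp (eq_zero_of_sum_mul_prod_sqrt_gen_eq_zero hC hsum ε)).resolve_left
    (prod_pos fun i _ => pow_pos (gen_tribRoot_pos i) r).ne'

/-- Each minor of `b` and `μ` is an affine function of that of `b` and `ε + 2μ`, so induction on `s`
replaces the factors one at a time. -/
lemma sum_minorProd_mul_eq_zero_of_parityEquiv {b : Fin 4 → ℤ} {ε : Finset (Fin 4)}
    {S : Finset (Fin 4 → ℕ)} {F : (Fin 4 → ℕ) → ℝ} {d : ℕ}
    (h : ∀ s : Multiset (Fin 3), s.card ≤ d →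
      ∑ μ ∈ S, minorProd b s (parityEquiv (ε, μ)) * F μ = 0)
    {s : Multiset (Fin 3)} (hs : s.card ≤ d) : ∑ μ ∈ S, minorProd b s μ * F μ = 0 := by
  have hmixed : ∀ s s' : Multiset (Fin 3), s.card + s'.card ≤ d →
      ∑ μ ∈ S, (minorProd b s μ : ℝ) * minorProd b s' (parityEquiv (ε, μ)) * F μ = 0 := by
    intro s
    induction s using Multiset.induction_on with
    | empty => exact fun s' hs' => by simpa using h s' (by simpa using hs')
    | cons i s ih =>
      intro s' hs'
      rw [Multiset.card_cons] at hs'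
      have hcons := ih (i ::ₘ s') (by rw [Multiset.card_cons]; omega)
      have hself := ih s' (by omega)
      have hsplit (μ : Fin 4 → ℕ) : (minorProd b (i ::ₘ s) μ : ℝ) *
          minorProd b s' (parityEquiv (ε, μ)) * F μ =
          1 / 2 * (minorProd b s μ * minorProd b (i ::ₘ s') (parityEquiv (ε, μ)) * F μ) -
          minor b (parityEquiv (ε, 0)) i / 2 *
            (minorProd b s μ * minorProd b s' (parityEquiv (ε, μ)) * F μ) := by
        rw [minorProd_cons, minorProd_cons, minor_parityEquiv]
        push_cast
        ring
      simp only [hsplit, sum_sub_distrib, ← mul_sum, hcons, hself, mul_zero, sub_zero]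
  simpa using hmixed s 0 (by simpa using hs)

/-- Nonzero integral coefficients, supported in the box of size `N` and with sum of absolute values
at most `P`, satisfying the vanishing conditions of order `N` at the first `R` odd integers. This
is the state of the descent. -/
structure IsAuxCoeff (b : Fin 4 → ℤ) (N R : ℕ) (P : ℝ) (p : (Fin 4 → ℕ) → ℤ) : Prop where
  vanishes : VanishesAtOdd b p N R
  eq_zero_of_notMem : ∀ m ∉ expBox N, p m = 0
  ne_zero : p ≠ 0
  sum_abs_le : ∑ m ∈ expBox N, |(p m : ℝ)| ≤ P

variable {b : Fin 4 → ℤ} {p : (Fin 4 → ℕ) → ℤ} {R : ℕ} {P : ℝ}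

lemma IsAuxCoeff.sum_half_eq_zero {τ : ℕ} (hp : IsAuxCoeff b (2 * τ) R P p) (hb : b 0 ≠ 0)
    (hτ : τ ≠ 0) (hR : R ≠ 0) {W X : ℝ} (hW1 : 1 ≤ W)
    (hW : ∀ m ∈ expBox (2 * τ), ∀ i, |(minor b m i : ℝ)| ≤ W) (hX1 : 1 ≤ X)
    (hX : P * W ^ τ * Real.exp (0.00851 * (2 * τ : ℕ) * (2 * R)) ≤ X)
    (hΛ : |linForm b| ≤ 1e-5) (hΛ' : (2 * τ : ℕ) * (2 * R : ℝ) * |linForm b| ≤ 1)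
    (hsmall : X ^ 48 * extrapolationError τ R |linForm b| < 1)
    {s : Multiset (Fin 3)} (hs : s.card ≤ τ) {r : ℕ} (hr : r < 2 * R) :
    ∑ m ∈ expBox (2 * τ), ((p m * minorProd b s m : ℤ) : ℝ) *
      ∏ i, √(gen tribRoot i) ^ ((2 * r + 1) * m i) = 0 := by
  refine sum_mul_prod_sqrt_gen_pow_eq_zero hb hΛ hτ hR hΛ' hX1 ?_ hsmall (fun k hk r hr => ?_) hr
  · refine le_trans (mul_le_mul_of_nonneg_right ?_ (Real.exp_pos _).le) hX
    calc ∑ m ∈ expBox (2 * τ), |((p m * minorProd b s m : ℤ) : ℝ)|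
        ≤ ∑ m ∈ expBox (2 * τ), |(p m : ℝ)| * W ^ τ := by
          refine sum_le_sum fun m hm => ?_
          rw [Int.cast_mul, abs_mul]
          exact mul_le_mul_of_nonneg_left (abs_minorProd_le hW1 (hW m hm) hs) (abs_nonneg _)
      _ ≤ P * W ^ τ := by
          rw [← sum_mul]
          exact mul_le_mul_of_nonneg_right hp.sum_abs_le (by positivity)
  · simp only [Int.cast_mul]
    exact hp.vanishes.sum_reducedLog_pow_eq_zero hb (by omega) hr

/-- One step of the descent: the size of the box and the order of vanishing are halved while the
number of nodes doubles. -/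
lemma IsAuxCoeff.exists_half {τ : ℕ} (hp : IsAuxCoeff b (2 * τ) R P p) (hb : b 0 ≠ 0)
    (hτ : τ ≠ 0) (hR : R ≠ 0) {W X : ℝ} (hW1 : 1 ≤ W)
    (hW : ∀ m ∈ expBox (2 * τ), ∀ i, |(minor b m i : ℝ)| ≤ W) (hX1 : 1 ≤ X)
    (hX : P * W ^ τ * Real.exp (0.00851 * (2 * τ : ℕ) * (2 * R)) ≤ X)
    (hΛ : |linForm b| ≤ 1e-5) (hΛ' : (2 * τ : ℕ) * (2 * R : ℝ) * |linForm b| ≤ 1)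
    (hsmall : X ^ 48 * extrapolationError τ R |linForm b| < 1) :
    ∃ q, IsAuxCoeff b τ (2 * R) P q := by
  obtain ⟨m₀, hm₀⟩ := Function.ne_iff.mp hp.ne_zero
  set ε := (parityEquiv.symm m₀).1 with hε
  refine ⟨fun μ => p (parityEquiv (ε, μ)), ?_, ?_, ?_, ?_⟩
  · intro s hs r hr
    have hclass : ∀ s : Multiset (Fin 3), s.card ≤ τ →
        ∑ μ ∈ expBox τ, minorProd b s (parityEquiv (ε, μ)) *
          (p (parityEquiv (ε, μ)) * genPow μ ^ (2 * r + 1)) = 0 := by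
      intro s hs
      have hsum := sum_parityClass_eq_zero
        (fun m hm => by rw [hp.eq_zero_of_notMem m hm, zero_mul])
        (hp.sum_half_eq_zero hb hτ hR hW1 hW hX1 hX hΛ hΛ' hsmall hs hr) ε
      rw [← hsum]
      refine sum_congr rfl fun μ _ => ?_
      push_cast
      ring
    rw [← sum_minorProd_mul_eq_zero_of_parityEquiv hclass hs]
    exact sum_congr rfl fun μ _ => by ring
  · exact fun μ hμ => hp.eq_zero_of_notMem _ fun hm => hμ (mem_expBox_of_parityEquiv_mem hm)
  · refine Function.ne_iff.mpr ⟨(parityEquiv.symm m₀).2, ?_⟩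
    simpa [hε] using hm₀
  · refine le_trans ?_ hp.sum_abs_le
    rw [sum_expBox_two_mul fun m hm => by rw [hp.eq_zero_of_notMem m hm, Int.cast_zero, abs_zero]]
    exact single_le_sum (f := fun ε => ∑ μ ∈ expBox τ, |(p (parityEquiv (ε, μ)) : ℝ)|)
      (fun ε _ => sum_nonneg fun _ _ => abs_nonneg _) (mem_univ ε)

lemma expBox_one : expBox 1 = {0} := by
  ext m
  rw [mem_expBox, mem_singleton, funext_iff]
  refine forall_congr' fun i => ?_
  have hdiv : 1 / boxDen i = 0 := by fin_cases i <;> rfl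
  rw [hdiv, Nat.le_zero, Pi.zero_apply]

lemma not_isAuxCoeff_one (hR : R ≠ 0) : ¬IsAuxCoeff b 1 R P p := by
  intro hp
  have hsum := hp.vanishes 0 (by simp) 0 (by omega)
  rw [expBox_one, sum_singleton, minorProd_zero, Int.cast_one, mul_one] at hsum
  have hp0 : p 0 = 0 :=
    Int.cast_eq_zero.mp ((mul_eq_zero.mp hsum).resolve_right (pow_pos (genPow_pos 0) _).ne')
  refine hp.ne_zero (funext fun m => ?_)
  by_cases hm : m = 0
  · rw [hm, hp0, Pi.zero_apply]
  · exact hp.eq_zero_of_notMem m (by rwa [expBox_one, mem_singleton])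

end Descent

/-! ### The auxiliary coefficients from Siegel's lemma -/

section Coordinates

open Polynomial

lemma aeval_eq_sum_coeff_modByMonic_tribPoly {B : Type*} [CommRing B] {z : B}
    (hz : z ^ 3 = z ^ 2 + z + 1) (f : ℤ[X]) :
    aeval z f = ∑ j : Fin 3, ((f %ₘ tribPoly ℤ).coeff j : B) * z ^ (j : ℕ) := by
  have hdeg : (f %ₘ tribPoly ℤ).natDegree < 3 := by
    have hlt := natDegree_modByMonic_lt f (monic_tribPoly ℤ) fun h => by
      simpa [h] using natDegree_tribPoly ℤ
    rwa [natDegree_tribPoly] at hlt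
  rw [← aeval_modByMonic_eq_self_of_root (aeval_tribPoly_eq_zero_iff.mpr hz),
    aeval_eq_sum_range' hdeg, Finset.sum_range]
  simp only [zsmul_eq_mul]

/-- The coordinates in the basis `1, α, α²` of the power `genPow m ^ k`. -/
noncomputable def genPowCoord (m : Fin 4 → ℕ) (k : ℕ) (j : Fin 3) : ℤ :=
  ((∏ i, gen (X : ℤ[X]) i ^ m i) ^ k %ₘ tribPoly ℤ).coeff j

lemma prod_gen_pow_pow_eq_sum {B : Type*} [CommRing B] {z : B} (hz : z ^ 3 = z ^ 2 + z + 1)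
    (m : Fin 4 → ℕ) (k : ℕ) :
    (∏ i, gen z i ^ m i) ^ k = ∑ j, (genPowCoord m k j : B) * z ^ (j : ℕ) := by
  have hgen (i : Fin 4) : aeval z (gen (X : ℤ[X]) i) = gen z i := by
    simpa using map_gen (aeval z).toRingHom (X : ℤ[X]) i
  simp only [genPowCoord, ← aeval_eq_sum_coeff_modByMonic_tribPoly hz, map_pow, map_prod, hgen]

lemma exists_complex_root : ∃ z : ℂ, z ^ 3 = z ^ 2 + z + 1 ∧ z.re = (1 - tribRoot) / 2 ∧
    0.6 ≤ z.im ∧ z.im ^ 2 ≤ 0.49 := by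
  have hα := lt_tribRoot
  have hα' := tribRoot_lt
  have hα2 := sq_tribRoot_mem_Ioo
  have hcube := tribRoot_cube
  have hb : √((3 * tribRoot ^ 2 - 2 * tribRoot - 5) / 4) ^ 2 =
      (3 * tribRoot ^ 2 - 2 * tribRoot - 5) / 4 := Real.sq_sqrt (by linarith [hα2.1])
  refine ⟨⟨(1 - tribRoot) / 2, √((3 * tribRoot ^ 2 - 2 * tribRoot - 5) / 4)⟩, ?_, rfl,
    Real.le_sqrt_of_sq_le (by linarith [hα2.1]), hb.trans_le (by linarith [hα2.2])⟩
  generalize √((3 * tribRoot ^ 2 - 2 * tribRoot - 5) / 4) = b at hb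
  refine Complex.ext ?_ ?_ <;>
  simp only [pow_succ, pow_zero, one_mul, Complex.mul_re, Complex.mul_im, Complex.add_re,
    Complex.add_im, Complex.one_re, Complex.one_im, add_zero]
  · linear_combination (3 * tribRoot - 1) / 2 * hb + hcube
  · linear_combination -b * hb

lemma abs_coord_le {u v w α a b X : ℝ} (hα : 1.8392867 ≤ α) (hα' : α ≤ 1.8392868)
    (ha : a = (1 - α) / 2) (hb : 0.6 ≤ b) (hb' : b ^ 2 ≤ 0.49)
    (hreal : |u + v * α + w * α ^ 2| ≤ X) (hre : |u + v * a + w * (a ^ 2 - b ^ 2)| ≤ X)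
    (him : |b * (v + 2 * a * w)| ≤ X) : |u| ≤ 4 * X ∧ |v| ≤ 4 * X ∧ |w| ≤ 4 * X := by
  have hX : 0 ≤ X := (abs_nonneg _).trans hreal
  have haabs : |a| ≤ 0.42 := abs_le.mpr ⟨by linarith, by linarith⟩
  have ha2 : a ^ 2 ≤ 0.42 ^ 2 := sq_le_sq' (abs_le.mp haabs).1 (abs_le.mp haabs).2
  have hdist : 5 ≤ (α - a) ^ 2 + b ^ 2 := by nlinarith
  have hcoeff : |a ^ 2 - b ^ 2| ≤ 0.49 :=
    abs_le.mpr ⟨by linarith [sq_nonneg a], by linarith [sq_nonneg b]⟩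
  have him' : |v + 2 * a * w| ≤ 5 / 3 * X := by
    rw [abs_mul, abs_of_pos (by linarith)] at him
    nlinarith [abs_nonneg (v + 2 * a * w)]
  have hw : |w| ≤ 1.2 * X := by
    have hle : |w * ((α - a) ^ 2 + b ^ 2)| ≤ X + X + 2.3 * (5 / 3 * X) := by
      rw [show w * ((α - a) ^ 2 + b ^ 2) = (u + v * α + w * α ^ 2) -
        (u + v * a + w * (a ^ 2 - b ^ 2)) - (α - a) * (v + 2 * a * w) by ring]
      refine (abs_sub _ _).trans (add_le_add ((abs_sub _ _).trans (add_le_add hreal hre)) ?_)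
      rw [abs_mul, abs_of_pos (by linarith)]
      exact mul_le_mul (by linarith) him' (abs_nonneg _) (by norm_num)
    rw [abs_mul, abs_of_pos (a := (α - a) ^ 2 + b ^ 2) (by linarith)] at hle
    linarith [mul_le_mul_of_nonneg_left hdist (abs_nonneg w)]
  have hv : |v| ≤ 2.8 * X := by
    have haw : |2 * a * w| ≤ 2 * 0.42 * (1.2 * X) := by
      rw [abs_mul, abs_mul, abs_two]
      gcongr
    have := (abs_sub (v + 2 * a * w) (2 * a * w)).trans (add_le_add him' haw)
    rw [add_sub_cancel_right] at this
    linarith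
  have hu : |u| ≤ 4 * X := by
    have hav : |a * v| ≤ 0.42 * (2.8 * X) := by
      rw [abs_mul]
      gcongr
    have hcw : |(a ^ 2 - b ^ 2) * w| ≤ 0.49 * (1.2 * X) := by
      rw [abs_mul]
      gcongr
    calc |u| = |u + v * a + w * (a ^ 2 - b ^ 2) - a * v - (a ^ 2 - b ^ 2) * w| := by ring_nf
      _ ≤ X + 0.42 * (2.8 * X) + 0.49 * (1.2 * X) :=
        (abs_sub _ _).trans (add_le_add ((abs_sub _ _).trans (add_le_add hre hav)) hcw)
      _ ≤ 4 * X := by linarith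
  exact ⟨hu, by linarith, by linarith⟩

lemma abs_coord_le_of_norm_le {c : Fin 3 → ℤ} {X : ℝ}
    (h : ∀ z : ℂ, z ^ 3 = z ^ 2 + z + 1 → ‖∑ j, (c j : ℂ) * z ^ (j : ℕ)‖ ≤ X) (j : Fin 3) :
    |(c j : ℝ)| ≤ 4 * X := by
  obtain ⟨z, hz, hzre, hzim, hzim'⟩ := exists_complex_root
  have hreal := h tribRoot (by exact_mod_cast tribRoot_cube)
  have hcomplex := h z hz
  simp only [Fin.sum_univ_three, Fin.coe_ofNat_eq_mod, Nat.zero_mod, Nat.one_mod, Nat.reduceMod,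
    pow_zero, pow_one, mul_one] at hreal hcomplex
  have hre := (Complex.abs_re_le_norm _).trans hcomplex
  have him := (Complex.abs_im_le_norm _).trans hcomplex
  simp only [pow_two, Complex.add_re, Complex.add_im, Complex.mul_re, Complex.mul_im,
    Complex.intCast_re, Complex.intCast_im, zero_mul, add_zero, zero_add, sub_zero] at hre him
  obtain ⟨hu, hv, hw⟩ := abs_coord_le lt_tribRoot.le tribRoot_lt.le hzre hzim hzim' (X := X)
    (u := c 0) (v := c 1) (w := c 2) (by exact_mod_cast hreal)
    ((congrArg abs (by ring)).trans_le hre)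
    ((congrArg abs (by ring)).trans_le him)
  fin_cases j
  exacts [hu, hv, hw]

lemma abs_genPowCoord_le {N : ℕ} {m : Fin 4 → ℕ} (hm : m ∈ expBox N) (k : ℕ) (j : Fin 3) :
    |(genPowCoord m k j : ℝ)| ≤ 4 * Real.exp (0.00851 * N * k) := by
  refine abs_coord_le_of_norm_le (fun z hz => ?_) j
  rw [← prod_gen_pow_pow_eq_sum hz, mul_comm _ (k : ℝ), Real.exp_nat_mul, norm_pow, norm_prod]
  simp only [norm_pow]
  exact pow_le_pow_left₀ (by positivity) (prod_norm_gen_pow_le_exp hz hm) k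

end Coordinates

section Siegel

open Finset Matrix

/-- Siegel's lemma for systems with more than `c + 1` times as many unknowns as equations. -/
lemma exists_ne_zero_int_vec_abs_le {α β : Type*} [Fintype α] [Fintype β] [Nonempty α]
    {A : Matrix α β ℤ} {c : ℕ} (hc : c ≠ 0)
    (hcard : (c + 1) * Fintype.card α ≤ Fintype.card β) {Y : ℝ} (hY : 1 ≤ Y)
    (hA : ∀ i j, |(A i j : ℝ)| ≤ Y) :
    ∃ t : β → ℤ, t ≠ 0 ∧ A *ᵥ t = 0 ∧
      ∀ j, |(t j : ℝ)| ≤ (Fintype.card β * Y) ^ (1 / c : ℝ) := by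
  let _ : SeminormedAddCommGroup (Matrix α β ℤ) := Matrix.seminormedAddCommGroup
  have hc' : 0 < (c : ℝ) := by positivity
  have hα : 0 < Fintype.card α := Fintype.card_pos
  have hα' : (1 : ℝ) ≤ Fintype.card α := by exact_mod_cast hα
  have hcard' : (c + 1) * (Fintype.card α : ℝ) ≤ Fintype.card β := by exact_mod_cast hcard
  have hαβ : (Fintype.card α : ℝ) < Fintype.card β := by nlinarith
  have hnorm : ‖A‖ ≤ Y := by
    rw [Matrix.norm_le_iff (by linarith)]
    exact fun i j => (Int.norm_eq_abs _).trans_le (hA i j)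
  obtain ⟨t, ht, hAt, htn⟩ :=
    Int.Matrix.exists_ne_zero_int_vec_norm_le A (by exact_mod_cast hαβ) hα
  refine ⟨t, ht, hAt, fun j => ?_⟩
  rw [← Int.norm_eq_abs]
  refine (norm_le_pi_norm t j).trans (htn.trans ?_)
  have hexp : (Fintype.card α : ℝ) / (Fintype.card β - Fintype.card α) ≤ 1 / c := by
    rw [div_le_div_iff₀ (by linarith) hc']
    linarith
  have : 0 ≤ (Fintype.card α : ℝ) / (Fintype.card β - Fintype.card α) :=
    div_nonneg (by positivity) (by linarith)
  calc _ ≤ (Fintype.card β * Y) ^ ((Fintype.card α : ℝ) / (Fintype.card β - Fintype.card α)) := by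
        gcongr
        exact max_le hY hnorm
    _ ≤ _ := Real.rpow_le_rpow_of_exponent_le (by nlinarith) hexp

lemma card_sigma_sym (n N : ℕ) :
    Fintype.card (Σ k : Fin (N + 1), Sym (Fin (n + 1)) k) = (N + n + 1).choose (n + 1) := by
  rw [Fintype.card_sigma, ← Nat.sum_range_add_choose, sum_range]
  refine sum_congr rfl fun k _ => ?_
  rw [Sym.card_sym_eq_choose, Fintype.card_fin, add_right_comm, Nat.add_sub_cancel, add_comm n,
    Nat.choose_symm_add]

/-- The matrix of the linear system `VanishesAtOdd b p N R` in the coefficients `p`, split into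
coordinates over `1, α, α²`. -/
noncomputable def siegelMatrix (b : Fin 4 → ℤ) (N R : ℕ) :
    Matrix ((Σ k : Fin (N + 1), Sym (Fin 3) k) × Fin R × Fin 3) (expBox N) ℤ :=
  fun e m => minorProd b e.1.2 m * genPowCoord m (2 * e.2.1 + 1) e.2.2

variable {b : Fin 4 → ℤ} {N R : ℕ}

lemma abs_siegelMatrix_le {W : ℝ} (hW1 : 1 ≤ W)
    (hW : ∀ m ∈ expBox N, ∀ i, |(minor b m i : ℝ)| ≤ W) (e m) :
    |(siegelMatrix b N R e m : ℝ)| ≤ 4 * W ^ N * Real.exp (0.00851 * N * (2 * R)) := by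
  obtain ⟨⟨k, s⟩, r, j⟩ := e
  have hr : ((2 * r + 1 : ℕ) : ℝ) ≤ 2 * R := by exact_mod_cast (by omega : 2 * (r : ℕ) + 1 ≤ 2 * R)
  rw [siegelMatrix, Int.cast_mul, abs_mul, mul_comm 4, mul_assoc]
  gcongr
  · exact abs_minorProd_le hW1 (hW m m.2) (by rw [Sym.card_coe]; omega)
  · refine (abs_genPowCoord_le m.2 _ _).trans ?_
    gcongr

lemma vanishesAtOdd_of_mulVec_eq_zero {p : (Fin 4 → ℕ) → ℤ}
    (h : siegelMatrix b N R *ᵥ (fun m => p m) = 0) : VanishesAtOdd b p N R := by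
  intro s hs r hr
  have hcoord (j : Fin 3) :
      ∑ m ∈ expBox N, (p m : ℝ) * minorProd b s m * genPowCoord m (2 * r + 1) j = 0 := by
    have hrow := congrFun h (⟨⟨s.card, Nat.lt_succ_of_le hs⟩, ⟨s, rfl⟩⟩, ⟨r, hr⟩, j)
    rw [← sum_coe_sort]
    simp only [mulVec, dotProduct, siegelMatrix, Sym.coe_mk, Pi.zero_apply] at hrow
    have hrow' := congrArg (Int.cast : ℤ → ℝ) hrow
    push_cast at hrow'
    rw [← hrow']
    exact sum_congr rfl fun m _ => by ring
  calc ∑ m ∈ expBox N, (p m : ℝ) * minorProd b s m * genPow m ^ (2 * r + 1)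
      = ∑ j : Fin 3, (∑ m ∈ expBox N, (p m : ℝ) * minorProd b s m *
          genPowCoord m (2 * r + 1) j) * tribRoot ^ (j : ℕ) := by
        simp only [genPow, prod_gen_pow_pow_eq_sum tribRoot_cube, mul_sum, sum_mul]
        rw [sum_comm]
        simp only [mul_assoc]
    _ = 0 := by simp only [hcoord, zero_mul, sum_const_zero]

lemma exists_isAuxCoeff (hR : R ≠ 0) {W : ℝ} (hW1 : 1 ≤ W)
    (hW : ∀ m ∈ expBox N, ∀ i, |(minor b m i : ℝ)| ≤ W)
    (hcard : 7 * (3 * R * (N + 3).choose 3) ≤ #(expBox N)) :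
    ∃ p, IsAuxCoeff b N R (#(expBox N) *
      (#(expBox N) * (4 * W ^ N * Real.exp (0.00851 * N * (2 * R)))) ^ (1 / 6 : ℝ)) p := by
  have : NeZero R := ⟨hR⟩
  have : Nonempty ((Σ k : Fin (N + 1), Sym (Fin 3) k) × Fin R × Fin 3) := ⟨⟨0, ⟨0, rfl⟩⟩, 0, 0⟩
  have hrows : Fintype.card ((Σ k : Fin (N + 1), Sym (Fin 3) k) × Fin R × Fin 3) =
      3 * R * (N + 3).choose 3 := by
    rw [Fintype.card_prod, card_sigma_sym, Fintype.card_prod, Fintype.card_fin, Fintype.card_fin]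
    ring
  have hY : 1 ≤ 4 * W ^ N * Real.exp (0.00851 * N * (2 * R)) :=
    one_le_mul_of_one_le_of_one_le (by linarith [one_le_pow₀ hW1 (n := N)])
      (Real.one_le_exp (by positivity))
  obtain ⟨t, ht, hAt, htY⟩ := exists_ne_zero_int_vec_abs_le (A := siegelMatrix b N R) (c := 6)
    (by norm_num) (by rwa [hrows, Fintype.card_coe]) hY (abs_siegelMatrix_le hW1 hW)
  rw [Fintype.card_coe] at htY
  have hext (m : expBox N) : Function.extend Subtype.val t 0 (m : Fin 4 → ℕ) = t m :=
    Subtype.val_injective.extend_apply t 0 m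
  refine ⟨Function.extend Subtype.val t 0, ?_, fun m hm => ?_, ?_, ?_⟩
  · refine vanishesAtOdd_of_mulVec_eq_zero ?_
    simpa only [hext] using hAt
  · exact Function.extend_apply' _ _ _ (by rintro ⟨m, rfl⟩; exact hm m.2)
  · intro h
    exact ht (funext fun m => by rw [← hext, h, Pi.zero_apply, Pi.zero_apply])
  · rw [← nsmul_eq_mul]
    refine sum_le_card_nsmul _ _ _ fun m hm => ?_
    have := htY ⟨m, hm⟩
    rwa [← hext, Nat.cast_ofNat] at this

end Siegel

/-! ### The descent -/

section Descent

/-- The numerical conditions under which a descent step is possible, for vanishing conditions of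
order `N` at `R` points and linear forms with coefficients bounded by `B`. Since a step halves `N`
and doubles `R`, the product `G` is an invariant. -/
structure DescentScale (B G : ℝ) (N R : ℕ) : Prop where
  mul_eq : (N : ℝ) * R = G
  le_invariant : 1e15 ≤ G
  two_mul_le : 2 * G ≤ B
  log_le : 100 * Real.log B ≤ R

lemma le_exp_of_le {G : ℝ} (hG : 1e15 ≤ G) : G ≤ Real.exp (1e-7 * G) := by
  have hquad := Real.quadratic_le_exp_of_nonneg (x := 1e-7 * G) (by positivity)
  refine le_trans ?_ hquad
  nlinarith

lemma contraction_le_exp : (0.039 : ℝ) ≤ Real.exp (-3.24) := by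
  rw [← Real.log_le_iff_le_exp (by norm_num),
    show (0.039 : ℝ) = 1.248 / 2 ^ 5 by norm_num, Real.log_div (by norm_num) (by norm_num),
    Real.log_pow]
  have hlog : Real.log 1.248 ≤ 0.225 := by
    refine log_le_of_le_sum 3 (by norm_num) (by norm_num) ?_
    norm_num [Finset.sum_range_succ, Nat.factorial]
  push_cast
  linarith [Real.log_two_gt_d9]

namespace DescentScale

variable {B G : ℝ} {N R τ : ℕ}

lemma half (h : DescentScale B G (2 * τ) R) : DescentScale B G τ (2 * R) where
  mul_eq := by rw [← h.mul_eq]; push_cast; ring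
  le_invariant := h.le_invariant
  two_mul_le := h.two_mul_le
  log_le := by
    push_cast
    linarith [h.log_le, R.cast_nonneg (α := ℝ)]

lemma le_bound (h : DescentScale B G N R) : 2e15 ≤ B := by
  linarith [h.le_invariant, h.two_mul_le]

lemma one_le_bound (h : DescentScale B G N R) : 1 ≤ B := by
  linarith [h.le_bound]

lemma le_points (h : DescentScale B G N R) : (500 : ℝ) ≤ R := by
  have hlog : 5 ≤ Real.log B := by
    rw [Real.le_log_iff_exp_le (by linarith [h.le_bound]), show (5 : ℝ) = (5 : ℕ) by norm_num,
      ← Real.exp_one_pow]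
    calc Real.exp 1 ^ 5 ≤ 3 ^ 5 := by gcongr; exact Real.exp_one_lt_three.le
      _ ≤ B := by linarith [h.le_bound]
  linarith [h.log_le]

lemma points_ne_zero (h : DescentScale B G N R) : R ≠ 0 := by
  rintro rfl
  linarith [h.le_points, Nat.cast_zero (R := ℝ)]

lemma order_ne_zero (h : DescentScale B G N R) : N ≠ 0 := by
  rintro rfl
  have hG := h.mul_eq
  rw [Nat.cast_zero, zero_mul] at hG
  linarith [h.le_invariant]

lemma order_le (h : DescentScale B G N R) : 500 * (N : ℝ) ≤ G := by
  rw [← h.mul_eq, mul_comm]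
  exact mul_le_mul_of_nonneg_left h.le_points N.cast_nonneg

lemma points_le (h : DescentScale B G N R) : (R : ℝ) ≤ G := by
  rw [← h.mul_eq]
  exact le_mul_of_one_le_left R.cast_nonneg (mod_cast Nat.one_le_iff_ne_zero.mpr h.order_ne_zero)

lemma bound_pow_le (h : DescentScale B G N R) (n : ℕ) : B ^ n ≤ Real.exp (0.01 * (n * R)) := by
  have hB := h.le_bound
  rw [← Real.log_le_iff_le_exp (by positivity), Real.log_pow]
  linarith [mul_le_mul_of_nonneg_left h.log_le n.cast_nonneg]

lemma abs_minor_le (h : DescentScale B G N R) {b : Fin 4 → ℤ} (hb : ∀ i, |(b i : ℝ)| ≤ B)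
    {m : Fin 4 → ℕ} (hm : m ∈ expBox N) (i : Fin 3) : |(minor b m i : ℝ)| ≤ B ^ 2 := by
  have hmN (l : Fin 4) : (m l : ℝ) ≤ N := by
    exact_mod_cast (mem_expBox.mp hm l).trans (Nat.div_le_self _ _)
  have hNB : 2 * (N : ℝ) ≤ B := by linarith [h.order_le, h.two_mul_le, N.cast_nonneg (α := ℝ)]
  have hB := h.one_le_bound
  calc |(minor b m i : ℝ)| ≤ |(b 0 : ℝ)| * m i.succ + |(b i.succ : ℝ)| * m 0 := by
        rw [minor, Int.cast_sub]
        refine (abs_sub _ _).trans_eq ?_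
        simp only [Int.cast_mul, Int.cast_natCast, abs_mul, Nat.abs_cast]
    _ ≤ B * N + B * N := add_le_add
        (mul_le_mul (hb _) (hmN _) (Nat.cast_nonneg _) (by positivity))
        (mul_le_mul (hb _) (hmN _) (Nat.cast_nonneg _) (by positivity))
    _ = B * (2 * N) := by ring
    _ ≤ B ^ 2 := by rw [pow_two]; gcongr

lemma two_mul_pow_le (h : DescentScale B G (2 * τ) R) :
    (4 * R ^ 4 * 2 ^ R : ℝ) ^ τ ≤ Real.exp (0.37 * G) := by
  have hG := h.mul_eq
  push_cast at hG
  have hpoly : (4 * R ^ 4 : ℝ) ^ τ ≤ Real.exp (0.02 * G) := by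
    have hle : (4 * R ^ 4 : ℝ) ≤ B ^ 4 := by
      calc (4 * R ^ 4 : ℝ) ≤ 2 ^ 4 * R ^ 4 := by gcongr; norm_num
        _ = (2 * R) ^ 4 := (mul_pow _ _ _).symm
        _ ≤ B ^ 4 := by gcongr; linarith [h.points_le, h.two_mul_le]
    calc (4 * R ^ 4 : ℝ) ^ τ ≤ B ^ (4 * τ) := by rw [pow_mul]; gcongr
      _ ≤ Real.exp (0.01 * ((4 * τ : ℕ) * R)) := h.bound_pow_le _
      _ = Real.exp (0.02 * G) := by
        rw [← hG]
        push_cast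
        ring_nf
  have htwo : ((2 : ℝ) ^ R) ^ τ ≤ Real.exp (0.35 * G) := by
    rw [← pow_mul, ← Real.log_le_iff_le_exp (by positivity), Real.log_pow]
    push_cast
    have := mul_le_mul_of_nonneg_left (Real.log_two_lt_d9.le.trans (by norm_num : _ ≤ (0.7 : ℝ)))
      (mul_nonneg R.cast_nonneg τ.cast_nonneg)
    linarith
  calc (4 * R ^ 4 * 2 ^ R : ℝ) ^ τ ≤ Real.exp (0.02 * G) * Real.exp (0.35 * G) := by
        rw [mul_pow]; gcongr
    _ = Real.exp (0.37 * G) := by rw [← Real.exp_add]; ring_nf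

lemma contraction_pow_mul_le (h : DescentScale B G (2 * τ) R) :
    (0.039 : ℝ) ^ (τ * R) * (Real.exp 1 * R) ^ τ ≤ Real.exp (-1.61 * G) := by
  have hB : Real.exp 1 * R ≤ B ^ 2 := by
    nlinarith [Real.exp_one_lt_three, h.points_le, h.two_mul_le, h.le_bound, h.le_points]
  calc (0.039 : ℝ) ^ (τ * R) * (Real.exp 1 * R) ^ τ
      ≤ Real.exp (-3.24) ^ (τ * R) * B ^ (2 * τ) := by
        rw [pow_mul B]
        gcongr
        exact contraction_le_exp
    _ ≤ Real.exp (-3.24) ^ (τ * R) * Real.exp (0.01 * ((2 * τ : ℕ) * R)) := by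
        gcongr
        exact h.bound_pow_le _
    _ = Real.exp (-1.61 * G) := by
        rw [← Real.exp_nat_mul, ← Real.exp_add, ← h.mul_eq]
        push_cast
        ring_nf

lemma mul_two_mul_pow_mul_exp_le (h : DescentScale B G (2 * τ) R) :
    R * (4 * R ^ 4 * 2 ^ R : ℝ) ^ τ * Real.exp τ ≤ Real.exp (0.38 * G) := by
  have hG := h.le_invariant
  have hτ := h.order_le
  push_cast at hτ
  calc R * (4 * R ^ 4 * 2 ^ R : ℝ) ^ τ * Real.exp τ
      ≤ Real.exp (1e-7 * G) * Real.exp (0.37 * G) * Real.exp (0.001 * G) := by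
        gcongr
        · exact h.points_le.trans (le_exp_of_le hG)
        · exact h.two_mul_pow_le
        · linarith
    _ ≤ Real.exp (0.38 * G) := by
        rw [← Real.exp_add, ← Real.exp_add, Real.exp_le_exp]
        linarith

lemma extrapolationError_le (h : DescentScale B G (2 * τ) R) {ε : ℝ}
    (hε0 : 0 ≤ ε) (hε : ε ≤ Real.exp (-2.2 * G)) :
    extrapolationError τ R ε ≤ 4 * Real.exp (-1.61 * G) := by
  have hG := h.le_invariant
  have hτR : (τ * R : ℝ) ≤ Real.exp (1e-7 * G) := by
    refine le_trans ?_ (le_exp_of_le hG)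
    have := h.mul_eq
    push_cast at this
    linarith
  have hone : 1 ≤ Real.exp (0.38 * G) := Real.one_le_exp (by linarith)
  have hjets : (R * (4 * R ^ 4 * 2 ^ R) ^ τ * Real.exp τ + 1) * (τ * R * ε) ≤
      2 * Real.exp (-1.61 * G) := by
    calc (R * (4 * R ^ 4 * 2 ^ R) ^ τ * Real.exp τ + 1) * (τ * R * ε)
        ≤ (Real.exp (0.38 * G) + Real.exp (0.38 * G)) *
            (Real.exp (1e-7 * G) * Real.exp (-2.2 * G)) := by
          gcongr
          exact h.mul_two_mul_pow_mul_exp_le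
      _ = 2 * Real.exp (0.38 * G + (1e-7 * G + -2.2 * G)) := by
          rw [← two_mul, mul_assoc, ← Real.exp_add, ← Real.exp_add]
      _ ≤ 2 * Real.exp (-1.61 * G) := by
          gcongr
          linarith
  rw [extrapolationError]
  linarith [h.contraction_pow_mul_le]

lemma exists_half {b : Fin 4 → ℤ} {P : ℝ} {p : (Fin 4 → ℕ) → ℤ} (h : DescentScale B G (2 * τ) R)
    (hp : IsAuxCoeff b (2 * τ) R P p) (hb0 : b 0 ≠ 0) (hb : ∀ i, |(b i : ℝ)| ≤ B)
    (hP : P ≤ Real.exp (0.006175 * G)) (hΛ : |linForm b| ≤ Real.exp (-2.2 * G)) :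
    ∃ q, IsAuxCoeff b τ (2 * R) P q := by
  have hG1 := h.le_invariant
  have hΛG : |linForm b| * (G * G) ≤ 1 := by
    have hGe := le_exp_of_le hG1
    calc |linForm b| * (G * G)
        ≤ Real.exp (-2.2 * G) * (Real.exp (1e-7 * G) * Real.exp (1e-7 * G)) := by gcongr
      _ ≤ 1 := by
          rw [← Real.exp_add, ← Real.exp_add, Real.exp_le_one_iff]
          linarith
  have hX : P * (B ^ 2) ^ τ * Real.exp (0.00851 * (2 * τ : ℕ) * (2 * R)) ≤
      Real.exp (0.033195 * G) := by
    calc _ ≤ Real.exp (0.006175 * G) * Real.exp (0.01 * ((2 * τ : ℕ) * R)) *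
          Real.exp (0.00851 * (2 * τ : ℕ) * (2 * R)) := by
          rw [← pow_mul]
          gcongr
          · exact pow_nonneg (zero_le_one.trans h.one_le_bound) _
          · exact h.bound_pow_le _
      _ = Real.exp (0.033195 * G) := by
          rw [← Real.exp_add, ← Real.exp_add, ← h.mul_eq]
          ring_nf
  refine hp.exists_half hb0 (Nat.ne_zero_of_mul_ne_zero_right h.order_ne_zero) h.points_ne_zero
    (one_le_pow₀ h.one_le_bound) (fun m hm i => h.abs_minor_le hb hm i)
    (Real.one_le_exp (by positivity)) hX ?_ ?_ ?_
  · nlinarith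
  · nlinarith [h.mul_eq, abs_nonneg (linForm b)]
  · calc Real.exp (0.033195 * G) ^ 48 * extrapolationError τ R |linForm b|
        ≤ Real.exp (0.033195 * G) ^ 48 * (4 * Real.exp (-1.61 * G)) := by
          gcongr
          exact h.extrapolationError_le (abs_nonneg _) hΛ
      _ = 4 * Real.exp (-(0.01664 * G)) := by
          rw [← Real.exp_nat_mul, mul_left_comm, ← Real.exp_add]
          push_cast
          ring_nf
      _ < 1 := by
          rw [Real.exp_neg, ← div_eq_mul_inv, div_lt_one (Real.exp_pos _)]
          linarith [Real.add_one_le_exp (0.01664 * G)]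

lemma not_isAuxCoeff {b : Fin 4 → ℤ} {P : ℝ} {p : (Fin 4 → ℕ) → ℤ} {k : ℕ}
    (h : DescentScale B G (2 ^ k) R) (hb0 : b 0 ≠ 0) (hb : ∀ i, |(b i : ℝ)| ≤ B)
    (hP : P ≤ Real.exp (0.006175 * G)) (hΛ : |linForm b| ≤ Real.exp (-2.2 * G)) :
    ¬IsAuxCoeff b (2 ^ k) R P p := by
  induction k generalizing R p with
  | zero => exact not_isAuxCoeff_one h.points_ne_zero
  | succ k ih =>
    intro hp
    rw [pow_succ'] at h hp
    obtain ⟨q, hq⟩ := h.exists_half hp hb0 hb hP hΛ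
    exact ih h.half hq

end DescentScale

end Descent

/-! ### The lower bound for linear forms -/

section BoxCard

open Finset

lemma card_expBox (N : ℕ) : #(expBox N) = ∏ i, (N / boxDen i + 1) := by
  simp only [expBox, Fintype.card_piFinset, card_range]

lemma pow_four_le_card_expBox (N : ℕ) : N ^ 4 ≤ 2589054192 * #(expBox N) := by
  have hpos : ∀ i, 0 < boxDen i := by decide
  calc N ^ 4 = ∏ _ : Fin 4, N := by simp
    _ ≤ ∏ i, boxDen i * (N / boxDen i + 1) :=
        prod_le_prod' fun i _ => (Nat.lt_mul_div_succ N (hpos i)).le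
    _ = 2589054192 * #(expBox N) := by
        rw [prod_mul_distrib, card_expBox, Fin.prod_univ_four]
        rfl

lemma card_expBox_le (N : ℕ) : #(expBox N) ≤ (N + 1) ^ 4 := by
  rw [card_expBox]
  refine (prod_le_pow_card _ _ (N + 1) fun i _ => ?_).trans_eq (by simp)
  exact Nat.add_le_add_right (Nat.div_le_self _ _) 1

lemma siegel_card_le {N R : ℕ} (hR : R ≠ 0) (hN : 9063000000 * R ≤ N) :
    7 * (3 * R * (N + 3).choose 3) ≤ #(expBox N) := by
  have hR' : (1 : ℝ) ≤ R := mod_cast Nat.one_le_iff_ne_zero.mpr hR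
  have hN' : (9063000000 * R : ℝ) ≤ N := mod_cast hN
  have hcard : (N ^ 4 : ℝ) ≤ 2589054192 * #(expBox N) := mod_cast pow_four_le_card_expBox N
  have hchoose : 6 * ((N + 3).choose 3 : ℝ) ≤ 1.0001 * N ^ 3 := by
    calc 6 * ((N + 3).choose 3 : ℝ) ≤ 6 * ((N + 3 : ℕ) ^ 3 / (3).factorial) := by
          gcongr
          exact Nat.choose_le_pow_div 3 (N + 3)
      _ = (N + 3 : ℝ) ^ 3 := by
          norm_num [Nat.factorial]
          ring
      _ ≤ (1.00003 * N) ^ 3 := by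
          gcongr
          linarith
      _ ≤ 1.0001 * N ^ 3 := by
          rw [mul_pow]
          gcongr
          norm_num
  have hreal : 7 * (3 * R * (N + 3).choose 3 : ℝ) ≤ #(expBox N) := by
    refine le_of_mul_le_mul_left ?_ (by norm_num : (0 : ℝ) < 2589054192)
    calc 2589054192 * (7 * (3 * R * (N + 3).choose 3 : ℝ))
        = 9061689672 * R * (6 * (N + 3).choose 3) := by ring
      _ ≤ 9061689672 * R * (1.0001 * N ^ 3) := by gcongr
      _ ≤ 9063000000 * R * N ^ 3 := by nlinarith [pow_nonneg (N.cast_nonneg (α := ℝ)) 3]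
      _ ≤ N * N ^ 3 := by gcongr
      _ ≤ 2589054192 * #(expBox N) := by rwa [← pow_succ']
  exact_mod_cast hreal

end BoxCard

section LowerBound

open Finset

variable {b : Fin 4 → ℤ} {B : ℝ}

lemma DescentScale.exists_isAuxCoeff_le {G : ℝ} {N R : ℕ} (h : DescentScale B G N R)
    (hN : 9063000000 * R ≤ N) (hb : ∀ i, |(b i : ℝ)| ≤ B) :
    ∃ P p, P ≤ Real.exp (0.006175 * G) ∧ IsAuxCoeff b N R P p := by
  have hG := h.le_invariant
  have hGe := le_exp_of_le hG
  obtain ⟨p, hp⟩ := exists_isAuxCoeff h.points_ne_zero (one_le_pow₀ h.one_le_bound)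
    (fun m hm i => h.abs_minor_le hb hm i) (siegel_card_le h.points_ne_zero hN)
  refine ⟨_, p, ?_, hp⟩
  have hcard : (#(expBox N) : ℝ) ≤ Real.exp (4e-7 * G) := by
    calc (#(expBox N) : ℝ) ≤ (N + 1 : ℝ) ^ 4 := mod_cast card_expBox_le N
      _ ≤ Real.exp (1e-7 * G) ^ 4 := by
          gcongr
          linarith [h.order_le, N.cast_nonneg (α := ℝ)]
      _ = Real.exp (4e-7 * G) := by
          rw [← Real.exp_nat_mul]
          ring_nf
  have hentry : 4 * (B ^ 2) ^ N * Real.exp (0.00851 * N * (2 * R)) ≤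
      Real.exp (0.0370201 * G) := by
    calc 4 * (B ^ 2) ^ N * Real.exp (0.00851 * N * (2 * R))
        ≤ Real.exp (1e-7 * G) * Real.exp (0.01 * ((2 * N : ℕ) * R)) *
          Real.exp (0.00851 * N * (2 * R)) := by
          rw [← pow_mul]
          have := zero_le_one.trans h.one_le_bound
          gcongr
          · linarith
          · exact h.bound_pow_le _
      _ = Real.exp (0.0370201 * G) := by
          rw [← Real.exp_add, ← Real.exp_add, ← h.mul_eq]
          push_cast
          ring_nf
  have : 0 ≤ B := zero_le_one.trans h.one_le_bound
  calc _ ≤ Real.exp (4e-7 * G) *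
        (Real.exp (4e-7 * G) * Real.exp (0.0370201 * G)) ^ (1 / 6 : ℝ) := by gcongr
    _ ≤ Real.exp (0.006175 * G) := by
        rw [← Real.exp_add, ← Real.exp_mul, ← Real.exp_add, Real.exp_le_exp]
        linarith

lemma le_log_of_le (hB : 1e19 ≤ B) : 43 ≤ Real.log B := by
  rw [Real.le_log_iff_exp_le (by linarith), show (43 : ℝ) = (43 : ℕ) by norm_num,
    ← Real.exp_one_pow]
  calc Real.exp 1 ^ 43 ≤ 2.7182818286 ^ 43 := by
        gcongr
        exact Real.exp_one_lt_d9.le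
    _ ≤ 1e19 := by norm_num
    _ ≤ B := hB

lemma sq_log_le_mul (hB : 1e19 ≤ B) : Real.log B ^ 2 ≤ 1.94e-16 * B := by
  have hB0 : 0 < B := by linarith
  have hlog : Real.log 1e19 ≤ 44 := by
    rw [Real.log_le_iff_le_exp (by norm_num), show (44 : ℝ) = (44 : ℕ) by norm_num,
      ← Real.exp_one_pow]
    calc (1e19 : ℝ) ≤ 2.7182818283 ^ 44 := by norm_num
      _ ≤ Real.exp 1 ^ 44 := by
        gcongr
        exact Real.exp_one_gt_d9.le
  have hexp : Real.exp 2 ≤ 1e19 := by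
    rw [← Real.le_log_iff_exp_le (by norm_num)]
    linarith [le_log_of_le (le_refl (1e19 : ℝ))]
  have hanti : Real.log B / √B ≤ Real.log 1e19 / √1e19 :=
    Real.log_div_sqrt_antitoneOn hexp (hexp.trans hB) hB
  have hsq : Real.log B ^ 2 / B ≤ 44 ^ 2 / 1e19 := by
    have hlogB : 0 ≤ Real.log B := by linarith [le_log_of_le hB]
    calc Real.log B ^ 2 / B = (Real.log B / √B) ^ 2 := by rw [div_pow, Real.sq_sqrt hB0.le]
      _ ≤ (44 / √1e19) ^ 2 := pow_le_pow_left₀ (by positivity) (hanti.trans (by gcongr)) 2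
      _ = 44 ^ 2 / 1e19 := by rw [div_pow, Real.sq_sqrt (by norm_num)]
  rw [div_le_iff₀ hB0] at hsq
  linarith

lemma exists_descentScale (hB : 1e19 ≤ B) : ∃ G R k, DescentScale B G (2 ^ k) R ∧
    9063000000 * R ≤ 2 ^ k ∧ G ≤ 1.8137e14 * Real.log B ^ 2 := by
  have hlog := le_log_of_le hB
  have hlogB := sq_log_le_mul hB
  set R := ⌈100 * Real.log B⌉₊
  have hR : 100 * Real.log B ≤ R := Nat.le_ceil _
  have hR' : (R : ℝ) ≤ 100.03 * Real.log B := by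
    linarith [Nat.ceil_lt_add_one (show 0 ≤ 100 * Real.log B by linarith)]
  have : R ≠ 0 := by
    rintro h0
    rw [h0, Nat.cast_zero] at hR
    linarith
  set k := Nat.log 2 (9063000000 * R) + 1
  have hk : 9063000000 * R ≤ 2 ^ k := (Nat.lt_pow_succ_log_self one_lt_two _).le
  have hk' : 2 ^ k ≤ 2 * (9063000000 * R) := by
    rw [pow_succ']
    exact Nat.mul_le_mul_left 2 (Nat.pow_log_le_self 2 (by positivity))
  have hkR : (9063000000 * R : ℝ) ≤ (2 ^ k : ℕ) := mod_cast hk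
  have hkR' : ((2 ^ k : ℕ) : ℝ) ≤ 2 * (9063000000 * R) := mod_cast hk'
  have hG : 1e15 ≤ ((2 ^ k : ℕ) : ℝ) * R := by nlinarith
  have hG' : ((2 ^ k : ℕ) : ℝ) * R ≤ 1.8137e14 * Real.log B ^ 2 := by
    calc ((2 ^ k : ℕ) : ℝ) * R ≤ 2 * (9063000000 * R) * R := by gcongr
      _ = 18126000000 * (R : ℝ) ^ 2 := by ring
      _ ≤ 18126000000 * (100.03 * Real.log B) ^ 2 := by gcongr
      _ ≤ 1.8137e14 * Real.log B ^ 2 := by nlinarith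
  exact ⟨_, R, k, ⟨rfl, hG, by linarith, hR⟩, hk, hG'⟩

theorem exp_neg_lt_abs_linForm (hb0 : b 0 ≠ 0) (hB : 1e19 ≤ B) (hb : ∀ i, |(b i : ℝ)| ≤ B) :
    Real.exp (-(4e14 * Real.log B ^ 2)) < |linForm b| := by
  obtain ⟨G, R, k, hscale, hk, hG⟩ := exists_descentScale hB
  obtain ⟨P, p, hP, hp⟩ := hscale.exists_isAuxCoeff_le hk hb
  by_contra! hΛ
  refine hscale.not_isAuxCoeff hb0 hb hP (hΛ.trans ?_) hp
  rw [Real.exp_le_exp]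
  linarith [sq_nonneg (Real.log B)]

end LowerBound

/-! ### Tribonacci numbers -/

lemma T_add_three (n : ℕ) : T (n + 3) = T (n + 2) + T (n + 1) + T n := rfl

lemma tribRoot_pow_add_three (n : ℕ) :
    tribRoot ^ (n + 3) = tribRoot ^ (n + 2) + tribRoot ^ (n + 1) + tribRoot ^ n := by
  linear_combination tribRoot ^ n * tribRoot_cube

lemma T_nonneg : ∀ n, 0 ≤ T n
  | 0 | 1 | 2 => by decide
  | n + 3 => by
    rw [T_add_three]
    linarith [T_nonneg (n + 2), T_nonneg (n + 1), T_nonneg n]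

lemma T_monotone : Monotone T := by
  refine monotone_nat_of_le_succ fun n => ?_
  match n with
  | 0 | 1 => decide
  | n + 2 =>
    rw [T_add_three]
    linarith [T_nonneg (n + 1), T_nonneg n]

lemma T_lt_of_lt {m n : ℕ} (hm : m ≠ 1) (hmn : m < n) : T m < T n := by
  match n with
  | 0 => omega
  | 1 | 2 =>
    obtain rfl : m = 0 := by omega
    decide
  | n + 3 =>
    have hpos : T 1 ≤ T (n + 1) := T_monotone (by omega)
    have hle : T m ≤ T (n + 2) := T_monotone (by omega)
    rw [show T 1 = 1 from rfl] at hpos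
    rw [T_add_three]
    linarith [T_nonneg n]

lemma T_le_pow : ∀ n, (T n : ℝ) ≤ tribRoot ^ n
  | 0 => by simp [T]
  | 1 => by
    rw [pow_one, T, Int.cast_one]
    linarith [lt_tribRoot]
  | 2 => by
    rw [T, Int.cast_one]
    linarith [sq_tribRoot_mem_Ioo.1]
  | n + 3 => by
    rw [T_add_three, tribRoot_pow_add_three]
    push_cast
    linarith [T_le_pow (n + 2), T_le_pow (n + 1), T_le_pow n]

/-- The constant `δ` of the asymptotics `T n ∼ α ^ n / δ`. -/
noncomputable def binetDenom : ℝ := -tribRoot ^ 2 + 4 * tribRoot - 1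

lemma binetDenom_mem_Ioo : binetDenom ∈ Set.Ioo 2.97 2.98 := by
  have hα := lt_tribRoot
  have hα' := tribRoot_lt
  have hα2 := sq_tribRoot_mem_Ioo
  constructor <;> unfold binetDenom <;> linarith [hα2.1, hα2.2]

lemma binetDenom_pos : 0 < binetDenom := by linarith [binetDenom_mem_Ioo.1]

/-- The error `δ T n - α ^ n` of the dominant term of Binet's formula. -/
noncomputable def binetError (n : ℕ) : ℝ := binetDenom * T n - tribRoot ^ n

lemma binetError_add_three (n : ℕ) :
    binetError (n + 3) = binetError (n + 2) + binetError (n + 1) + binetError n := by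
  simp only [binetError, T_add_three, tribRoot_pow_add_three]
  push_cast
  ring

/-- Only the two complex roots contribute to the error, so it satisfies their recurrence. -/
lemma binetError_add_two (n : ℕ) : binetError (n + 2) =
    -(tribRoot - 1) * binetError (n + 1) - (tribRoot ^ 2 - tribRoot - 1) * binetError n := by
  induction n with
  | zero =>
    simp only [binetError, T, binetDenom]
    push_cast
    linear_combination -tribRoot_cube
  | succ n ih =>
    rw [binetError_add_three]
    linear_combination tribRoot * ih - binetError n * tribRoot_cube

/-- The quadratic form attached to the complex roots is multiplied by `|β|² = α² - α - 1` when `n`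
increases. -/
lemma binetError_form_eq (n : ℕ) :
    binetError (n + 1) ^ 2 + (tribRoot - 1) * binetError (n + 1) * binetError n +
      (tribRoot ^ 2 - tribRoot - 1) * binetError n ^ 2 =
    (tribRoot ^ 2 - tribRoot - 1) ^ n *
      (binetError 1 ^ 2 - (tribRoot - 1) * binetError 1 + (tribRoot ^ 2 - tribRoot - 1)) := by
  induction n with
  | zero =>
    have hzero : binetError 0 = -1 := by simp [binetError, T]
    rw [hzero]
    ring
  | succ n ih =>
    rw [binetError_add_two]
    linear_combination (tribRoot ^ 2 - tribRoot - 1) * ih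

lemma abs_binetError_le (n : ℕ) : |binetError n| ≤ 2 := by
  have hα := lt_tribRoot
  have hα' := tribRoot_lt
  have hα2 := sq_tribRoot_mem_Ioo
  have hstart : binetError 1 ^ 2 - (tribRoot - 1) * binetError 1 +
      (tribRoot ^ 2 - tribRoot - 1) ≤ 1 := by
    have h1 : binetError 1 = -tribRoot ^ 2 + 3 * tribRoot - 1 := by
      simp only [binetError, binetDenom, T]
      push_cast
      ring
    have hlo : 1.13 ≤ binetError 1 := by linarith [hα2.2]
    have hhi : binetError 1 ≤ 1.14 := by linarith [hα2.1]
    nlinarith [hlo, hhi, hα2.2]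
  have hdecay : (tribRoot ^ 2 - tribRoot - 1) ^ n ≤ 1 :=
    pow_le_one₀ (by linarith [hα2.1]) (by linarith [hα2.2])
  have hform : binetError (n + 1) ^ 2 + (tribRoot - 1) * binetError (n + 1) * binetError n +
      (tribRoot ^ 2 - tribRoot - 1) * binetError n ^ 2 ≤ 1 := by
    rw [binetError_form_eq]
    exact (mul_le_of_le_one_right (pow_nonneg (by linarith [hα2.1]) n) hstart).trans hdecay
  have hdisc : 1 / 4 ≤ (tribRoot ^ 2 - tribRoot - 1) - ((tribRoot - 1) / 2) ^ 2 := by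
    linarith [hα2.1]
  refine abs_le_of_sq_le_sq ?_ zero_le_two
  linarith [mul_le_mul_of_nonneg_right hdisc (sq_nonneg (binetError n)),
    sq_nonneg (binetError (n + 1) + (tribRoot - 1) / 2 * binetError n)]

/-! ### Numbers `2 ^ x * 3 ^ y` -/

/-- The 3-smooth number `2 ^ x * 3 ^ y` as a real. -/
noncomputable def smoothNum (x y : ℕ) : ℝ := 2 ^ x * 3 ^ y

lemma smoothNum_pos (x y : ℕ) : 0 < smoothNum x y := by
  unfold smoothNum
  positivity

lemma logGen_two_eq : logGen 2 = Real.log tribRoot := rfl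

lemma log_two_eq : Real.log 2 = 3 * logGen 0 + 2 * logGen 2 := by
  have hfactor : (2 : ℝ) = gen tribRoot 0 ^ 3 * gen tribRoot 2 ^ 2 := by
    change (2 : ℝ) = (tribRoot - 1) ^ 3 * tribRoot ^ 2
    linear_combination (-(tribRoot ^ 2 - 2 * tribRoot + 2)) * tribRoot_cube
  calc Real.log 2 = Real.log (gen tribRoot 0 ^ 3 * gen tribRoot 2 ^ 2) := congrArg _ hfactor
    _ = 3 * logGen 0 + 2 * logGen 2 := by
        rw [Real.log_mul (pow_pos (gen_tribRoot_pos 0) 3).ne'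
          (pow_pos (gen_tribRoot_pos 2) 2).ne', Real.log_pow, Real.log_pow]
        rfl

lemma log_binetDenom_eq : Real.log binetDenom = 2 * logGen 0 + 2 * logGen 2 + logGen 3 := by
  have hfactor : binetDenom = gen tribRoot 0 ^ 2 * gen tribRoot 2 ^ 2 * gen tribRoot 3 := by
    change -tribRoot ^ 2 + 4 * tribRoot - 1 =
      (tribRoot - 1) ^ 2 * tribRoot ^ 2 * (2 * tribRoot ^ 2 - 3 * tribRoot)
    linear_combination (-(2 * tribRoot ^ 3 - 5 * tribRoot ^ 2 + 5 * tribRoot - 1)) * tribRoot_cube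
  have h0 := gen_tribRoot_pos 0
  have h2 := gen_tribRoot_pos 2
  rw [hfactor, Real.log_mul (by positivity) (gen_tribRoot_pos 3).ne',
    Real.log_mul (by positivity) (by positivity), Real.log_pow, Real.log_pow]
  rfl

lemma log_smoothNum (x y : ℕ) :
    Real.log (smoothNum x y) = 3 * x * logGen 0 + y * logGen 1 + 2 * x * logGen 2 := by
  rw [smoothNum, Real.log_mul (by positivity) (by positivity), Real.log_pow, Real.log_pow,
    log_two_eq, show Real.log 3 = logGen 1 from rfl]
  ring

lemma exponent_two_le (x y : ℕ) : 0.69 * (x : ℝ) ≤ Real.log (smoothNum x y) := by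
  rw [smoothNum, Real.log_mul (by positivity) (by positivity), Real.log_pow, Real.log_pow]
  have hy : 0 ≤ (y : ℝ) * Real.log 3 := mul_nonneg y.cast_nonneg (Real.log_nonneg (by norm_num))
  nlinarith [Real.log_two_gt_d9, x.cast_nonneg (α := ℝ)]

lemma exponent_three_le (x y : ℕ) : (y : ℝ) ≤ Real.log (smoothNum x y) := by
  rw [smoothNum, Real.log_mul (by positivity) (by positivity), Real.log_pow, Real.log_pow]
  have hx : 0 ≤ (x : ℝ) * Real.log 2 := by positivity
  have hlog : 1 ≤ Real.log 3 := by
    rw [Real.le_log_iff_exp_le (by norm_num)]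
    linarith [Real.exp_one_lt_d9]
  linarith [le_mul_of_one_le_right y.cast_nonneg hlog]

lemma three_mul_smoothNum_le_of_lt {x y₁ y₂ : ℕ} (h : smoothNum x y₂ < smoothNum x y₁) :
    3 * smoothNum x y₂ ≤ smoothNum x y₁ := by
  have hy : y₂ < y₁ := by
    refine lt_of_not_ge fun hle => h.not_ge ?_
    unfold smoothNum
    gcongr
    norm_num
  calc 3 * smoothNum x y₂ = 2 ^ x * 3 ^ (y₂ + 1) := by
        rw [smoothNum]
        ring
    _ ≤ smoothNum x y₁ := by
        unfold smoothNum
        gcongr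
        · norm_num
        · exact hy

section Gap

variable {x₁ y₁ x₂ y₂ : ℕ} {B : ℝ}

lemma exp_neg_lt_log_sub_log (hx : x₁ ≠ x₂) (hlt : smoothNum x₂ y₂ < smoothNum x₁ y₁)
    (hB : 1e19 ≤ B) (hSB : 5 * Real.log (smoothNum x₁ y₁) ≤ B) :
    Real.exp (-(4e14 * Real.log B ^ 2)) <
      Real.log (smoothNum x₁ y₁) - Real.log (smoothNum x₂ y₂) := by
  have hlog := Real.log_le_log (smoothNum_pos x₂ y₂) hlt.le
  have hxB : 3 * |(x₁ - x₂ : ℝ)| ≤ B := by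
    have := abs_sub_le_of_nonneg_of_le (n := B / 3) x₁.cast_nonneg
      (by linarith [exponent_two_le x₁ y₁, x₁.cast_nonneg (α := ℝ)]) x₂.cast_nonneg
      (by linarith [exponent_two_le x₂ y₂, x₂.cast_nonneg (α := ℝ)])
    linarith
  have hyB : |(y₁ - y₂ : ℝ)| ≤ B :=
    abs_sub_le_of_nonneg_of_le y₁.cast_nonneg (by linarith [exponent_three_le x₁ y₁])
      y₂.cast_nonneg (by linarith [exponent_three_le x₂ y₂])
  let b : Fin 4 → ℤ := ![3 * (x₁ - x₂), y₁ - y₂, 2 * (x₁ - x₂), 0]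
  have hb0 : b 0 ≠ 0 := by
    change 3 * ((x₁ : ℤ) - x₂) ≠ 0
    omega
  have hb : ∀ i, |(b i : ℝ)| ≤ B := by
    intro i
    fin_cases i <;> simp only [b, Fin.reduceFinMk, Matrix.cons_val] <;> push_cast
    · rwa [abs_mul, abs_of_pos three_pos]
    · exact hyB
    · rw [abs_mul, abs_of_pos two_pos]
      linarith [abs_nonneg (x₁ - x₂ : ℝ)]
    · rw [abs_zero]
      linarith
  have hform : linForm b = Real.log (smoothNum x₁ y₁) - Real.log (smoothNum x₂ y₂) := by
    simp only [linForm, Fin.sum_univ_four, b, Matrix.cons_val, log_smoothNum]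
    push_cast
    ring
  rw [← abs_of_nonneg (sub_nonneg.mpr hlog), ← hform]
  exact exp_neg_lt_abs_linForm hb0 hB hb

lemma smoothNum_le_mul_exp_of_lt (hlt : smoothNum x₂ y₂ < smoothNum x₁ y₁) (hB : 1e19 ≤ B)
    (hSB : 5 * Real.log (smoothNum x₁ y₁) ≤ B) : smoothNum x₁ y₁ ≤
      2 * (smoothNum x₁ y₁ - smoothNum x₂ y₂) * Real.exp (4e14 * Real.log B ^ 2) := by
  set E := Real.exp (4e14 * Real.log B ^ 2)
  have hE : 1 ≤ E := Real.one_le_exp (by positivity)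
  have hsub : smoothNum x₁ y₁ - smoothNum x₂ y₂ ≤ (smoothNum x₁ y₁ - smoothNum x₂ y₂) * E :=
    le_mul_of_one_le_right (sub_nonneg.mpr hlt.le) hE
  suffices smoothNum x₂ y₂ ≤ (smoothNum x₁ y₁ - smoothNum x₂ y₂) * E by linarith
  obtain rfl | hx := eq_or_ne x₁ x₂
  · linarith [three_mul_smoothNum_le_of_lt hlt, smoothNum_pos x₁ y₂]
  have hpos := smoothNum_pos x₂ y₂
  have hdiv : E⁻¹ < (smoothNum x₁ y₁ - smoothNum x₂ y₂) / smoothNum x₂ y₂ := by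
    calc E⁻¹ = Real.exp (-(4e14 * Real.log B ^ 2)) := (Real.exp_neg _).symm
      _ < Real.log (smoothNum x₁ y₁ / smoothNum x₂ y₂) := by
          rw [Real.log_div (smoothNum_pos _ _).ne' hpos.ne']
          exact exp_neg_lt_log_sub_log hx hlt hB hSB
      _ ≤ smoothNum x₁ y₁ / smoothNum x₂ y₂ - 1 :=
          Real.log_le_sub_one_of_pos (div_pos (smoothNum_pos _ _) hpos)
      _ = (smoothNum x₁ y₁ - smoothNum x₂ y₂) / smoothNum x₂ y₂ := by
          rw [sub_div, div_self hpos.ne']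
  rw [inv_lt_iff_one_lt_mul₀ (by positivity), div_mul_eq_mul_div, one_lt_div hpos] at hdiv
  exact hdiv.le

end Gap

/-! ### The gap between the indices -/

lemma le_of_mul_sq_log_le {v : ℝ} (hv : 2 ≤ v) (h : 2e15 * Real.log v ^ 2 ≤ v) : 2.8e18 ≤ v := by
  have bootstrap : ∀ k : ℕ, (2.7182818286 : ℝ) ^ k ≤ v → 2e15 * (k : ℝ) ^ 2 ≤ v := by
    intro k hk
    have hlog : (k : ℝ) ≤ Real.log v := by
      rw [Real.le_log_iff_exp_le (by linarith), ← Real.exp_one_pow]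
      exact le_trans (by gcongr; exact Real.exp_one_lt_d9.le) hk
    exact le_trans (by gcongr) h
  have hlog2 : 0.69 ≤ Real.log v := by
    linarith [Real.log_two_gt_d9, Real.log_le_log two_pos hv]
  have hv1 : 9e14 ≤ v := by nlinarith
  have hv2 := bootstrap 34 (by linarith)
  have hv3 := bootstrap 38 (by linarith)
  norm_num at hv3 ⊢
  linarith

lemma abs_log_le_two_mul {r : ℝ} (h : |r - 1| ≤ 1 / 2) : |Real.log r| ≤ 2 * |r - 1| := by
  have hlog := Real.abs_log_sub_add_sum_range_le (x := 1 - r)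
    (by rw [abs_sub_comm]; linarith) 0
  rw [Finset.sum_range_zero, zero_add, zero_add, pow_one, sub_sub_cancel, abs_sub_comm 1 r] at hlog
  refine hlog.trans ?_
  rw [div_le_iff₀ (by linarith)]
  nlinarith [abs_nonneg (r - 1)]

lemma tribRoot_pow_le_exp (n : ℕ) : tribRoot ^ n ≤ Real.exp (0.6095 * n) := by
  rw [mul_comm, Real.exp_nat_mul]
  have : tribRoot ≤ Real.exp 0.6095 :=
    (Real.log_le_iff_le_exp tribRoot_pos).mp logGen_two_mem.2
  have := tribRoot_pos
  gcongr

lemma exp_le_tribRoot_pow (n : ℕ) : Real.exp (0.6 * n) ≤ tribRoot ^ n := by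
  rw [mul_comm, Real.exp_nat_mul]
  have : Real.exp 0.6 ≤ tribRoot := by
    refine (Real.exp_bound' (by norm_num) (by norm_num) (n := 6) (by norm_num)).trans ?_
    norm_num only [Finset.sum_range_succ, Finset.sum_range_zero, Nat.factorial]
    linarith [lt_tribRoot]
  gcongr

lemma mul_exp_sq_lt_tribRoot_pow {n k : ℕ} (hn : 2.8e18 ≤ (n : ℝ))
    (hk : 2e15 * Real.log n ^ 2 ≤ k) :
    64 * Real.exp (4e14 * Real.log (10 * n) ^ 2) ^ 2 < tribRoot ^ k := by
  have hlog : 42 ≤ Real.log n := by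
    rw [Real.le_log_iff_exp_le (by linarith), show (42 : ℝ) = (42 : ℕ) by norm_num,
      ← Real.exp_one_pow]
    calc Real.exp 1 ^ 42 ≤ 2.7182818286 ^ 42 := by
          gcongr
          exact Real.exp_one_lt_d9.le
      _ ≤ 2.8e18 := by norm_num
      _ ≤ n := hn
  have hlog10 : Real.log (10 * n) ≤ 1.067 * Real.log n := by
    have hten : Real.log 10 ≤ 4 * Real.log 2 := by
      rw [show (4 : ℝ) = (4 : ℕ) by norm_num, ← Real.log_pow]
      exact Real.log_le_log (by norm_num) (by norm_num)
    rw [Real.log_mul (by norm_num) (by linarith)]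
    linarith [Real.log_two_lt_d9]
  have hsq : Real.log (10 * n) ^ 2 ≤ (1.067 * Real.log n) ^ 2 :=
    pow_le_pow_left₀ (Real.log_nonneg (by linarith)) hlog10 2
  have h64 : (64 : ℝ) < Real.exp 64 := by linarith [Real.add_one_le_exp (64 : ℝ)]
  calc 64 * Real.exp (4e14 * Real.log (10 * n) ^ 2) ^ 2
      < Real.exp 64 * Real.exp (4e14 * Real.log (10 * n) ^ 2) ^ 2 := by gcongr
    _ = Real.exp (64 + 2 * (4e14 * Real.log (10 * n) ^ 2)) := by
        rw [← Real.exp_nat_mul, ← Real.exp_add, Nat.cast_ofNat]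
    _ ≤ Real.exp (0.6 * k) := by
        rw [Real.exp_le_exp]
        nlinarith
    _ ≤ tribRoot ^ k := exp_le_tribRoot_pow k

section Gap

variable {n m k x y x₁ y₁ x₂ y₂ : ℕ} {c : ℤ} {M : ℝ}

lemma log_smoothNum_le_two_mul (hn : 1e18 ≤ (n : ℝ)) (hlt : smoothNum x₂ y₂ < smoothNum x₁ y₁)
    (hsub : smoothNum x₁ y₁ - smoothNum x₂ y₂ ≤ tribRoot ^ n) :
    Real.log (smoothNum x₁ y₁) ≤ 2 * n := by
  by_contra! hlarge
  have hB : 1e19 ≤ 5 * Real.log (smoothNum x₁ y₁) := by linarith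
  have hexp : smoothNum x₁ y₁ ≤
      Real.exp (1 + 0.6095 * n + 4e14 * Real.log (5 * Real.log (smoothNum x₁ y₁)) ^ 2) := by
    rw [Real.exp_add, Real.exp_add]
    refine (smoothNum_le_mul_exp_of_lt hlt hB le_rfl).trans ?_
    have := Real.exp_one_gt_d9
    gcongr
    · linarith
    · exact hsub.trans (tribRoot_pow_le_exp n)
  have hlog := (Real.log_le_iff_le_exp (smoothNum_pos x₁ y₁)).mpr hexp
  linarith [sq_log_le_mul hB]

lemma smoothNum_le_pow_mul_exp (hn : 1e18 ≤ (n : ℝ)) (hmn : m ≤ n)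
    (hlt : smoothNum x₂ y₂ < smoothNum x₁ y₁)
    (hsub : smoothNum x₁ y₁ - smoothNum x₂ y₂ ≤ tribRoot ^ m) :
    smoothNum x₁ y₁ ≤ 2 * tribRoot ^ m * Real.exp (4e14 * Real.log (10 * n) ^ 2) := by
  have hα : 1 ≤ tribRoot := by linarith [lt_tribRoot]
  have hlog := log_smoothNum_le_two_mul hn hlt (hsub.trans (pow_le_pow_right₀ hα hmn))
  refine (smoothNum_le_mul_exp_of_lt (B := 10 * n) hlt (by linarith) (by linarith)).trans ?_
  gcongr

lemma T_sub_smoothNum_eq (h : T n - 2 ^ x * 3 ^ y = c) : (T n : ℝ) - smoothNum x y = c := by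
  rw [smoothNum, ← h]
  push_cast
  rfl

/-- Two solutions bound `c`, because their difference is at most `T m` while the larger smooth
number exceeds the smaller one by a definite factor. -/
lemma abs_le_pow_mul_exp (hn : 1e18 ≤ (n : ℝ)) (hmn : m ≤ n) (hk : k ≠ 1) (hkm : k < m)
    (h₁ : T m - 2 ^ x₁ * 3 ^ y₁ = c) (h₂ : T k - 2 ^ x₂ * 3 ^ y₂ = c) :
    |(c : ℝ)| ≤ 2 * tribRoot ^ m * Real.exp (4e14 * Real.log (10 * n) ^ 2) := by
  have hc₁ := T_sub_smoothNum_eq h₁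
  have hc₂ := T_sub_smoothNum_eq h₂
  have hTlt : (T k : ℝ) < T m := mod_cast T_lt_of_lt hk hkm
  have hTk : (0 : ℝ) ≤ T k := mod_cast T_nonneg k
  have hTm := T_le_pow m
  have hE : 1 ≤ Real.exp (4e14 * Real.log (10 * n) ^ 2) := Real.one_le_exp (by positivity)
  have hα := pow_pos tribRoot_pos m
  rw [← hc₁]
  refine abs_sub_le_of_nonneg_of_le (hTk.trans hTlt.le) (by nlinarith [hα])
    (smoothNum_pos x₁ y₁).le ?_
  exact smoothNum_le_pow_mul_exp (x₂ := x₂) (y₂ := y₂) hn hmn (by linarith) (by linarith)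

/-- The coefficients come from `2 = (α - 1)³ α²` and `δ = (α - 1)² α² (2α² - 3α)`. -/
lemma exp_neg_lt_abs_log_div (hn : 1e18 ≤ (n : ℝ)) (hS : Real.log (smoothNum x y) ≤ n) :
    Real.exp (-(4e14 * Real.log (10 * n) ^ 2)) <
      |Real.log (tribRoot ^ n / (binetDenom * smoothNum x y))| := by
  have hx := exponent_two_le x y
  have hy := exponent_three_le x y
  let b : Fin 4 → ℤ := ![-(3 * x + 2), -y, n - 2 - 2 * x, -1]
  have hb0 : b 0 ≠ 0 := by
    change -(3 * (x : ℤ) + 2) ≠ 0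
    omega
  have hb : ∀ i, |(b i : ℝ)| ≤ 10 * n := by
    intro i
    fin_cases i <;> simp only [b, Fin.reduceFinMk, Matrix.cons_val] <;> push_cast <;>
      rw [abs_le] <;> constructor <;>
      linarith [x.cast_nonneg (α := ℝ), y.cast_nonneg (α := ℝ)]
  have hform : linForm b = Real.log (tribRoot ^ n / (binetDenom * smoothNum x y)) := by
    rw [Real.log_div (pow_pos tribRoot_pos n).ne'
      (mul_pos binetDenom_pos (smoothNum_pos x y)).ne',
      Real.log_mul binetDenom_pos.ne' (smoothNum_pos x y).ne', Real.log_pow, log_smoothNum,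
      log_binetDenom_eq, ← logGen_two_eq]
    simp only [linForm, Fin.sum_univ_four, b, Matrix.cons_val]
    push_cast
    ring
  rw [← hform]
  exact exp_neg_lt_abs_linForm hb0 (by linarith) hb

lemma pow_div_eight_le (hM : 1 ≤ M) (hMn : 32 * M ≤ tribRoot ^ n)
    (hc : |T n - smoothNum x y| ≤ M) : tribRoot ^ n / 8 ≤ smoothNum x y := by
  have hT : tribRoot ^ n - 2 ≤ binetDenom * T n := by
    have := (abs_le.mp (abs_binetError_le n)).1
    unfold binetError at this
    linarith
  have hδ := mul_le_mul_of_nonneg_right binetDenom_mem_Ioo.2.le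
    (Int.cast_nonneg (R := ℝ) (T_nonneg n))
  linarith [(abs_le.mp hc).2]

lemma log_smoothNum_le (hn : 2 ≤ (n : ℝ)) (hM : 32 * M ≤ tribRoot ^ n)
    (hc : |T n - smoothNum x y| ≤ M) : Real.log (smoothNum x y) ≤ n := by
  rw [Real.log_le_iff_le_exp (smoothNum_pos x y)]
  calc smoothNum x y ≤ tribRoot ^ n * (1 + 1 / 32) := by linarith [(abs_le.mp hc).1, T_le_pow n]
    _ ≤ Real.exp (0.6095 * n) * Real.exp (0.3905 * n) := by
        gcongr
        · exact tribRoot_pow_le_exp n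
        · linarith [Real.add_one_le_exp (0.3905 * n : ℝ)]
    _ = Real.exp n := by
        rw [← Real.exp_add]
        ring_nf

lemma abs_log_div_le (hM : 1 ≤ M) (hMn : 32 * M ≤ tribRoot ^ n)
    (hc : |T n - smoothNum x y| ≤ M) :
    |Real.log (tribRoot ^ n / (binetDenom * smoothNum x y))| ≤ 32 * M / tribRoot ^ n := by
  have hα : 0 < tribRoot ^ n := pow_pos tribRoot_pos n
  have hS := smoothNum_pos x y
  have hδ := binetDenom_pos
  have hnum : |tribRoot ^ n - binetDenom * smoothNum x y| ≤ binetDenom * (2 * M) := by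
    calc |tribRoot ^ n - binetDenom * smoothNum x y|
        = |binetDenom * (T n - smoothNum x y) - binetError n| := by
          rw [binetError]
          ring_nf
      _ ≤ |binetDenom * (T n - smoothNum x y)| + |binetError n| := abs_sub _ _
      _ ≤ binetDenom * M + 2 := by
          rw [abs_mul, abs_of_pos hδ]
          gcongr
          exact abs_binetError_le n
      _ ≤ binetDenom * (2 * M) := by nlinarith [binetDenom_mem_Ioo.1]
  have hratio : |tribRoot ^ n / (binetDenom * smoothNum x y) - 1| ≤ 16 * M / tribRoot ^ n := by
    calc |tribRoot ^ n / (binetDenom * smoothNum x y) - 1|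
        = |tribRoot ^ n - binetDenom * smoothNum x y| / (binetDenom * smoothNum x y) := by
          rw [div_sub_one (by positivity), abs_div, abs_of_pos (mul_pos hδ hS)]
      _ ≤ binetDenom * (2 * M) / (binetDenom * (tribRoot ^ n / 8)) := by
          gcongr
          exact pow_div_eight_le hM hMn hc
      _ = 16 * M / tribRoot ^ n := by
          field_simp
          norm_num
  have hhalf : 16 * M / tribRoot ^ n ≤ 1 / 2 := by
    rw [div_le_iff₀ hα]
    linarith
  refine (abs_log_le_two_mul (hratio.trans hhalf)).trans ?_
  calc _ ≤ 2 * (16 * M / tribRoot ^ n) := by gcongr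
    _ = 32 * M / tribRoot ^ n := by ring

lemma tribRoot_pow_le_of_abs_sub_le (hn : 1e18 ≤ (n : ℝ)) (hM : 1 ≤ M)
    (hc : |T n - smoothNum x y| ≤ M) :
    tribRoot ^ n ≤ 32 * M * Real.exp (4e14 * Real.log (10 * n) ^ 2) := by
  set E := Real.exp (4e14 * Real.log (10 * n) ^ 2) with hE
  have hE1 : 1 ≤ E := Real.one_le_exp (by positivity)
  obtain hMn | hMn := le_total (tribRoot ^ n) (32 * M)
  · exact hMn.trans (le_mul_of_one_le_right (by linarith) hE1)
  have hlow := exp_neg_lt_abs_log_div hn (log_smoothNum_le (by linarith) hMn hc)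
  rw [Real.exp_neg, ← hE] at hlow
  have hratio : E⁻¹ < 32 * M / tribRoot ^ n := hlow.trans_le (abs_log_div_le hM hMn hc)
  rw [lt_div_iff₀ (pow_pos tribRoot_pos n), inv_mul_lt_iff₀ (by positivity)] at hratio
  linarith

end Gap

theorem index_gap_bound_neg_c_general (c : ℤ) (n x y n₁ x₁ y₁ n₂ x₂ y₂ : ℕ) (hne₂ : n₂ ≠ 1)
    (hord₁ : n₁ < n) (hord₂ : n₂ < n₁)
    (h : T n - 2 ^ x * 3 ^ y = c) (h₁ : T n₁ - 2 ^ x₁ * 3 ^ y₁ = c)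
    (h₂ : T n₂ - 2 ^ x₂ * 3 ^ y₂ = c) :
    (n : ℝ) - (n₁ : ℝ) < 2e15 * Real.log n ^ 2 := by
  by_contra! hgap
  have hn : 2.8e18 ≤ (n : ℝ) :=
    le_of_mul_sq_log_le (mod_cast (by omega : 2 ≤ n)) (by linarith [n₁.cast_nonneg (α := ℝ)])
  set E := Real.exp (4e14 * Real.log (10 * n) ^ 2)
  have hE : 1 ≤ E := Real.one_le_exp (by positivity)
  have hα : 1 ≤ tribRoot ^ n₁ := one_le_pow₀ (by linarith [lt_tribRoot])
  have hc : |(T n : ℝ) - smoothNum x y| ≤ 2 * tribRoot ^ n₁ * E := by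
    rw [T_sub_smoothNum_eq h]
    exact abs_le_pow_mul_exp (by linarith) hord₁.le hne₂ hord₂ h₁ h₂
  have hpow : tribRoot ^ n ≤ 32 * (2 * tribRoot ^ n₁ * E) * E :=
    tribRoot_pow_le_of_abs_sub_le (by linarith) (by nlinarith) hc
  have hsmall : 64 * E ^ 2 < tribRoot ^ (n - n₁) :=
    mul_exp_sq_lt_tribRoot_pow hn (by rwa [Nat.cast_sub hord₁.le])
  refine hpow.not_gt ?_
  calc 32 * (2 * tribRoot ^ n₁ * E) * E = tribRoot ^ n₁ * (64 * E ^ 2) := by ring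
    _ < tribRoot ^ n₁ * tribRoot ^ (n - n₁) := by gcongr
    _ = tribRoot ^ n := by rw [← pow_add, Nat.add_sub_cancel' hord₁.le]

theorem index_gap_bound_neg_c (c : ℤ) (hc : c ≤ -1)
    (n x y n₁ x₁ y₁ n₂ x₂ y₂ : ℕ)
    (hne : n ≠ 1) (hne₁ : n₁ ≠ 1) (hne₂ : n₂ ≠ 1)
    (hord₁ : n₁ < n) (hord₂ : n₂ < n₁) (hn₁ : 310 < n₁)
    (h : T n - 2 ^ x * 3 ^ y = c) (h₁ : T n₁ - 2 ^ x₁ * 3 ^ y₁ = c)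
    (h₂ : T n₂ - 2 ^ x₂ * 3 ^ y₂ = c) :
    (n : ℝ) - (n₁ : ℝ) < 2e15 * Real.log n ^ 2 :=
  index_gap_bound_neg_c_general c n x y n₁ x₁ y₁ n₂ x₂ y₂ hne₂ hord₁ hord₂ h h₁ h₂
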